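/- Let (s_1,…,s_m) = N(σ_1,…,σ_m) be a Nikishin system and let n = (n_0,n_1,…,n_m) ∈ ℤ₊^{m+1}(*). Then the system of functions (1, ŝ_1,…,ŝ_m) is an AT-system for n on every closed interval Δ disjoint from Co(supp(σ_1)): for any polynomials h_0,…,h_m with deg h_i ≤ n_i − 1 for all i (deg ≤ −1 meaning h_i ≡ 0), not all identically zero, the function h_0(x) + Σ_{k=1}^m h_k(x)·ŝ_k(x) has at most |n| − 1 zeros on Δ, counting multiplicities, where |n| = n_0 + … + n_m. -/

import Mathlib

open MeasureTheory Polynomial Set Filter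

noncomputable section

/-- The support of a Borel measure on `ℝ`. -/
def msupport (μ : Measure ℝ) : Set ℝ :=
  {x : ℝ | ∀ U : Set ℝ, IsOpen U → x ∈ U → μ U ≠ 0}

/-- The copy of a real set inside `ℂ`. -/
def cpx (s : Set ℝ) : Set ℂ := (fun x : ℝ => (x : ℂ)) '' s

/-- `nikhat μ e j g` is the Cauchy transform of the measure `⟨σ_j, …, σ_{j+g}⟩`,
where `σ_i = (e i) • (μ i)` is a measure of constant sign. -/
def nikhat (μ : ℕ → Measure ℝ) (e : ℕ → ℝ) : ℕ → ℕ → ℂ → ℂ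
  | j, 0, z => (e j : ℂ) * ∫ t, 1 / (z - (t : ℂ)) ∂(μ j)
  | j, g + 1, z => (e j : ℂ) * ∫ t, nikhat μ e (j + 1) g (t : ℂ) / (z - (t : ℂ)) ∂(μ j)

/-- `f` has at most `N` zeros, counting multiplicities, on `D ⊆ ℂ`
(multiplicities measured through vanishing of iterated derivatives). -/
def CZerosLE (f : ℂ → ℂ) (D : Set ℂ) (N : ℕ) : Prop :=
  ∀ (S : Finset ℂ) (ord : ℂ → ℕ), ↑S ⊆ D →
    (∀ x ∈ S, ∀ i < ord x, iteratedDeriv i f x = 0) → ∑ x ∈ S, ord x ≤ N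

/-- `f` has fewer than `N` zeros, counting multiplicities, on `D ⊆ ℂ`. -/
def CZerosLT (f : ℂ → ℂ) (D : Set ℂ) (N : ℕ) : Prop :=
  ∀ (S : Finset ℂ) (ord : ℂ → ℕ), ↑S ⊆ D →
    (∀ x ∈ S, ∀ i < ord x, iteratedDeriv i f x = 0) → ∑ x ∈ S, ord x < N

/-- The class `ℤ₊^{m+1}(*)`: there are no `i < k < j ≤ m` with `n_i < n_j < n_k`. -/
def StarIdx (m : ℕ) (n : ℕ → ℕ) : Prop :=
  ¬ ∃ i k j, i < k ∧ k < j ∧ j ≤ m ∧ n i < n j ∧ n j < n k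

/-!
A linear form `∑ h_k D_k` in functions `D_k`, holomorphic off an interval, is divided by one of
the `D_q`. The jump of the quotient across the interval is again a linear form, in the `2 × 2`
minors of the `D_k`, which are holomorphic off the next interval of the chain, and it lacks the
term `k = q`. If the first form has at least `∑ n_k` zeros, then the jump is orthogonal to many
powers and the new form has at least `∑_{k ≠ q} n_k` zeros, provided the quotients `D_k / D_q` grow
slowly enough at infinity; this holds if `q` is the smallest index with `n_q` maximal. Iterating,
one ends with a single polynomial times a minor, which has too few zeros.

For this the minors may not vanish off their interval, and the jump must come from a measure of
constant sign. On the real line and at infinity the minors are determinants of Gram matrices of two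
Chebyshev systems, hence nonzero. Elsewhere one uses that suitable quotients of minors are Cauchy
transforms of measures of constant sign, a property which the Plücker relations transport from one
level to the next. The order of the columns is reversed by passing to reciprocals: for a probability
measure `β`, Schur complements of the operator of multiplication by the variable show that
`1 / β̂(z) = z - c - τ̂(z)` for a positive measure `τ`.
-/

namespace Nikishin

open scoped Topology ComplexConjugate
open Matrix (vecCons)

/-! ### Cauchy transforms -/

/-- `μ` is a finite measure living on the compact set `J`. -/
structure IsCarriedBy (μ : Measure ℝ) (J : Set ℝ) : Prop where
  isFinite : IsFiniteMeasure μ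
  isCompact : IsCompact J
  measure_compl : μ Jᶜ = 0

/-- The Cauchy transform of the complex measure `φ dμ`, with the sign convention `1 / (z - t)`. -/
def cauchy (μ : Measure ℝ) (φ : ℝ → ℂ) (z : ℂ) : ℂ := ∫ t, φ t / (z - t) ∂μ

section Cpx
variable {s t : Set ℝ} {x : ℝ} {z : ℂ}

lemma ofReal_mem_cpx : (x : ℂ) ∈ cpx s ↔ x ∈ s :=
  Complex.ofReal_injective.mem_set_image

lemma cpx_mono (hst : s ⊆ t) : cpx s ⊆ cpx t := image_mono hst

lemma isCompact_cpx (hs : IsCompact s) : IsCompact (cpx s) :=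
  hs.image Complex.continuous_ofReal

lemma isOpen_compl_cpx (hs : IsCompact s) : IsOpen (cpx s)ᶜ :=
  (isCompact_cpx hs).isClosed.isOpen_compl

lemma disjoint_cpx (hst : Disjoint s t) : Disjoint (cpx s) (cpx t) :=
  (disjoint_image_iff Complex.ofReal_injective).2 hst

lemma sub_ofReal_ne_zero (hz : z ∉ cpx s) (hx : x ∈ s) : z - x ≠ 0 :=
  sub_ne_zero.2 fun h => hz ⟨x, hx, h.symm⟩

lemma conj_mem_cpx : conj z ∈ cpx s ↔ z ∈ cpx s := by
  constructor <;> rintro ⟨x, hx, h⟩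
  · exact ⟨x, hx, by simpa using congrArg conj h⟩
  · exact ⟨x, hx, by simp [← h]⟩

lemma eventually_notMem_cpx (hs : IsCompact s) : ∀ᶠ z in cocompact ℂ, z ∉ cpx s :=
  (isCompact_cpx hs).compl_mem_cocompact

lemma continuousOn_comp_ofReal {f : ℂ → ℂ} {O : Set ℂ} (hf : ContinuousOn f O) (hs : cpx s ⊆ O) :
    ContinuousOn (fun x : ℝ => f x) s :=
  hf.comp Complex.continuous_ofReal.continuousOn fun _ hx => hs (ofReal_mem_cpx.2 hx)

lemma exists_differentiable_of_eqOn_compl {K O : Set ℂ} (hK : IsClosed K) (hO : IsOpen O)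
    (hKO : K ⊆ O) {f g : ℂ → ℂ} (hf : DifferentiableOn ℂ f Kᶜ) (hg : DifferentiableOn ℂ g O)
    (hfg : EqOn f g (O \ K)) : ∃ F : ℂ → ℂ, Differentiable ℂ F ∧ EqOn F f Kᶜ := by
  classical
  refine ⟨K.piecewise g f, fun z => ?_, fun z hz => piecewise_eq_of_notMem _ _ _ hz⟩
  by_cases hz : z ∈ K
  · refine (hg.differentiableAt (hO.mem_nhds (hKO hz))).congr_of_eventuallyEq ?_
    filter_upwards [hO.mem_nhds (hKO hz)] with y hy
    by_cases hyK : y ∈ K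
    · exact piecewise_eq_of_mem _ _ _ hyK
    · rw [piecewise_eq_of_notMem _ _ _ hyK, hfg ⟨hy, hyK⟩]
  · refine (hf.differentiableAt (hK.isOpen_compl.mem_nhds hz)).congr_of_eventuallyEq ?_
    filter_upwards [hK.isOpen_compl.mem_nhds hz] with y hy
    exact piecewise_eq_of_notMem _ _ _ hy

end Cpx

section ParametricIntegral

lemma aestronglyMeasurable_of_hasDerivAt {X : Type*} [MeasurableSpace X] {μ : Measure X}
    {k : ℂ → X → ℂ} {k' : X → ℂ} {z₀ : ℂ} (hk : ∀ᶠ z in 𝓝 z₀, AEStronglyMeasurable (k z) μ)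
    (hk' : ∀ᵐ t ∂μ, HasDerivAt (fun z => k z t) (k' t) z₀) : AEStronglyMeasurable k' μ := by
  classical
  refine aestronglyMeasurable_of_tendsto_ae (𝓝[≠] z₀)
    (f := fun z t => if AEStronglyMeasurable (k z) μ then slope (fun z => k z t) z₀ z else 0)
    (fun z => ?_) ?_
  · by_cases hz : AEStronglyMeasurable (k z) μ
    · simp only [if_pos hz, slope_def_module]
      exact (hz.sub hk.self_of_nhds).const_smul ((z - z₀)⁻¹ : ℂ)
    · simp only [if_neg hz, aestronglyMeasurable_const]
  · filter_upwards [hk'] with t ht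
    refine (hasDerivAt_iff_tendsto_slope.1 ht).congr' ?_
    filter_upwards [nhdsWithin_le_nhds hk] with z hz
    rw [if_pos hz]

namespace IsCarriedBy
variable {μ : Measure ℝ} {J : Set ℝ} {E : Type*} [NormedAddCommGroup E]

lemma ae_mem (hμ : IsCarriedBy μ J) : ∀ᵐ t ∂μ, t ∈ J := ae_iff.2 hμ.measure_compl

lemma integrable (hμ : IsCarriedBy μ J) {φ : ℝ → E} (hφ : ContinuousOn φ J) :
    Integrable φ μ := by
  have := hμ.isFinite
  have h := hφ.integrableOn_compact (μ := μ) hμ.isCompact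
  rwa [IntegrableOn, Measure.restrict_eq_self_of_ae_mem hμ.ae_mem] at h

lemma integral_congr [NormedSpace ℝ E] (hμ : IsCarriedBy μ J) {f g : ℝ → E} (hfg : EqOn f g J) :
    ∫ t, f t ∂μ = ∫ t, g t ∂μ :=
  integral_congr_ae (hμ.ae_mem.mono fun _ ht => hfg ht)

lemma differentiableOn_integral (hμ : IsCarriedBy μ J) {O : Set ℂ} (hO : IsOpen O)
    {k : ℂ → ℝ → ℂ} (hk : ContinuousOn (Function.uncurry k) (O ×ˢ J))
    (hdiff : ∀ t ∈ J, DifferentiableOn ℂ (fun z => k z t) O) :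
    DifferentiableOn ℂ (fun z => ∫ t, k z t ∂μ) O := by
  intro z₀ hz₀
  have := hμ.isFinite
  have hint : ∀ z ∈ O, Integrable (k z) μ := fun z hz =>
    hμ.integrable (hk.comp (f := fun t => (z, t)) (by fun_prop) fun t ht => ⟨hz, ht⟩)
  obtain ⟨R, hR, hRO⟩ := Metric.nhds_basis_closedBall.mem_iff.1 (hO.mem_nhds hz₀)
  obtain ⟨C, hC⟩ := ((isCompact_closedBall z₀ R).prod hμ.isCompact).exists_bound_of_continuousOn
    (hk.mono (prod_mono hRO subset_rfl))
  have hball : ∀ z ∈ Metric.ball z₀ (R / 2), Metric.closedBall z (R / 2) ⊆ Metric.closedBall z₀ R :=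
    fun z hz => Metric.closedBall_subset_closedBall' (by linarith [Metric.mem_ball.1 hz])
  have hderiv : ∀ᵐ t ∂μ, ∀ z ∈ Metric.ball z₀ (R / 2),
      HasDerivAt (fun z => k z t) (deriv (fun z => k z t) z) z := by
    filter_upwards [hμ.ae_mem] with t ht z hz
    exact ((hdiff t ht).differentiableAt (hO.mem_nhds
      (hRO (hball z hz (Metric.mem_closedBall_self (by positivity)))))).hasDerivAt
  have hmeas : ∀ᶠ z in 𝓝 z₀, AEStronglyMeasurable (k z) μ :=
    (hO.eventually_mem hz₀).mono fun z hz => (hint z hz).aestronglyMeasurable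
  refine (hasDerivAt_integral_of_dominated_loc_of_deriv_le (F := k)
    (F' := fun z t => deriv (fun z => k z t) z) (bound := fun _ => C / (R / 2))
    (Metric.ball_mem_nhds _ (half_pos hR)) hmeas (hint z₀ hz₀)
    (aestronglyMeasurable_of_hasDerivAt hmeas
      (hderiv.mono fun t ht => ht z₀ (Metric.mem_ball_self (half_pos hR))))
    ?_ (integrable_const _) hderiv).2.differentiableAt.differentiableWithinAt
  filter_upwards [hμ.ae_mem] with t ht z hz
  refine Complex.norm_deriv_le_of_forall_mem_sphere_norm_le (half_pos hR)
    (DifferentiableOn.diffContOnCl ?_)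
    fun y hy => hC (y, t) ⟨hball z hz (Metric.sphere_subset_closedBall hy), ht⟩
  exact (hdiff t ht).mono (Metric.closure_ball_subset_closedBall.trans ((hball z hz).trans hRO))

end IsCarriedBy
end ParametricIntegral

section CauchyTransform
variable {μ : Measure ℝ} {J : Set ℝ} {φ ψ : ℝ → ℂ} {z : ℂ}

lemma continuousOn_cauchy_kernel (hφ : ContinuousOn φ J) (hz : z ∉ cpx J) :
    ContinuousOn (fun t : ℝ => φ t / (z - t)) J :=
  hφ.div (by fun_prop) fun _ ht => sub_ofReal_ne_zero hz ht

lemma cauchy_const_mul (c : ℂ) (φ : ℝ → ℂ) (z : ℂ) :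
    cauchy μ (fun t => c * φ t) z = c * cauchy μ φ z := by
  simp only [cauchy, mul_div_assoc, integral_const_mul]

namespace IsCarriedBy

lemma differentiableOn_cauchy (hμ : IsCarriedBy μ J) (hφ : ContinuousOn φ J) :
    DifferentiableOn ℂ (cauchy μ φ) (cpx J)ᶜ := by
  refine hμ.differentiableOn_integral (isOpen_compl_cpx hμ.isCompact)
    ((hφ.comp continuousOn_snd fun p hp => hp.2).div (by fun_prop)
      fun p hp => sub_ofReal_ne_zero hp.1 hp.2)
    fun t ht z hz => DifferentiableAt.differentiableWithinAt ?_
  have := sub_ofReal_ne_zero hz ht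
  fun_prop (disch := assumption)

lemma tendsto_cauchy_zero (hμ : IsCarriedBy μ J) (hφ : ContinuousOn φ J) :
    Tendsto (cauchy μ φ) (cocompact ℂ) (𝓝 0) := by
  have := hμ.isFinite
  obtain ⟨C, hC⟩ := hμ.isCompact.exists_bound_of_continuousOn hφ
  obtain ⟨R, hR⟩ := hμ.isCompact.isBounded.exists_norm_le
  have hnorm : Tendsto (fun z : ℂ => ‖z‖ - R) (cocompact ℂ) atTop :=
    tendsto_atTop_add_const_right _ _ tendsto_norm_cocompact_atTop
  have hb : Tendsto (fun z : ℂ => C / (‖z‖ - R) * μ.real univ) (cocompact ℂ) (𝓝 0) := by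
    simpa using (hnorm.const_div_atTop C).mul_const (μ.real univ)
  refine squeeze_zero_norm' ?_ hb
  filter_upwards [hnorm.eventually_gt_atTop 0] with z hz
  refine norm_integral_le_of_norm_le_const ?_
  filter_upwards [hμ.ae_mem] with t ht
  have hzt := norm_sub_norm_le z t
  rw [Complex.norm_real] at hzt
  rw [norm_div]
  exact div_le_div₀ ((norm_nonneg _).trans (hC t ht)) (hC t ht) hz (by linarith [hR t ht])

lemma mul_cauchy (hμ : IsCarriedBy μ J) (hφ : ContinuousOn φ J) (hz : z ∉ cpx J) :
    z * cauchy μ φ z = ∫ t, φ t ∂μ + cauchy μ (fun t => t * φ t) z := by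
  rw [cauchy, cauchy, ← integral_const_mul, ← integral_add (hμ.integrable hφ)
    (hμ.integrable (continuousOn_cauchy_kernel (by fun_prop) hz))]
  refine hμ.integral_congr fun t ht => ?_
  have := sub_ofReal_ne_zero hz ht
  field

lemma tendsto_mul_cauchy (hμ : IsCarriedBy μ J) (hφ : ContinuousOn φ J) :
    Tendsto (fun z => z * cauchy μ φ z) (cocompact ℂ) (𝓝 (∫ t, φ t ∂μ)) := by
  have h := (hμ.tendsto_cauchy_zero (φ := fun t => t * φ t) (by fun_prop)).const_add (∫ t, φ t ∂μ)
  rw [add_zero] at h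
  refine h.congr' ?_
  filter_upwards [eventually_notMem_cpx hμ.isCompact] with z hz
  exact (hμ.mul_cauchy hφ hz).symm

lemma cauchy_congr (hμ : IsCarriedBy μ J) (h : EqOn φ ψ J) (z : ℂ) :
    cauchy μ φ z = cauchy μ ψ z :=
  hμ.integral_congr fun t ht => by rw [h ht]

lemma cauchy_sum (hμ : IsCarriedBy μ J) {ι : Type*} (s : Finset ι) {φ : ι → ℝ → ℂ}
    (hφ : ∀ i ∈ s, ContinuousOn (φ i) J) (hz : z ∉ cpx J) :
    cauchy μ (fun t => ∑ i ∈ s, φ i t) z = ∑ i ∈ s, cauchy μ (φ i) z := by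
  simp only [cauchy, Finset.sum_div]
  exact integral_finsetSum s fun i hi => hμ.integrable (continuousOn_cauchy_kernel (hφ i hi) hz)

end IsCarriedBy

/-- `f` commutes with complex conjugation; such an `f` is real on the real axis. -/
def IsConjSymm (f : ℂ → ℂ) : Prop := ∀ z, f (conj z) = conj (f z)

lemma IsConjSymm.im_ofReal {f : ℂ → ℂ} (hf : IsConjSymm f) (x : ℝ) : (f x).im = 0 :=
  Complex.conj_eq_iff_im.1 (by rw [← hf, Complex.conj_ofReal])

lemma isConjSymm_cauchy (hφ : ∀ t, (φ t).im = 0) : IsConjSymm (cauchy μ φ) := by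
  intro z
  rw [cauchy, cauchy, ← integral_conj]
  congr 1 with t
  rw [map_div₀, map_sub, Complex.conj_ofReal, Complex.conj_eq_iff_im.2 (hφ t)]

end CauchyTransform

/-! ### Gluing holomorphic functions across the cut -/

lemma dslope_swap {𝕜 E : Type*} [NontriviallyNormedField 𝕜] [NormedAddCommGroup E]
    [NormedSpace 𝕜 E] (f : 𝕜 → E) (a b : 𝕜) : dslope f a b = dslope f b a := by
  rcases eq_or_ne a b with rfl | h
  · rfl
  · rw [dslope_of_ne _ h, dslope_of_ne _ h.symm, slope_comm]

lemma continuousOn_uncurry_dslope {V : ℂ → ℂ} {O : Set ℂ} (hO : IsOpen O)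
    (hV : DifferentiableOn ℂ V O) : ContinuousOn (Function.uncurry (dslope V)) (O ×ˢ O) := by
  rintro ⟨z, w⟩ ⟨hz, hw⟩
  refine ContinuousAt.continuousWithinAt ?_
  rcases eq_or_ne z w with rfl | hzw
  · have hderiv : ContinuousAt (fun p : ℂ × ℂ => deriv V p.1) (z, z) :=
      ContinuousAt.comp ((hV.deriv hO).continuousOn.continuousAt (hO.mem_nhds hz)) continuousAt_fst
    have hstrict : HasStrictDerivAt V (deriv V z) z :=
      ((hV.analyticAt (hO.mem_nhds hz)).contDiffAt (n := 1)).hasStrictDerivAt (by simp)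
    rw [Metric.continuousAt_iff'] at hderiv ⊢
    intro ε hε
    filter_upwards [hderiv ε hε, hstrict.hasStrictFDerivAt.isLittleO.def (half_pos hε)]
      with ⟨x, y⟩ hx hxy
    rcases eq_or_ne x y with rfl | hne
    · simpa [dslope_same] using hx
    · have hpos : 0 < ‖x - y‖ := norm_pos_iff.2 (sub_ne_zero.2 hne)
      have hdiff : slope V y x - deriv V z = (V x - V y - (x - y) • deriv V z) / (x - y) := by
        rw [slope_def_field, smul_eq_mul]
        field [sub_ne_zero.2 hne]
      simp only [Function.uncurry_apply_pair, dslope_same]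
      rw [dslope_swap, dslope_of_ne _ hne, dist_eq_norm, hdiff, norm_div, div_lt_iff₀ hpos]
      exact (le_of_eq_of_le (by simp) hxy).trans_lt (mul_lt_mul_of_pos_right (half_lt_self hε) hpos)
  · have hVat : ∀ {x}, x ∈ O → ContinuousAt V x := fun hx =>
      hV.continuousOn.continuousAt (hO.mem_nhds hx)
    have hslope : ContinuousAt (fun p : ℂ × ℂ => (V p.2 - V p.1) / (p.2 - p.1)) (z, w) :=
      ((ContinuousAt.comp (hVat hw) continuousAt_snd).sub
        (ContinuousAt.comp (hVat hz) continuousAt_fst)).div (by fun_prop)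
        (sub_ne_zero.2 (Ne.symm hzw))
    refine hslope.congr ?_
    filter_upwards [(isOpen_ne_fun continuous_fst continuous_snd).mem_nhds hzw] with p hp
    rw [Function.uncurry, dslope_of_ne _ (Ne.symm hp), slope_def_field]

/-- Off `J` the function `f` differs from the Cauchy transform of `φ dμ` by an entire function:
`φ dμ` is the jump of `f` across the cut, up to the factor in the Sokhotski–Plemelj formula. -/
def HasJump (μ : Measure ℝ) (J : Set ℝ) (f : ℂ → ℂ) (φ : ℝ → ℂ) : Prop :=
  ∃ F : ℂ → ℂ, Differentiable ℂ F ∧ ∀ z ∉ cpx J, f z = F z + cauchy μ φ z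

section HasJump
variable {μ : Measure ℝ} {J : Set ℝ} {O : Set ℂ} {V E f G : ℂ → ℂ} {φ ψ : ℝ → ℂ}

lemma HasJump.congr (hf : HasJump μ J f φ) (h : ∀ z ∉ cpx J, G z = f z) : HasJump μ J G φ := by
  obtain ⟨F, hF, hFeq⟩ := hf
  exact ⟨F, hF, fun z hz => by rw [h z hz, hFeq z hz]⟩

lemma HasJump.mul_add (hf : HasJump μ J f φ) (hμ : IsCarriedBy μ J) (hφ : ContinuousOn φ J)
    (hO : IsOpen O) (hJ : cpx J ⊆ O) (hV : DifferentiableOn ℂ V O) (hE : DifferentiableOn ℂ E O)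
    (hG : DifferentiableOn ℂ G (cpx J)ᶜ) (heq : ∀ z ∈ O \ cpx J, G z = V z * f z + E z) :
    HasJump μ J G fun t => V t * φ t := by
  obtain ⟨F₀, hF₀, hfeq⟩ := hf
  have hVφ : ContinuousOn (fun t : ℝ => V t * φ t) J :=
    (continuousOn_comp_ofReal hV.continuousOn hJ).mul hφ
  have hquot : DifferentiableOn ℂ (fun z => ∫ t, dslope V z t * φ t ∂μ) O := by
    refine hμ.differentiableOn_integral hO ?_ fun t ht => ?_
    · exact ((continuousOn_uncurry_dslope hO hV).comp (f := fun p : ℂ × ℝ => (p.1, (p.2 : ℂ)))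
        (by fun_prop) fun p hp => ⟨hp.1, hJ (ofReal_mem_cpx.2 hp.2)⟩).mul
        (hφ.comp continuousOn_snd fun p hp => hp.2)
    · simp only [dslope_swap V _ (t : ℂ)]
      exact ((Complex.differentiableOn_dslope
        (hO.mem_nhds (hJ (ofReal_mem_cpx.2 ht)))).2 hV).mul_const _
  have hquot_eq : ∀ z ∈ O \ cpx J, ∫ t, dslope V z t * φ t ∂μ =
      V z * cauchy μ φ z - cauchy μ (fun t => V t * φ t) z := by
    rintro z ⟨-, hz⟩
    rw [cauchy, cauchy, ← integral_const_mul, ← integral_sub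
      ((hμ.integrable (continuousOn_cauchy_kernel hφ hz)).const_mul _)
      (hμ.integrable (continuousOn_cauchy_kernel hVφ hz))]
    refine hμ.integral_congr fun t ht => ?_
    have hzt := sub_ofReal_ne_zero hz ht
    rw [dslope_swap, dslope_of_ne _ (sub_ne_zero.1 hzt), slope_def_field]
    field
  obtain ⟨F, hF, hFeq⟩ := exists_differentiable_of_eqOn_compl
    (isCompact_cpx hμ.isCompact).isClosed hO hJ (hG.sub (hμ.differentiableOn_cauchy hVφ))
    (((hV.mul hF₀.differentiableOn).add hE).add hquot) fun z hz => by
      simp only [Pi.sub_apply, Pi.add_apply, Pi.mul_apply, heq z hz, hfeq z hz.2, hquot_eq z hz]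
      ring
  exact ⟨F, hF, fun z hz => by rw [hFeq hz, Pi.sub_apply, sub_add_cancel]⟩

lemma HasJump.eq_cauchy_of_tendsto_zero (hf : HasJump μ J f φ) (hμ : IsCarriedBy μ J)
    (hφ : ContinuousOn φ J) (hlim : Tendsto f (cocompact ℂ) (𝓝 0)) {z : ℂ} (hz : z ∉ cpx J) :
    f z = cauchy μ φ z := by
  obtain ⟨F, hF, hFeq⟩ := hf
  have hFlim : Tendsto F (cocompact ℂ) (𝓝 0) := by
    have h := hlim.sub (hμ.tendsto_cauchy_zero hφ)
    rw [sub_zero] at h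
    refine h.congr' ?_
    filter_upwards [eventually_notMem_cpx hμ.isCompact] with y hy
    rw [hFeq y hy, add_sub_cancel_right]
  rw [hFeq z hz, hF.apply_eq_of_tendsto_cocompact z hFlim, zero_add]

lemma HasJump.eq_cauchy_div {w : ℂ → ℂ} (hf : HasJump μ J (fun z => w z * f z) φ)
    (hμ : IsCarriedBy μ J) (hφ : ContinuousOn φ J) (hw : Differentiable ℂ w)
    (hw₀ : ∀ z ∈ cpx J, w z ≠ 0) (hfd : DifferentiableOn ℂ f (cpx J)ᶜ)
    (hlim : Tendsto f (cocompact ℂ) (𝓝 0)) {z : ℂ} (hz : z ∉ cpx J) :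
    f z = cauchy μ (fun t => φ t / w t) z := by
  have hinv : DifferentiableOn ℂ w⁻¹ {y | w y ≠ 0} := hw.differentiableOn.inv fun _ h => h
  have hdiv := hf.mul_add hμ hφ (hw.continuous.isOpen_preimage _ isOpen_compl_singleton) hw₀ hinv
    (differentiableOn_const 0) hfd fun y hy => by
      rw [add_zero, Pi.inv_apply, inv_mul_cancel_left₀ hy.1]
  rw [hdiv.eq_cauchy_of_tendsto_zero hμ
    ((continuousOn_comp_ofReal hinv.continuousOn hw₀).mul hφ) hlim hz]
  exact hμ.cauchy_congr (fun t _ => by rw [Pi.inv_apply, inv_mul_eq_div]) z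

lemma HasJump.sum {ι : Type*} {s : Finset ι} {f : ι → ℂ → ℂ} {φ : ι → ℝ → ℂ}
    (hf : ∀ i ∈ s, HasJump μ J (f i) (φ i)) (hμ : IsCarriedBy μ J)
    (hφ : ∀ i ∈ s, ContinuousOn (φ i) J) :
    HasJump μ J (fun z => ∑ i ∈ s, f i z) fun t => ∑ i ∈ s, φ i t := by
  choose! F hF hFeq using hf
  refine ⟨fun z => ∑ i ∈ s, F i z, Differentiable.fun_sum hF, fun z hz => ?_⟩
  rw [hμ.cauchy_sum s hφ hz, ← Finset.sum_add_distrib]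
  exact Finset.sum_congr rfl fun i hi => hFeq i hi z hz

end HasJump

/-! ### Orthogonality and zeros -/

lemma pos_or_neg_of_ne_zero {s : Set ℝ} (hs : s.OrdConnected) {g : ℝ → ℝ} (hg : ContinuousOn g s)
    (hg₀ : ∀ x ∈ s, g x ≠ 0) : (∀ x ∈ s, 0 < g x) ∨ ∀ x ∈ s, g x < 0 := by
  by_contra! ⟨⟨x, hx, hx₀⟩, y, hy, hy₀⟩
  obtain ⟨c, hc, hc₀⟩ := hs.isPreconnected.intermediate_value hx hy hg ⟨hx₀, hy₀⟩
  exact hg₀ c hc hc₀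

lemma exists_prod_sub_mul_nonneg (Z : Finset ℝ) {s : Set ℝ} (hs : s.OrdConnected) {g : ℝ → ℝ}
    (hg : ContinuousOn g s) (hZ : ∀ x ∈ s, g x = 0 ↔ x ∈ Z) :
    ∃ Y ⊆ Z, ∃ ε : ℝ, ε ≠ 0 ∧ ∀ x ∈ s, 0 ≤ ε * (∏ y ∈ Y, (x - y)) * g x := by
  induction Z using Finset.induction_on_max generalizing s with
  | empty =>
    rcases pos_or_neg_of_ne_zero hs hg (by simpa using hZ) with h | h
    · exact ⟨∅, subset_rfl, 1, one_ne_zero, fun x hx => by simpa using (h x hx).le⟩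
    · exact ⟨∅, subset_rfl, -1, by simp, fun x hx => by simpa using (h x hx).le⟩
  | insert m Z hm ih =>
    obtain ⟨Y, hY, ε, hε, hleft⟩ := ih (hs.inter ordConnected_Iio) (hg.mono inter_subset_left)
      fun x hx => by rw [hZ x hx.1, Finset.mem_insert, or_iff_right (ne_of_lt hx.2)]
    have hmY : m ∉ Y := fun h => lt_irrefl m (hm m (hY h))
    have hprod : ∀ x, m < x → 0 < ∏ y ∈ Y, (x - y) := fun x hx =>
      Finset.prod_pos fun y hy => sub_pos.2 ((hm y (hY hy)).trans hx)
    have hgm : ∀ x ∈ s, x = m → g x = 0 := fun x hx h => (hZ x hx).2 (by simp [h])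
    rcases pos_or_neg_of_ne_zero (hs.inter ordConnected_Ioi)
      (continuousOn_const.mul (hg.mono inter_subset_left) : ContinuousOn (fun x => ε * g x) _)
      (fun x hx => mul_ne_zero hε fun h => by
        rcases Finset.mem_insert.1 ((hZ x hx.1).1 h) with h | h
        · exact hx.2.ne' h
        · exact hx.2.not_gt (hm x h)) with hright | hright
    · refine ⟨Y, hY.trans (Finset.subset_insert _ _), ε, hε, fun x hx => ?_⟩
      rcases lt_trichotomy x m with h | h | h
      · exact hleft x ⟨hx, h⟩
      · rw [hgm x hx h, mul_zero]
      · rw [mul_right_comm]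
        exact mul_nonneg (hright x ⟨hx, h⟩).le (hprod x h).le
    · refine ⟨insert m Y, Finset.insert_subset_insert _ hY, -ε, neg_ne_zero.2 hε, fun x hx => ?_⟩
      rw [Finset.prod_insert hmY]
      rcases lt_trichotomy x m with h | h | h
      · have := mul_nonneg (sub_pos.2 h).le (hleft x ⟨hx, h⟩)
        linarith
      · rw [hgm x hx h, mul_zero]
      · have := mul_nonneg (mul_nonneg (sub_pos.2 h).le (hprod x h).le)
          (neg_nonneg.2 (hright x ⟨hx, h⟩).le)
        simp only [Pi.mul_apply] at this
        linarith

/-- A generating measure of a Nikishin system: a finite positive measure with infinitely many points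
in its support, together with a compact interval carrying it. The infinite support is encoded as:
no finite set has full measure. -/
structure Generator where
  measure : Measure ℝ
  interval : Set ℝ
  carried : IsCarriedBy measure interval
  ordConnected : interval.OrdConnected
  measure_compl_ne_zero : ∀ T : Finset ℝ, measure (T : Set ℝ)ᶜ ≠ 0

namespace Generator
variable (σ : Generator)

/-- The interval of `σ` as a subset of `ℂ`, across which Cauchy transforms of `σ` jump. -/
def cut : Set ℂ := cpx σ.interval

lemma isCompact : IsCompact σ.interval := σ.carried.isCompact

lemma isOpen_compl_cut : IsOpen σ.cutᶜ := isOpen_compl_cpx σ.isCompact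

lemma interval_nonempty : σ.interval.Nonempty := by
  by_contra! h
  refine σ.measure_compl_ne_zero ∅ ?_
  simpa [h] using σ.carried.measure_compl

lemma integral_ne_zero {f : ℝ → ℝ} (hf : ContinuousOn f σ.interval)
    (hnonneg : ∀ t ∈ σ.interval, 0 ≤ f t) (Z : Finset ℝ)
    (hZ : ∀ t ∈ σ.interval, f t = 0 → t ∈ Z) : ∫ t, f t ∂σ.measure ≠ 0 := by
  intro h
  have hae := (integral_eq_zero_iff_of_nonneg_ae (σ.carried.ae_mem.mono hnonneg)
    (σ.carried.integrable hf)).1 h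
  refine σ.measure_compl_ne_zero Z (ae_iff.1 ?_ : σ.measure {t | ¬ t ∈ Z} = 0)
  filter_upwards [hae, σ.carried.ae_mem] with t ht₀ ht
  exact hZ t ht ht₀

lemma integral_eval_mul_eq_zero {θ : ℝ → ℝ} (hθ : ContinuousOn θ σ.interval) {M : ℕ}
    (hM : ∀ ν < M, ∫ t, t ^ ν * θ t ∂σ.measure = 0) {p : ℝ[X]} (hp : p.natDegree < M) :
    ∫ t, p.eval t * θ t ∂σ.measure = 0 := by
  simp_rw [eval_eq_sum_range' hp, Finset.sum_mul, mul_assoc]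
  rw [integral_finsetSum _ fun i _ => (σ.carried.integrable (by fun_prop)).const_mul _]
  refine Finset.sum_eq_zero fun i hi => ?_
  rw [integral_const_mul, hM i (Finset.mem_range.1 hi), mul_zero]

lemma exists_zeros_of_orthogonal {θ : ℝ → ℝ} (hθ : ContinuousOn θ σ.interval) {M : ℕ}
    (hM : ∀ ν < M, ∫ t, t ^ ν * θ t ∂σ.measure = 0) :
    ∃ T : Finset ℝ, ↑T ⊆ σ.interval ∧ T.card = M ∧ ∀ t ∈ T, θ t = 0 := by
  rcases Set.finite_or_infinite {t ∈ σ.interval | θ t = 0} with hfin | hinf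
  swap
  · obtain ⟨T, hT, hTM⟩ := hinf.exists_subset_card_eq M
    exact ⟨T, fun t ht => (hT ht).1, hTM, fun t ht => (hT ht).2⟩
  have hmem : ∀ t, t ∈ hfin.toFinset ↔ t ∈ σ.interval ∧ θ t = 0 := fun t => hfin.mem_toFinset
  obtain ⟨Y, hY, ε, hε, hsign⟩ := exists_prod_sub_mul_nonneg hfin.toFinset σ.ordConnected hθ
    fun x hx => by rw [hmem, and_iff_right hx]
  suffices hMY : M ≤ Y.card by
    obtain ⟨T, hT, hTM⟩ := Finset.exists_subset_card_eq hMY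
    exact ⟨T, fun t ht => ((hmem t).1 (hY (hT ht))).1, hTM,
      fun t ht => ((hmem t).1 (hY (hT ht))).2⟩
  by_contra! hYM
  refine σ.integral_ne_zero (by fun_prop) hsign hfin.toFinset (fun t ht h => ?_) ?_
  · rcases mul_eq_zero.1 h with h | h
    · obtain ⟨y, hy, hty⟩ := Finset.prod_eq_zero_iff.1 ((mul_eq_zero.1 h).resolve_left hε)
      rw [sub_eq_zero.1 hty]
      exact hY hy
    · exact (hmem t).2 ⟨ht, h⟩
  · have horth := σ.integral_eval_mul_eq_zero hθ hM (p := ∏ y ∈ Y, (X - C y))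
      (by rwa [natDegree_finsetProd_X_sub_C_eq_card])
    simp only [eval_prod, eval_sub, eval_X, eval_C] at horth
    simp_rw [mul_assoc, integral_const_mul, horth, mul_zero]

end Generator

section Moments
variable {μ : Measure ℝ} {J : Set ℝ} {θ : ℝ → ℂ}

lemma IsCarriedBy.pow_mul_cauchy (hμ : IsCarriedBy μ J) (hθ : ContinuousOn θ J) {j : ℕ}
    (hj : ∀ ν < j, ∫ t, (t : ℂ) ^ ν * θ t ∂μ = 0) {z : ℂ} (hz : z ∉ cpx J) :
    z ^ j * cauchy μ θ z = cauchy μ (fun t => (t : ℂ) ^ j * θ t) z := by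
  induction j with
  | zero => simp
  | succ j ih =>
    rw [pow_succ', mul_assoc, ih fun ν hν => hj ν (by omega),
      hμ.mul_cauchy (by fun_prop) hz, hj j (by omega), zero_add]
    simp only [pow_succ', mul_assoc]

lemma tendsto_pow_mul_zero_of_le {f : ℂ → ℂ} {j M : ℕ} (hjM : j ≤ M)
    (hf : Tendsto (fun z => z ^ M * f z) (cocompact ℂ) (𝓝 0)) :
    Tendsto (fun z => z ^ j * f z) (cocompact ℂ) (𝓝 0) := by
  refine squeeze_zero_norm' ?_ (tendsto_zero_iff_norm_tendsto_zero.1 hf)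
  filter_upwards [(tendsto_norm_cocompact_atTop (E := ℂ)).eventually_ge_atTop 1] with z hz
  rw [norm_mul, norm_mul, norm_pow, norm_pow]
  exact mul_le_mul_of_nonneg_right (pow_le_pow_right₀ hz hjM) (norm_nonneg _)

lemma IsCarriedBy.moment_eq_zero (hμ : IsCarriedBy μ J) (hθ : ContinuousOn θ J) {M : ℕ}
    (hlim : Tendsto (fun z => z ^ M * cauchy μ θ z) (cocompact ℂ) (𝓝 0)) {ν : ℕ} (hν : ν < M) :
    ∫ t, (t : ℂ) ^ ν * θ t ∂μ = 0 := by
  induction ν using Nat.strong_induction_on with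
  | _ j ih =>
    have hle := tendsto_pow_mul_zero_of_le hν hlim
    refine tendsto_nhds_unique (hμ.tendsto_mul_cauchy (φ := fun t => (t : ℂ) ^ j * θ t)
      (by fun_prop)) (hle.congr' ?_)
    filter_upwards [eventually_notMem_cpx hμ.isCompact] with z hz
    rw [← hμ.pow_mul_cauchy hθ (fun k hk => ih k hk (hk.trans hν)) hz, pow_succ', mul_assoc]

end Moments

lemma Generator.exists_zeros_of_hasJump (σ : Generator) {w G : ℂ → ℂ} {φ : ℝ → ℂ}
    (hw : Differentiable ℂ w) (hw₀ : ∀ z ∈ σ.cut, w z ≠ 0)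
    (hw_im : ∀ t ∈ σ.interval, (w t).im = 0) (hG : DifferentiableOn ℂ G σ.cutᶜ)
    (hφ : ContinuousOn φ σ.interval) (hφ_im : ∀ t ∈ σ.interval, (φ t).im = 0)
    (hjump : HasJump σ.measure σ.interval (fun z => w z * G z) φ) {M : ℕ}
    (hlimM : Tendsto (fun z => z ^ M * G z) (cocompact ℂ) (𝓝 0)) :
    ∃ T : Finset ℝ, ↑T ⊆ σ.interval ∧ T.card = M ∧ ∀ t ∈ T, φ t = 0 := by
  have hw₀' : ∀ t ∈ σ.interval, w t ≠ 0 := fun t ht => hw₀ t (ofReal_mem_cpx.2 ht)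
  have hθ : ContinuousOn (fun t : ℝ => φ t / w t) σ.interval :=
    hφ.div (continuousOn_comp_ofReal hw.continuous.continuousOn (subset_univ _)) hw₀'
  have hre : ∀ t ∈ σ.interval, φ t / w t = ((φ t / w t).re : ℝ) := fun t ht =>
    Complex.ext rfl (by simp [Complex.div_im, hφ_im t ht, hw_im t ht])
  have hlim : Tendsto G (cocompact ℂ) (𝓝 0) := by
    simpa using tendsto_pow_mul_zero_of_le M.zero_le hlimM
  have hmoment : ∀ ν < M, ∫ t, t ^ ν * (φ t / w t).re ∂σ.measure = 0 := by
    intro ν hν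
    rw [← Complex.ofReal_eq_zero, ← integral_complex_ofReal,
      ← σ.carried.moment_eq_zero hθ (hlimM.congr' ?_) hν]
    · exact σ.carried.integral_congr fun t ht => by
        rw [Complex.ofReal_mul, ← hre t ht, Complex.ofReal_pow]
    · filter_upwards [eventually_notMem_cpx σ.isCompact] with z hz
      rw [hjump.eq_cauchy_div σ.carried hφ hw hw₀ hG hlim hz]
  obtain ⟨T, hT, hTM, hT₀⟩ := σ.exists_zeros_of_orthogonal
    (Complex.continuous_re.comp_continuousOn hθ) hmoment
  refine ⟨T, hT, hTM, fun t ht => (div_eq_zero_iff.1 ?_).resolve_right (hw₀' t (hT ht))⟩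
  rw [hre t (hT ht)]
  exact congrArg Complex.ofReal (hT₀ t ht)

/-! ### Zero multisets -/

/-- The monic polynomial whose multiset of roots is `s`. -/
def nodal (s : Multiset ℂ) : ℂ[X] := (s.map fun x => X - C x).prod

section Nodal
variable {s : Multiset ℂ} {x z : ℂ}

lemma eval_nodal_cons : (nodal (x ::ₘ s)).eval z = (z - x) * (nodal s).eval z := by
  simp [nodal]

lemma monic_nodal (s : Multiset ℂ) : (nodal s).Monic :=
  monic_multiset_prod_of_monic _ _ fun x _ => monic_X_sub_C x

lemma degree_nodal (s : Multiset ℂ) : (nodal s).degree = s.card := by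
  rw [degree_eq_natDegree (monic_nodal s).ne_zero, nodal, natDegree_multiset_prod_X_sub_C_eq_card]

lemma eval_nodal_eq_zero_iff : (nodal s).eval z = 0 ↔ z ∈ s := by
  rw [← IsRoot.def, ← mem_roots (monic_nodal s).ne_zero, nodal, roots_multiset_prod_X_sub_C]

lemma eval_nodal_conj (z : ℂ) : (nodal s).eval (conj z) = conj ((nodal (s.map conj)).eval z) := by
  induction s using Multiset.induction_on with
  | empty => simp [nodal]
  | cons x s ih =>
    simp only [Multiset.map_cons, eval_nodal_cons, ih, map_mul, map_sub, Complex.conj_conj]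

lemma analyticOrderAt_eval_nodal (s : Multiset ℂ) (x : ℂ) :
    analyticOrderAt (fun z => (nodal s).eval z) x = s.count x := by
  induction s using Multiset.induction_on with
  | empty => simp [nodal, analyticOrderAt_eq_zero]
  | cons y s ih =>
    have hs : AnalyticAt ℂ (fun z => (nodal s).eval z) x :=
      (nodal s).differentiable.analyticAt x
    simp only [eval_nodal_cons]
    rw [← Pi.mul_def, analyticOrderAt_mul (by fun_prop) hs, ih]
    rcases eq_or_ne x y with rfl | hxy
    · rw [analyticOrderAt_id_sub_const_self, Multiset.count_cons_self, add_comm, Nat.cast_succ]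
    · rw [analyticOrderAt_id_sub_const_of_ne hxy, Multiset.count_cons_of_ne hxy, zero_add]

lemma eval_isLittleO_nodal {p : ℂ[X]} (hp : p.degree < s.card) :
    p.eval =o[cocompact ℂ] (nodal s).eval := by
  rw [← Metric.cobounded_eq_cocompact]
  exact isLittleO_cobounded_of_degree_lt (by rwa [degree_nodal])

lemma eval_isBigO_nodal {p : ℂ[X]} (hp : p.degree ≤ s.card) :
    p.eval =O[cocompact ℂ] (nodal s).eval := by
  rw [← Metric.cobounded_eq_cocompact]
  exact isBigO_cobounded_of_degree_le (by rwa [degree_nodal])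

lemma analyticOrderAt_eval {p : ℂ[X]} (hp : p ≠ 0) (x : ℂ) :
    analyticOrderAt p.eval x = p.roots.count x := by
  have heq : p.eval = (fun _ => p.leadingCoeff) * fun z => (nodal p.roots).eval z := by
    ext z
    nth_rw 1 [(IsAlgClosed.splits p).eq_prod_roots]
    rw [eval_mul, eval_C]
    rfl
  have hlead : analyticOrderAt (fun _ : ℂ => p.leadingCoeff) x = 0 :=
    analyticOrderAt_eq_zero.2 (Or.inr (leadingCoeff_ne_zero.2 hp))
  rw [heq, analyticOrderAt_mul analyticAt_const ((nodal _).differentiable.analyticAt x), hlead,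
    analyticOrderAt_eval_nodal, zero_add]

end Nodal

/-- `s` is a multiset of zeros in `O` of the function `f`, holomorphic on `O`: multiplicities
are expressed by factoring `nodal s` out of `f`. -/
def HasZeros (f : ℂ → ℂ) (O : Set ℂ) (s : Multiset ℂ) : Prop :=
  (∀ x ∈ s, x ∈ O) ∧
    ∃ H : ℂ → ℂ, DifferentiableOn ℂ H O ∧ ∀ z ∈ O, f z = (nodal s).eval z * H z

section HasZeros
variable {f g H : ℂ → ℂ} {O : Set ℂ} {s : Multiset ℂ} {x : ℂ}

lemma HasZeros.apply_eq_zero (hf : HasZeros f O s) (hx : x ∈ s) : f x = 0 := by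
  obtain ⟨hs, H, -, hH⟩ := hf
  rw [hH x (hs x hx), eval_nodal_eq_zero_iff.2 hx, zero_mul]

lemma HasZeros.div (hf : HasZeros f O s) (hg : DifferentiableOn ℂ g O) (hg₀ : ∀ z ∈ O, g z ≠ 0) :
    HasZeros (fun z => f z / g z) O s := by
  obtain ⟨hs, H, hHd, hH⟩ := hf
  exact ⟨hs, fun z => H z / g z, hHd.div hg hg₀, fun z hz => by simp only [hH z hz, mul_div_assoc]⟩

lemma hasZeros_cons (hO : IsOpen O) (hs : ∀ y ∈ s, y ∈ O) (hH : DifferentiableOn ℂ H O)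
    (hf : ∀ z ∈ O, f z = (nodal s).eval z * H z) (hx : x ∈ O) (hHx : H x = 0) :
    HasZeros f O (x ::ₘ s) := by
  refine ⟨by simpa [hx] using hs, dslope H x,
    (Complex.differentiableOn_dslope (hO.mem_nhds hx)).2 hH, fun z hz => ?_⟩
  have hz' := sub_smul_dslope H x z
  rw [hHx, sub_zero, smul_eq_mul] at hz'
  rw [hf z hz, ← hz', eval_nodal_cons]
  ring

lemma hasZeros_of_iteratedDeriv_eq_zero (hO : IsOpen O) (hf : DifferentiableOn ℂ f O)
    (hs : ∀ x ∈ s, x ∈ O ∧ ∀ i < s.count x, iteratedDeriv i f x = 0) : HasZeros f O s := by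
  induction s using Multiset.induction_on with
  | empty => exact ⟨by simp, f, hf, by simp [nodal]⟩
  | cons x s ih =>
    obtain ⟨hsO, H, hHd, hH⟩ := ih fun y hy =>
      ⟨(hs y (Multiset.mem_cons_of_mem hy)).1, fun i hi =>
        (hs y (Multiset.mem_cons_of_mem hy)).2 i (hi.trans_le (Multiset.count_le_count_cons ..))⟩
    obtain ⟨hx, hx'⟩ := hs x (Multiset.mem_cons_self x s)
    have hOx := hO.mem_nhds hx
    refine hasZeros_cons hO hsO hHd hH hx (not_not.1 fun hHx => ?_)
    have hord := (natCast_le_analyticOrderAt_iff_iteratedDeriv_eq_zero (hf.analyticAt hOx)).2 hx'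
    have hHx' : analyticOrderAt H x = 0 := analyticOrderAt_eq_zero.2 (Or.inr hHx)
    rw [analyticOrderAt_congr (eventually_of_mem hOx hH :
      f =ᶠ[𝓝 x] (fun z => (nodal s).eval z) * H),
      analyticOrderAt_mul ((nodal s).differentiable.analyticAt x) (hHd.analyticAt hOx),
      analyticOrderAt_eval_nodal, hHx', add_zero, Multiset.count_cons_self, Nat.cast_le] at hord
    exact (Nat.lt_succ_self _).not_ge hord

lemma HasZeros.card_le_natDegree {p : ℂ[X]} (hO : IsOpen O) (hp : p ≠ 0)
    (h : HasZeros p.eval O s) : s.card ≤ p.natDegree := by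
  obtain ⟨hs, H, hHd, hH⟩ := h
  refine (Multiset.card_le_card (Multiset.le_iff_count.2 fun x => ?_)).trans (card_roots' p)
  by_cases hx : x ∈ s
  · have hOx := hO.mem_nhds (hs x hx)
    rw [← Nat.cast_le (α := ℕ∞), ← analyticOrderAt_eval hp, ← analyticOrderAt_eval_nodal,
      analyticOrderAt_congr (eventually_of_mem hOx hH :
        p.eval =ᶠ[𝓝 x] (fun z => (nodal s).eval z) * H),
      analyticOrderAt_mul ((nodal s).differentiable.analyticAt x) (hHd.analyticAt hOx)]
    exact le_self_add
  · rw [Multiset.count_eq_zero_of_notMem hx]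
    exact Nat.zero_le _

/-- The multiset of complex numbers underlying a finite set of real numbers. -/
def realMultiset (T : Finset ℝ) : Multiset ℂ := T.val.map Complex.ofReal

lemma mem_realMultiset {T : Finset ℝ} : x ∈ realMultiset T ↔ ∃ t ∈ T, (t : ℂ) = x := by
  simp [realMultiset]

lemma card_realMultiset (T : Finset ℝ) : (realMultiset T).card = T.card := by
  simp [realMultiset]

lemma map_conj_realMultiset (T : Finset ℝ) : (realMultiset T).map conj = realMultiset T := by
  simp [realMultiset, Multiset.map_map]

lemma eval_nodal_realMultiset (T : Finset ℝ) (x : ℝ) :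
    (nodal (realMultiset T)).eval (x : ℂ) = (∏ t ∈ T, (x - t) : ℝ) := by
  simp [nodal, realMultiset, Multiset.map_map, eval_prod]

lemma hasZeros_realMultiset (hO : IsOpen O) (hf : DifferentiableOn ℂ f O) {T : Finset ℝ}
    (hT : ∀ t ∈ T, (t : ℂ) ∈ O ∧ f t = 0) : HasZeros f O (realMultiset T) := by
  refine hasZeros_of_iteratedDeriv_eq_zero hO hf fun x hx => ?_
  obtain ⟨t, ht, rfl⟩ := mem_realMultiset.1 hx
  refine ⟨(hT t ht).1, fun i hi => ?_⟩
  have hnodup : (realMultiset T).Nodup := T.nodup.map Complex.ofReal_injective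
  obtain rfl : i = 0 := by have := Multiset.nodup_iff_count_le_one.1 hnodup t; omega
  simpa using (hT t ht).2

lemma HasZeros.exists_isReal (hf : HasZeros f O s) (hOo : IsOpen O) (hO : ∀ z ∈ O, conj z ∈ O)
    (hs : s.map conj = s) (hfc : IsConjSymm f) :
    ∃ H : ℂ → ℂ, DifferentiableOn ℂ H O ∧ (∀ z ∈ O, f z = (nodal s).eval z * H z) ∧
      ∀ x : ℝ, (H x).im = 0 := by
  obtain ⟨-, H, hHd, hH⟩ := hf
  refine ⟨fun z => (H z + conj (H (conj z))) / 2, (hHd.add fun z hz => ?_).div_const 2,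
    fun z hz => ?_, fun x => ?_⟩
  · exact (differentiableAt_conj_conj_iff.2
      (hHd.differentiableAt (hOo.mem_nhds (hO z hz)))).differentiableWithinAt
  · have hz' := hfc (conj z)
    rw [Complex.conj_conj, hH _ (hO z hz), map_mul, eval_nodal_conj, hs, Complex.conj_conj] at hz'
    rw [mul_div_assoc', mul_add, ← hz', ← hH z hz, add_self_div_two]
  · simp only [Complex.conj_ofReal, Complex.add_conj]
    simp

end HasZeros

lemma Generator.exists_zeros_of_hasZeros (σ : Generator) {F : ℂ → ℂ} {φ : ℝ → ℂ} {s : Multiset ℂ}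
    (hs : s.map conj = s) (hF : HasZeros F σ.cutᶜ s) (hφ : ContinuousOn φ σ.interval)
    (hφ_im : ∀ t ∈ σ.interval, (φ t).im = 0) (hjump : HasJump σ.measure σ.interval F φ) {M : ℕ}
    (hlim : (fun z => z ^ M * F z) =o[cocompact ℂ] (nodal s).eval) :
    ∃ T : Finset ℝ, ↑T ⊆ σ.interval ∧ T.card = M ∧ ∀ t ∈ T, φ t = 0 := by
  obtain ⟨hsO, H, hHd, hH⟩ := hF
  have hw₀ : ∀ z ∈ σ.cut, (nodal s).eval z ≠ 0 := fun z hz h =>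
    hsO z (eval_nodal_eq_zero_iff.1 h) hz
  have hlimM : Tendsto (fun z => z ^ M * H z) (cocompact ℂ) (𝓝 0) := by
    refine hlim.tendsto_div_nhds_zero.congr' ?_
    filter_upwards [eventually_notMem_cpx σ.isCompact,
      cocompact_le_cofinite (eventually_cofinite_not_isRoot (monic_nodal s).ne_zero)] with z hz hz'
    rw [hH z hz, mul_left_comm, mul_div_cancel_left₀ _ hz']
  refine σ.exists_zeros_of_hasJump (nodal s).differentiable hw₀ (fun t _ => ?_) hHd hφ hφ_im
    (hjump.congr fun z hz => (hH z hz).symm) hlimM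
  rw [← Complex.conj_eq_iff_im, ← hs, ← eval_nodal_conj, Complex.conj_ofReal, hs]

/-! ### Iterated Cauchy transforms form a Chebyshev system -/

section
variable {f g : ℂ → ℂ}

lemma isConjSymm_ofReal (r : ℝ) : IsConjSymm fun _ => (r : ℂ) :=
  fun _ => (Complex.conj_ofReal r).symm

lemma IsConjSymm.mul (hf : IsConjSymm f) (hg : IsConjSymm g) : IsConjSymm fun z => f z * g z :=
  fun z => by simp only [hf z, hg z, map_mul]

lemma IsConjSymm.div (hf : IsConjSymm f) (hg : IsConjSymm g) : IsConjSymm fun z => f z / g z :=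
  fun z => by simp only [hf z, hg z, map_div₀]

lemma IsConjSymm.sum {ι : Type*} {s : Finset ι} {f : ι → ℂ → ℂ} (hf : ∀ i ∈ s, IsConjSymm (f i)) :
    IsConjSymm fun z => ∑ i ∈ s, f i z :=
  fun z => by rw [map_sum]; exact Finset.sum_congr rfl fun i hi => hf i hi z

end

/-- The real linear combinations of the `φ i`, `i ∈ I`, have fewer zeros in `O`, counted with
multiplicities, than terms. Only conjugation invariant multisets of zeros are considered, since
these come with a sign rule on the real line. -/
structure IsChebyshev {ι : Type*} (φ : ι → ℂ → ℂ) (I : Set ι) (O : Set ℂ) : Prop where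
  differentiableOn : ∀ i ∈ I, DifferentiableOn ℂ (φ i) O
  isConjSymm : ∀ i ∈ I, IsConjSymm (φ i)
  card_lt : ∀ Q : Finset ι, ↑Q ⊆ I → ∀ c : ι → ℝ, (∃ i ∈ Q, c i ≠ 0) → ∀ s : Multiset ℂ,
    s.map conj = s → HasZeros (fun z => ∑ i ∈ Q, (c i : ℂ) * φ i z) O s → s.card < Q.card

namespace IsChebyshev
variable {ι κ : Type*} {φ : ι → ℂ → ℂ} {I : Set ι} {O : Set ℂ} {Q : Finset ι} {c : ι → ℝ}
  {T : Finset ℝ}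

lemma comp (h : IsChebyshev φ I O) {e : κ → ι} {J : Set κ} (he : InjOn e J) (heJ : MapsTo e J I)
    {ψ : κ → ℂ → ℂ} (hψ : ∀ j ∈ J, ψ j = φ (e j)) : IsChebyshev ψ J O where
  differentiableOn j hj := hψ j hj ▸ h.differentiableOn _ (heJ hj)
  isConjSymm j hj := hψ j hj ▸ h.isConjSymm _ (heJ hj)
  card_lt Q hQ c hc s hs hz := by
    classical
    obtain ⟨j, hj, hcj⟩ := hc
    have : Nonempty κ := ⟨j⟩
    have hinv : ∀ j ∈ Q, Function.invFunOn e J (e j) = j := fun j hj =>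
      he.leftInvOn_invFunOn (hQ hj)
    rw [← Finset.card_image_of_injOn (he.mono hQ)]
    refine h.card_lt (Q.image e) ?_ (c ∘ Function.invFunOn e J)
      ⟨e j, Finset.mem_image_of_mem e hj, by simpa [hinv j hj]⟩ s hs ?_
    · rw [Finset.coe_image]
      exact (heJ.mono_left hQ).image_subset
    · convert hz using 2 with z
      rw [Finset.sum_image (he.mono hQ)]
      exact Finset.sum_congr rfl fun j hj => by
        rw [Function.comp_apply, hinv j hj, hψ j (hQ hj)]

lemma differentiableOn_sum (h : IsChebyshev φ I O) (hQ : ↑Q ⊆ I) (c : ι → ℝ) :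
    DifferentiableOn ℂ (fun z => ∑ i ∈ Q, (c i : ℂ) * φ i z) O :=
  DifferentiableOn.fun_sum fun i hi => (h.differentiableOn i (hQ hi)).const_mul _

lemma isConjSymm_sum (h : IsChebyshev φ I O) (hQ : ↑Q ⊆ I) (c : ι → ℝ) :
    IsConjSymm fun z => ∑ i ∈ Q, (c i : ℂ) * φ i z :=
  IsConjSymm.sum fun i hi => (isConjSymm_ofReal _).mul (h.isConjSymm i (hQ hi))

lemma card_real_zeros_lt (h : IsChebyshev φ I O) (hO : IsOpen O) (hQ : ↑Q ⊆ I)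
    (hc : ∃ i ∈ Q, c i ≠ 0) (hT : ∀ t ∈ T, (t : ℂ) ∈ O ∧ ∑ i ∈ Q, (c i : ℂ) * φ i t = 0) :
    T.card < Q.card := by
  rw [← card_realMultiset]
  exact h.card_lt Q hQ c hc _ (map_conj_realMultiset T)
    (hasZeros_realMultiset hO (h.differentiableOn_sum hQ c) hT)

lemma exists_eq_prod_sub_mul (h : IsChebyshev φ I O) (hO : IsOpen O) (hOc : ∀ z ∈ O, conj z ∈ O)
    (hQ : ↑Q ⊆ I) (hc : ∃ i ∈ Q, c i ≠ 0)
    (hT : ∀ t ∈ T, (t : ℂ) ∈ O ∧ ∑ i ∈ Q, (c i : ℂ) * φ i t = 0) (hQT : Q.card ≤ T.card + 1) :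
    ∃ g : ℝ → ℝ, ContinuousOn g {x : ℝ | (x : ℂ) ∈ O} ∧ ∀ x : ℝ, (x : ℂ) ∈ O →
      g x ≠ 0 ∧ ∑ i ∈ Q, (c i : ℂ) * φ i x = ((∏ t ∈ T, (x - t)) * g x : ℝ) := by
  have hz := hasZeros_realMultiset hO (h.differentiableOn_sum hQ c) hT
  obtain ⟨H, hHd, hH, hHr⟩ := hz.exists_isReal hO hOc (map_conj_realMultiset T)
    (h.isConjSymm_sum hQ c)
  have hre : ∀ x : ℝ, ((H x).re : ℂ) = H x := fun x => Complex.ext rfl (hHr x).symm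
  refine ⟨fun x => (H x).re, Complex.continuous_re.comp_continuousOn
    (continuousOn_comp_ofReal hHd.continuousOn (image_subset_iff.2 fun _ => id)),
    fun x hx => ⟨fun hHx => ?_, ?_⟩⟩
  · have hx0 : H x = 0 := by rw [← hre]; exact congrArg Complex.ofReal hHx
    have hlt := h.card_lt Q hQ c hc ((x : ℂ) ::ₘ realMultiset T)
      (by rw [Multiset.map_cons, map_conj_realMultiset, Complex.conj_ofReal])
      (hasZeros_cons hO hz.1 hHd hH hx hx0)
    rw [Multiset.card_cons, card_realMultiset] at hlt
    omega
  · rw [hH x hx, eval_nodal_realMultiset, ← hre]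
    push_cast
    rfl

end IsChebyshev

/-- The Cauchy transform of the Nikishin product `⟨σ 0, …, σ (k - 1)⟩`, and `1` for `k = 0`. -/
def iteratedCauchy : (ℕ → Generator) → ℕ → ℂ → ℂ
  | _, 0, _ => 1
  | σ, k + 1, z => cauchy (σ 0).measure (fun t => iteratedCauchy (fun i => σ (i + 1)) k t) z

/-- The sequence `σ` generates an (infinite) Nikishin system. -/
def IsNikishin (σ : ℕ → Generator) : Prop :=
  ∀ l, Disjoint (σ l).interval (σ (l + 1)).interval

namespace IsNikishin
variable {σ : ℕ → Generator}

lemma tail (hσ : IsNikishin σ) : IsNikishin fun i => σ (i + 1) := fun l => hσ (l + 1)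

lemma cut_zero_subset (hσ : IsNikishin σ) : (σ 0).cut ⊆ (σ 1).cutᶜ :=
  (disjoint_cpx (hσ 0)).subset_compl_right

lemma differentiableOn_iteratedCauchy (hσ : IsNikishin σ) (k : ℕ) :
    DifferentiableOn ℂ (iteratedCauchy σ k) (σ 0).cutᶜ := by
  induction k generalizing σ with
  | zero => exact differentiableOn_const 1
  | succ k ih =>
    exact (σ 0).carried.differentiableOn_cauchy
      (continuousOn_comp_ofReal (ih hσ.tail).continuousOn hσ.cut_zero_subset)

lemma continuousOn_iteratedCauchy_tail (hσ : IsNikishin σ) (k : ℕ) :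
    ContinuousOn (fun t : ℝ => iteratedCauchy (fun i => σ (i + 1)) k t) (σ 0).interval :=
  continuousOn_comp_ofReal (hσ.tail.differentiableOn_iteratedCauchy k).continuousOn
    hσ.cut_zero_subset

end IsNikishin

lemma isConjSymm_iteratedCauchy (σ : ℕ → Generator) (k : ℕ) : IsConjSymm (iteratedCauchy σ k) := by
  induction k generalizing σ with
  | zero => exact fun _ => (map_one _).symm
  | succ k ih => exact isConjSymm_cauchy fun t => (ih _).im_ofReal t

lemma IsNikishin.sum_iteratedCauchy_eq {σ : ℕ → Generator} (hσ : IsNikishin σ) (c : ℕ → ℂ) (M : ℕ)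
    {z : ℂ} (hz : z ∉ (σ 0).cut) :
    ∑ k ∈ Finset.range (M + 1), c k * iteratedCauchy σ k z = c 0 + cauchy (σ 0).measure
      (fun t => ∑ k ∈ Finset.range M, c (k + 1) * iteratedCauchy (fun i => σ (i + 1)) k t) z := by
  rw [Finset.sum_range_succ', add_comm, (σ 0).carried.cauchy_sum
    (φ := fun k t => c (k + 1) * iteratedCauchy (fun i => σ (i + 1)) k t) _
    (fun k _ => continuousOn_const.mul (hσ.continuousOn_iteratedCauchy_tail k)) hz]
  simp only [cauchy_const_mul, iteratedCauchy, mul_one]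

lemma isLittleO_pow_mul_const_add_cauchy {μ : Measure ℝ} {J : Set ℝ} (hμ : IsCarriedBy μ J)
    {φ : ℝ → ℂ} (hφ : ContinuousOn φ J) {c : ℂ} {N : ℕ} {s : Multiset ℂ} (hN : N ≤ s.card)
    (hc : c ≠ 0 → N < s.card) :
    (fun z => z ^ N * (c + cauchy μ φ z)) =o[cocompact ℂ] (nodal s).eval := by
  have hpow : (fun z : ℂ => z ^ N) = (X ^ N : ℂ[X]).eval := by ext z; simp
  simp only [mul_add]
  refine Asymptotics.IsLittleO.add ?_ ?_
  · rcases eq_or_ne c 0 with rfl | hc₀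
    · simp only [mul_zero]
      exact Asymptotics.isLittleO_zero _ _
    · simp only [mul_comm _ c]
      refine Asymptotics.IsLittleO.const_mul_left ?_ c
      rw [hpow]
      exact eval_isLittleO_nodal (by rw [degree_X_pow]; exact_mod_cast hc hc₀)
  · have hO : (fun z : ℂ => z ^ N) =O[cocompact ℂ] (nodal s).eval := by
      rw [hpow]
      exact eval_isBigO_nodal (by rw [degree_X_pow]; exact_mod_cast hN)
    simpa using hO.mul_isLittleO
      ((Asymptotics.isLittleO_one_iff ℂ).2 (hμ.tendsto_cauchy_zero hφ))

lemma IsNikishin.exists_hasZeros_tail {σ : ℕ → Generator} (hσ : IsNikishin σ) {M : ℕ} {c : ℕ → ℝ}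
    {s : Multiset ℂ} (hs : s.map conj = s)
    (hz : HasZeros (fun z => ∑ k ∈ Finset.range (M + 1), (c k : ℂ) * iteratedCauchy σ k z)
      (σ 0).cutᶜ s) {N : ℕ} (hN : N ≤ s.card) (hc : c 0 ≠ 0 → N < s.card) :
    ∃ T : Finset ℝ, T.card = N ∧ HasZeros (fun z => ∑ k ∈ Finset.range M,
      (c (k + 1) : ℂ) * iteratedCauchy (fun i => σ (i + 1)) k z) (σ 1).cutᶜ (realMultiset T) := by
  set Φ : ℂ → ℂ := fun z =>
    ∑ k ∈ Finset.range M, (c (k + 1) : ℂ) * iteratedCauchy (fun i => σ (i + 1)) k z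
  have hΦd : DifferentiableOn ℂ Φ (σ 1).cutᶜ := DifferentiableOn.fun_sum fun k _ =>
    (hσ.tail.differentiableOn_iteratedCauchy k).const_mul _
  have hΦr : IsConjSymm Φ := IsConjSymm.sum fun k _ =>
    (isConjSymm_ofReal _).mul (isConjSymm_iteratedCauchy _ k)
  have hΦc := continuousOn_comp_ofReal hΦd.continuousOn hσ.cut_zero_subset
  have heq : ∀ z ∉ (σ 0).cut, _ := fun z hz => hσ.sum_iteratedCauchy_eq (fun k => c k) M hz
  have hdecay : (fun z => z ^ N * ∑ k ∈ Finset.range (M + 1), (c k : ℂ) * iteratedCauchy σ k z)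
      =o[cocompact ℂ] (nodal s).eval := by
    refine (isLittleO_pow_mul_const_add_cauchy (σ 0).carried hΦc (c := c 0) hN fun h0 =>
      hc (by exact_mod_cast h0)).congr' ?_ .rfl
    filter_upwards [eventually_notMem_cpx (σ 0).isCompact] with z hz
    rw [heq z hz]
  obtain ⟨T, hT, hTcard, hT₀⟩ := (σ 0).exists_zeros_of_hasZeros hs hz hΦc
    (fun t _ => hΦr.im_ofReal t) ⟨_, differentiable_const _, heq⟩ hdecay
  exact ⟨T, hTcard, hasZeros_realMultiset (σ 1).isOpen_compl_cut hΦd fun t ht =>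
    ⟨hσ.cut_zero_subset (ofReal_mem_cpx.2 (hT ht)), hT₀ t ht⟩⟩

lemma IsNikishin.card_lt_of_hasZeros {σ : ℕ → Generator} (hσ : IsNikishin σ) {M : ℕ} {c : ℕ → ℝ}
    (hc : ∃ k < M, c k ≠ 0) {s : Multiset ℂ} (hs : s.map conj = s)
    (hz : HasZeros (fun z => ∑ k ∈ Finset.range M, (c k : ℂ) * iteratedCauchy σ k z)
      (σ 0).cutᶜ s) : s.card < ((Finset.range M).filter fun k => c k ≠ 0).card := by
  induction M generalizing σ c s with
  | zero => simp at hc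
  | succ M ih =>
    have hcard : ((Finset.range (M + 1)).filter fun k => c k ≠ 0).card =
        ((Finset.range M).filter fun k => c (k + 1) ≠ 0).card + if c 0 ≠ 0 then 1 else 0 := by
      simp only [Finset.card_filter, Finset.sum_range_succ']
    by_cases hc' : ∃ k < M, c (k + 1) ≠ 0
    · by_contra! hle
      rw [hcard] at hle
      obtain ⟨T, hTcard, hT⟩ := hσ.exists_hasZeros_tail hs hz (le_of_add_le_left hle) fun h0 => by
        rwa [if_pos h0] at hle
      have hlt := ih hσ.tail hc' (map_conj_realMultiset T) hT
      rw [card_realMultiset, hTcard] at hlt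
      exact hlt.false
    · push Not at hc'
      have hc₀ : c 0 ≠ 0 := fun h0 => by
        obtain ⟨_ | k, hk, hck⟩ := hc
        · exact hck h0
        · exact hck (hc' k (Nat.lt_of_succ_lt_succ hk))
      have hs₀ : s = 0 := Multiset.eq_zero_of_forall_notMem fun x hx => by
        have hx₀ := hz.apply_eq_zero hx
        rw [Finset.sum_range_succ', Finset.sum_eq_zero fun k hk => by
          rw [hc' k (Finset.mem_range.1 hk), Complex.ofReal_zero, zero_mul]] at hx₀
        simp [iteratedCauchy, hc₀] at hx₀
      rw [hs₀, hcard, if_pos hc₀]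
      simp

theorem IsNikishin.isChebyshev {σ : ℕ → Generator} (hσ : IsNikishin σ) :
    IsChebyshev (iteratedCauchy σ) univ (σ 0).cutᶜ where
  differentiableOn k _ := hσ.differentiableOn_iteratedCauchy k
  isConjSymm k _ := isConjSymm_iteratedCauchy σ k
  card_lt Q _ c hc s hs hz := by
    set M := Q.sup id + 1
    have hQ : Q ⊆ Finset.range M := fun k hk =>
      Finset.mem_range_succ_iff.2 (Finset.le_sup (f := id) hk)
    obtain ⟨k, hk, hck⟩ := hc
    refine (hσ.card_lt_of_hasZeros (M := M) (c := fun k => if k ∈ Q then c k else 0)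
      ⟨k, Finset.mem_range.1 (hQ hk), by rwa [if_pos hk]⟩ hs ?_).trans_le
      (Finset.card_le_card fun k hk => ?_)
    · convert hz using 2 with z
      rw [← Finset.sum_subset hQ fun k _ hk => by simp [hk]]
      exact Finset.sum_congr rfl fun k hk => by rw [if_pos hk]
    · by_contra hkQ
      simp [hkQ] at hk

/-! ### Gram matrices of two Chebyshev systems -/

lemma IsConjSymm.ofReal_re {f : ℂ → ℂ} (hf : IsConjSymm f) (x : ℝ) : ((f x).re : ℂ) = f x :=
  Complex.ext rfl (hf.im_ofReal x).symm

lemma exists_sum_mul_eq_zero_of_card_lt {ι α : Type*} {A : Finset ι} {Y : Finset α}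
    (hYA : Y.card < A.card) (f : ι → α → ℝ) :
    ∃ d : ι → ℝ, (∃ i ∈ A, d i ≠ 0) ∧ ∀ y ∈ Y, ∑ i ∈ A, d i * f i y = 0 := by
  have hdep : ¬ LinearIndepOn ℝ (fun i => fun y : Y => f i y) (A : Set ι) := fun hli => by
    have := hli.fintype_card_le_finrank
    simp only [Module.finrank_fintype_fun_eq_card, Fintype.card_coe, Finset.coe_sort_coe] at this
    exact this.not_gt hYA
  rw [linearIndepOn_finset_iff] at hdep
  push Not at hdep
  obtain ⟨d, hd, hd₀⟩ := hdep
  exact ⟨d, hd₀, fun y hy => by simpa using congrFun hd ⟨y, hy⟩⟩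

namespace IsChebyshev
variable {ι κ : Type*} {φ : ι → ℂ → ℂ} {I : Set ι} {O : Set ℂ} {Q : Finset ι} {s : Set ℝ}

lemma exists_finset_zeros (h : IsChebyshev φ I O) (hO : IsOpen O) (hs : cpx s ⊆ O) (hQ : ↑Q ⊆ I)
    {c : ι → ℝ} (hc : ∃ i ∈ Q, c i ≠ 0) : ∃ Z : Finset ℝ, Z.card < Q.card ∧
      ∀ x, x ∈ Z ↔ x ∈ s ∧ ∑ i ∈ Q, (c i : ℂ) * φ i x = 0 := by
  set N := {x ∈ s | ∑ i ∈ Q, (c i : ℂ) * φ i x = 0}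
  have hcard : ∀ T : Finset ℝ, ↑T ⊆ N → T.card < Q.card := fun T hT =>
    h.card_real_zeros_lt hO hQ hc fun t ht => ⟨hs (ofReal_mem_cpx.2 (hT ht).1), (hT ht).2⟩
  have hN : N.Finite := by
    by_contra hinf
    obtain ⟨T, hT, hTc⟩ := Set.Infinite.exists_subset_card_eq hinf Q.card
    exact (hcard T hT).ne hTc
  exact ⟨hN.toFinset, hcard _ hN.coe_toFinset.subset, fun x => hN.mem_toFinset⟩

/-- One interpolates the sign changes of `θ`. -/
lemma exists_sum_mul_nonneg (h : IsChebyshev φ I O) (hO : IsOpen O) (hOc : ∀ z ∈ O, conj z ∈ O)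
    (hs : s.OrdConnected) (hsO : cpx s ⊆ O) (hQ : ↑Q ⊆ I) {θ : ℝ → ℝ} (hθ : ContinuousOn θ s)
    {Z : Finset ℝ} (hZ : ∀ x, x ∈ Z ↔ x ∈ s ∧ θ x = 0) (hZQ : Z.card < Q.card) :
    ∃ A ⊆ Q, ∃ d : ι → ℝ, ∀ x ∈ s, 0 ≤ (∑ i ∈ A, d i * (φ i x).re) * θ x ∧
      ((∑ i ∈ A, d i * (φ i x).re) * θ x = 0 → x ∈ Z) := by
  obtain ⟨Y, hYZ, ε, hε, hpos⟩ := exists_prod_sub_mul_nonneg Z hs hθ fun x hx => by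
    rw [hZ, and_iff_right hx]
  obtain ⟨A, hAQ, hA⟩ := Finset.exists_subset_card_eq
    (Nat.succ_le_of_lt ((Finset.card_le_card hYZ).trans_lt hZQ))
  obtain ⟨d, hd₀, hd⟩ := exists_sum_mul_eq_zero_of_card_lt (Y := Y) (A := A) (by omega)
    fun i x => (φ i x).re
  have hAI : ↑A ⊆ I := (Finset.coe_subset.2 hAQ).trans hQ
  have hre : ∀ x : ℝ, ∑ i ∈ A, (d i : ℂ) * φ i x = (∑ i ∈ A, d i * (φ i x).re : ℝ) := fun x => by
    push_cast
    exact Finset.sum_congr rfl fun i hi => by rw [(h.isConjSymm i (hAI hi)).ofReal_re]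
  have hsO' : ∀ x ∈ s, (x : ℂ) ∈ O := fun x hx => hsO (ofReal_mem_cpx.2 hx)
  obtain ⟨g, hgc, hg⟩ := h.exists_eq_prod_sub_mul hO hOc hAI hd₀
    (fun y hy => ⟨hsO' y ((hZ y).1 (hYZ hy)).1, by rw [hre, hd y hy, Complex.ofReal_zero]⟩) hA.le
  have hform : ∀ x ∈ s, ∑ i ∈ A, d i * (φ i x).re = (∏ y ∈ Y, (x - y)) * g x := fun x hx => by
    exact_mod_cast (hre x).symm.trans (hg x (hsO' x hx)).2
  obtain ⟨δ, hδ⟩ : ∃ δ : ℝ, ∀ x ∈ s, 0 < δ * g x := by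
    rcases pos_or_neg_of_ne_zero hs (hgc.mono hsO') fun x hx => (hg x (hsO' x hx)).1 with hg | hg
    · exact ⟨1, fun x hx => by simpa using hg x hx⟩
    · exact ⟨-1, fun x hx => by simpa using hg x hx⟩
  have hprod : ∀ x ∈ s, (∑ i ∈ A, ε * δ * d i * (φ i x).re) * θ x =
      δ * g x * (ε * (∏ y ∈ Y, (x - y)) * θ x) := fun x hx => by
    simp only [mul_assoc, ← Finset.mul_sum, hform x hx]
    ring
  refine ⟨A, hAQ, fun i => ε * δ * d i, fun x hx => ?_⟩
  rw [hprod x hx]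
  refine ⟨mul_nonneg (hδ x hx).le (hpos x hx), fun h0 => ?_⟩
  rcases mul_eq_zero.1 ((mul_eq_zero.1 h0).resolve_left (hδ x hx).ne') with h1 | h1
  · obtain ⟨y, hy, hxy⟩ := Finset.prod_eq_zero_iff.1 ((mul_eq_zero.1 h1).resolve_left hε)
    rw [sub_eq_zero.1 hxy]
    exact hYZ hy
  · exact (hZ x).2 ⟨hx, h1⟩

end IsChebyshev

lemma Generator.eq_zero_of_integral_mul_eq_zero (σ : Generator) {ι κ : Type*} {φ : ι → ℂ → ℂ}
    {ψ : κ → ℂ → ℂ} {I : Set ι} {J : Set κ} {O O' : Set ℂ} (hφ : IsChebyshev φ I O)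
    (hψ : IsChebyshev ψ J O') (hO : IsOpen O) (hOc : ∀ z ∈ O, conj z ∈ O) (hO' : IsOpen O')
    (hσ : σ.cut ⊆ O) (hσ' : σ.cut ⊆ O') {A : Finset ι} {B : Finset κ} (hA : ↑A ⊆ I) (hB : ↑B ⊆ J)
    (hBA : B.card ≤ A.card) {ω : ℝ → ℝ} (hω : ContinuousOn ω σ.interval)
    (hω₀ : ∀ t ∈ σ.interval, ω t ≠ 0) {c : κ → ℝ} (horth : ∀ i ∈ A,
      ∫ t, (φ i t).re * ((∑ k ∈ B, c k * (ψ k t).re) * ω t) ∂σ.measure = 0) :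
    ∀ k ∈ B, c k = 0 := by
  by_contra! hc
  obtain ⟨Z, hZB, hZ⟩ := hψ.exists_finset_zeros hO' hσ' hB hc
  have hre : ∀ x : ℝ, ∑ k ∈ B, (c k : ℂ) * ψ k x = (∑ k ∈ B, c k * (ψ k x).re : ℝ) := fun x => by
    push_cast
    exact Finset.sum_congr rfl fun k hk => by rw [(hψ.isConjSymm k (hB hk)).ofReal_re]
  have hφc : ∀ i ∈ A, ContinuousOn (fun t : ℝ => (φ i t).re) σ.interval := fun i hi =>
    Complex.continuous_re.comp_continuousOn
      (continuousOn_comp_ofReal (hφ.differentiableOn i (hA hi)).continuousOn hσ)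
  have hψc : ∀ k ∈ B, ContinuousOn (fun t : ℝ => (ψ k t).re) σ.interval := fun k hk =>
    Complex.continuous_re.comp_continuousOn
      (continuousOn_comp_ofReal (hψ.differentiableOn k (hB hk)).continuousOn hσ')
  set θ : ℝ → ℝ := fun t => (∑ k ∈ B, c k * (ψ k t).re) * ω t
  have hθ : ContinuousOn θ σ.interval :=
    (continuousOn_finsetSum _ fun k hk => continuousOn_const.mul (hψc k hk)).mul hω
  obtain ⟨A', hA', d, hd⟩ := hφ.exists_sum_mul_nonneg hO hOc σ.ordConnected hσ hA hθ (Z := Z)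
    (fun x => by
      rw [hZ, and_congr_right_iff]
      intro hx
      rw [hre, Complex.ofReal_eq_zero, mul_eq_zero_iff_right (hω₀ x hx)])
    (hZB.trans_le hBA)
  refine σ.integral_ne_zero (f := fun t => (∑ i ∈ A', d i * (φ i t).re) * θ t)
    ((continuousOn_finsetSum _ fun i hi => continuousOn_const.mul (hφc i (hA' hi))).mul hθ)
    (fun t ht => (hd t ht).1) Z (fun t ht => (hd t ht).2) ?_
  simp only [Finset.sum_mul, mul_assoc]
  rw [integral_finsetSum (f := fun i (t : ℝ) => d i * ((φ i t).re * θ t)) _ fun i hi =>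
    (σ.carried.integrable ((hφc i (hA' hi)).mul hθ)).const_mul _]
  exact Finset.sum_eq_zero fun i hi => by rw [integral_const_mul, horth i (hA' hi), mul_zero]

/-! ### Minors of a Nikishin system -/

section Fubini
variable {κ η : Measure ℝ} {J J' : Set ℝ}

lemma IsCarriedBy.integrable_prod {E : Type*} [NormedAddCommGroup E] (hκ : IsCarriedBy κ J)
    (hη : IsCarriedBy η J') {F : ℝ × ℝ → E} (hF : ContinuousOn F (J ×ˢ J')) :
    Integrable F (κ.prod η) := by
  have := hκ.isFinite
  have := hη.isFinite
  have hint := hF.integrableOn_compact (μ := κ.prod η) (hκ.isCompact.prod hη.isCompact)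
  rwa [IntegrableOn, ← Measure.prod_restrict, Measure.restrict_eq_self_of_ae_mem hκ.ae_mem,
    Measure.restrict_eq_self_of_ae_mem hη.ae_mem] at hint

lemma cauchy_mul_div_sub (hκ : IsCarriedBy κ J) {f : ℝ → ℂ} (hf : ContinuousOn f J) {z w : ℂ}
    (hz : z ∉ cpx J) (hw : w ∉ cpx J) (hzw : z ≠ w) (a : ℂ) :
    cauchy κ f w * a / (z - w) =
      cauchy κ f z * (a / (z - w)) + ∫ s, f s / (z - s) * (a / (w - s)) ∂κ := by
  have hfz := continuousOn_cauchy_kernel hf hz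
  have hint : ContinuousOn (fun s : ℝ => f s / (z - s) * (a / (w - s))) J :=
    hfz.mul (continuousOn_const.div (by fun_prop) fun s hs => sub_ofReal_ne_zero hw hs)
  simp only [cauchy, ← integral_mul_const, ← integral_div]
  rw [← integral_add ((hκ.integrable hfz).mul_const _) (hκ.integrable hint)]
  refine hκ.integral_congr fun s hs => ?_
  have hzs := sub_ofReal_ne_zero hz hs
  have hws := sub_ofReal_ne_zero hw hs
  have hzw' := sub_ne_zero.2 hzw
  field_simp
  ring

lemma cauchy_cauchy_mul (hκ : IsCarriedBy κ J) (hη : IsCarriedBy η J') (hJ : Disjoint J J')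
    {f g : ℝ → ℂ} (hf : ContinuousOn f J) (hg : ContinuousOn g J') {z : ℂ} (hz : z ∉ cpx J)
    (hz' : z ∉ cpx J') :
    cauchy η (fun t => cauchy κ f t * g t) z =
      cauchy κ f z * cauchy η g z - cauchy κ (fun s => f s * cauchy η g s) z := by
  have := hκ.isFinite
  have := hη.isFinite
  have ht : ∀ t ∈ J', (t : ℂ) ∉ cpx J := fun t ht h =>
    hJ.ne_of_mem (ofReal_mem_cpx.1 h) ht rfl
  set F : ℝ → ℝ → ℂ := fun t s => f s / (z - s) * (g t / (t - s))
  have hF : ContinuousOn (Function.uncurry F) (J' ×ˢ J) := by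
    have hf' : ContinuousOn (fun p : ℝ × ℝ => f p.2 / (z - p.2)) (J' ×ˢ J) :=
      (continuousOn_cauchy_kernel hf hz).comp continuousOn_snd fun p hp => hp.2
    have hg' : ContinuousOn (fun p : ℝ × ℝ => g p.1) (J' ×ˢ J) :=
      hg.comp continuousOn_fst fun p hp => hp.1
    exact hf'.mul (hg'.div (by fun_prop) fun p hp => sub_ofReal_ne_zero (ht _ hp.1) hp.2)
  have hFi : Integrable (Function.uncurry F) (η.prod κ) := hη.integrable_prod hκ hF
  have hpartial : ∀ t ∈ J', cauchy κ f t * g t / (z - t) =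
      cauchy κ f z * (g t / (z - t)) + ∫ s, F t s ∂κ := fun t htJ =>
    cauchy_mul_div_sub hκ hf hz (ht t htJ) (sub_ne_zero.1 (sub_ofReal_ne_zero hz' htJ)) (g t)
  calc cauchy η (fun t => cauchy κ f t * g t) z
      = ∫ t, (cauchy κ f z * (g t / (z - t)) + ∫ s, F t s ∂κ) ∂η := hη.integral_congr hpartial
    _ = cauchy κ f z * cauchy η g z + ∫ s, ∫ t, F t s ∂η ∂κ := by
        rw [integral_add ((hη.integrable (continuousOn_cauchy_kernel hg hz')).const_mul _)
          (f := fun t => cauchy κ f z * (g t / (z - t))) (g := fun t => ∫ s, F t s ∂κ)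
          hFi.integral_prod_left, integral_const_mul, integral_integral_swap hFi, cauchy.eq_1 η g]
    _ = cauchy κ f z * cauchy η g z - cauchy κ (fun s => f s * cauchy η g s) z := by
        rw [sub_eq_add_neg, cauchy.eq_1 κ (fun s => f s * cauchy η g s), ← integral_neg]
        congr 1
        refine integral_congr_ae (.of_forall fun s => ?_)
        simp only [F, integral_const_mul, cauchy]
        rw [mul_div_right_comm, ← mul_neg, ← integral_neg]
        simp only [← div_neg, neg_sub]

end Fubini

section Pluecker
variable {R κ : Type*} [CommRing R] {r : ℕ}

lemma det_submatrix_id_vecCons_swap (A : Matrix (Fin (r + 2)) κ R) (P : Fin r → κ) (x y : κ) :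
    (A.submatrix id (vecCons x (vecCons y P))).det =
      -(A.submatrix id (vecCons y (vecCons x P))).det := by
  have h := Matrix.det_permute' (Equiv.swap 0 1) (A.submatrix id (vecCons y (vecCons x P)))
  rw [Equiv.Perm.sign_swap (by simp), Units.val_neg, Units.val_one, Int.cast_neg, Int.cast_one,
    neg_one_mul, Matrix.submatrix_submatrix] at h
  rw [← h]
  congr 2
  funext j
  refine Fin.cases (by simp) (fun j => Fin.cases (by simp) (fun j => ?_) j) j
  rw [Function.comp_apply, Equiv.swap_apply_of_ne_of_ne (Fin.succ_ne_zero _)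
    (Fin.succ_succ_ne_one j)]
  rfl

lemma exists_det_submatrix_vecCons_eq_sum (A : Matrix (Fin (r + 1)) κ R) (P : Fin r → κ) :
    ∃ c : Fin (r + 1) → R, ∀ x, (A.submatrix id (vecCons x P)).det = ∑ i, c i * A i x :=
  ⟨fun i => (-1) ^ (i : ℕ) * (A.submatrix i.succAbove P).det, fun x => by
    rw [Matrix.det_succ_column_zero]
    exact Finset.sum_congr rfl fun i _ => mul_right_comm _ _ _⟩

lemma det_vecCons_sum_smul_eq_zero {n : ℕ} (B : Matrix (Fin n) (Fin (n + 1)) R) (c : Fin n → R) :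
    (Matrix.of (vecCons (∑ i, c i • B i) B)).det = 0 := by
  set N : Matrix (Fin (n + 1)) (Fin (n + 1)) R := Matrix.of (vecCons (∑ i, c i • B i) B)
  have hrow : ∑ k, (vecCons 0 c : Fin (n + 1) → R) k • N k = N 0 := by
    rw [Fin.sum_univ_succ, Matrix.cons_val_zero, zero_smul, zero_add]
    rfl
  have h := N.det_updateRow_sum 0 (vecCons 0 c)
  rwa [hrow, Matrix.cons_val_zero, zero_smul, Matrix.updateRow_eq_self] at h

/-- The three term Plücker relation: expand along its first row the determinant obtained from
the columns `x, y, w, P` of `A` by adding on top the row of the minors `vecCons c P`, which is a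
combination of the first `r + 1` rows of `A`. -/
lemma det_mul_det_vecCons (A : Matrix (Fin (r + 2)) κ R) (P : Fin r → κ) (x y w : κ) :
    (A.submatrix Fin.castSucc (vecCons x P)).det * (A.submatrix id (vecCons y (vecCons w P))).det =
      (A.submatrix Fin.castSucc (vecCons y P)).det *
        (A.submatrix id (vecCons x (vecCons w P))).det +
      (A.submatrix Fin.castSucc (vecCons w P)).det *
        (A.submatrix id (vecCons y (vecCons x P))).det := by
  set Q : Fin (r + 3) → κ := vecCons x (vecCons y (vecCons w P))
  set φ : κ → R := fun c => (A.submatrix Fin.castSucc (vecCons c P)).det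
  set N : Matrix (Fin (r + 3)) (Fin (r + 3)) R :=
    Matrix.of (vecCons (φ ∘ Q) fun i => A i ∘ Q)
  obtain ⟨c, hc⟩ := exists_det_submatrix_vecCons_eq_sum (A.submatrix Fin.castSucc id) P
  have hφ : ∀ x, φ x = ∑ i : Fin (r + 1), c i * A i.castSucc x := hc
  have hrow : ∑ i : Fin (r + 2), (Fin.snoc c 0 : Fin (r + 2) → R) i • (A i ∘ Q) = φ ∘ Q := by
    funext j
    rw [Finset.sum_apply, Fin.sum_univ_castSucc]
    simp only [Pi.smul_apply, Fin.snoc_castSucc, Fin.snoc_last, smul_eq_mul, zero_mul, add_zero]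
    exact (hφ (Q j)).symm
  have hdet : N.det = 0 := by
    simpa only [hrow] using det_vecCons_sum_smul_eq_zero (fun i => A i ∘ Q) (Fin.snoc c 0)
  have hminor : ∀ j, (N.submatrix Fin.succ (Fin.succAbove j)).det =
      (A.submatrix id (Q ∘ j.succAbove)).det := fun j => rfl
  rw [Matrix.det_succ_row_zero, Fin.sum_univ_succ, Fin.sum_univ_succ, Fin.sum_univ_succ,
    Finset.sum_eq_zero (s := Finset.univ (α := Fin r))] at hdet
  · have q₀ : Q ∘ Fin.succAbove 0 = vecCons y (vecCons w P) := by
      funext i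
      simp [Q]
    have q₁ : Q ∘ Fin.succAbove (Fin.succ 0) = vecCons x (vecCons w P) := by
      funext i
      refine Fin.cases ?_ (fun i => ?_) i <;> simp [Q]
    have q₂ : Q ∘ Fin.succAbove (Fin.succ (Fin.succ 0)) = vecCons x (vecCons y P) := by
      funext i
      refine Fin.cases rfl (fun i => Fin.cases rfl (fun i => ?_) i) i
      rw [Function.comp, Fin.succ_succAbove_succ, Fin.succ_succAbove_succ, Fin.zero_succAbove]
      rfl
    have n₀ : N 0 0 = φ x := rfl
    have n₁ : N 0 (Fin.succ 0) = φ y := rfl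
    have n₂ : N 0 (Fin.succ (Fin.succ 0)) = φ w := rfl
    simp only [hminor, q₀, q₁, q₂, n₀, n₁, n₂, det_submatrix_id_vecCons_swap A P x y, Fin.val_succ,
      Fin.val_zero] at hdet
    linear_combination hdet
  · intro j _
    have : φ (P j) = 0 := Matrix.det_zero_of_column_eq (Fin.succ_ne_zero j).symm fun k => by simp
    simp [N, Q, this]

end Pluecker

/-- A chain of generators in which neighbours live on disjoint intervals. Indexing by `ℤ` spares
the boundary cases: the Nikishin system of interest is generated by a stretch of the chain. -/
structure Chain where
  gen : ℤ → Generator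
  disjoint : ∀ l, Disjoint (gen l).interval (gen (l + 1)).interval

namespace Chain
variable (S : Chain)

/-- The interval of the `r`-th generator, as a subset of the plane. -/
def cut (r : ℕ) : Set ℂ := (S.gen r).cut

lemma isOpen_compl_cut (r : ℕ) : IsOpen (S.cut r)ᶜ := (S.gen r).isOpen_compl_cut

lemma conj_mem_compl_cut {r : ℕ} : ∀ z ∈ (S.cut r)ᶜ, conj z ∈ (S.cut r)ᶜ := fun z hz => by
  rwa [mem_compl_iff, cut, Generator.cut, conj_mem_cpx]

lemma disjoint_interval (r : ℕ) :
    Disjoint (S.gen r).interval (S.gen (r + 1 : ℕ)).interval := S.disjoint r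

lemma disjoint_cut (r : ℕ) : Disjoint (S.cut r) (S.cut (r + 1)) :=
  disjoint_cpx (S.disjoint_interval r)

/-- The generators from the `i`-th one upwards. -/
def forward (i l : ℕ) : Generator := S.gen (i + l)

/-- The generators below the `i`-th one, in descending order. -/
def backward (i l : ℕ) : Generator := S.gen (i - 1 - l)

lemma forward_zero (i : ℕ) : S.forward i 0 = S.gen i := congrArg S.gen (by simp)

lemma forward_tail (i : ℕ) : (fun l => S.forward i (l + 1)) = S.forward (i + 1) :=
  funext fun l => congrArg S.gen (by push_cast; ring)

lemma backward_succ_zero (i : ℕ) : S.backward (i + 1) 0 = S.gen i := congrArg S.gen (by simp)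

lemma backward_succ_tail (i : ℕ) : (fun l => S.backward (i + 1) (l + 1)) = S.backward i :=
  funext fun l => congrArg S.gen (by push_cast; ring)

lemma isNikishin_forward (i : ℕ) : IsNikishin (S.forward i) := fun l => by
  simpa only [forward, Nat.cast_succ, add_assoc] using S.disjoint (i + l)

lemma isNikishin_backward (i : ℕ) : IsNikishin (S.backward i) := fun l => by
  convert! (S.disjoint (i - 1 - (l + 1 : ℕ))).symm using 3
  rw [backward]
  congr 1
  push_cast
  ring

/-- The transform `ŝ_{i,k-1}` of the Nikishin product `⟨σ_i, …, σ_{k-1}⟩`; it is `1` for `k = i`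
and, by convention, `0` for `k < i`. -/
def up (i k : ℕ) (z : ℂ) : ℂ := if i ≤ k then iteratedCauchy (S.forward i) (k - i) z else 0

/-- The transform `ŝ_{r-1,i}` of the Nikishin product `⟨σ_{r-1}, …, σ_i⟩` with the generators in
descending order. -/
def down (r i : ℕ) (z : ℂ) : ℂ := iteratedCauchy (S.backward r) (r - i) z

lemma up_self (i : ℕ) (z : ℂ) : S.up i i z = 1 := by simp [up, iteratedCauchy]

lemma up_of_lt {i k : ℕ} (h : k < i) (z : ℂ) : S.up i k z = 0 := if_neg h.not_ge

lemma down_self (i : ℕ) (z : ℂ) : S.down i i z = 1 := by simp [down, iteratedCauchy]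

lemma up_eq_cauchy {i k : ℕ} (h : i < k) (z : ℂ) :
    S.up i k z = cauchy (S.gen i).measure (fun t => S.up (i + 1) k t) z := by
  obtain ⟨g, rfl⟩ := Nat.exists_eq_add_of_lt h
  simp only [up, h.le, Nat.succ_le_of_lt h, if_true]
  rw [show i + g + 1 - i = g + 1 by omega, show i + g + 1 - (i + 1) = g by omega, iteratedCauchy,
    forward_zero, forward_tail]

lemma down_succ {r i : ℕ} (h : i ≤ r) (z : ℂ) :
    S.down (r + 1) i z = cauchy (S.gen r).measure (fun t => S.down r i t) z := by
  simp only [down]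
  rw [show r + 1 - i = r - i + 1 by omega, iteratedCauchy, backward_succ_zero, backward_succ_tail]

lemma isChebyshev_up (i : ℕ) : IsChebyshev (S.up i) (Ici i) (S.cut i)ᶜ := by
  have h := (S.isNikishin_forward i).isChebyshev.comp (e := fun k => k - i) (J := Ici i)
    (ψ := S.up i)
    (fun k hk l hl hkl => by simp only [mem_Ici] at hk hl hkl; omega) (mapsTo_univ _ _)
    fun k hk => funext fun z => if_pos hk
  rwa [forward_zero] at h

lemma isChebyshev_down (r : ℕ) : IsChebyshev (S.down r) (Iic r) ((S.gen (r - 1)).cut)ᶜ := by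
  have h := (S.isNikishin_backward r).isChebyshev.comp (e := fun i => r - i) (J := Iic r)
    (fun k hk l hl hkl => by simp only [mem_Iic] at hk hl hkl; omega) (mapsTo_univ _ _)
    fun k _ => rfl
  rwa [backward, Nat.cast_zero, sub_zero] at h

lemma isConjSymm_up (i k : ℕ) : IsConjSymm (S.up i k) := by
  by_cases h : i ≤ k
  · exact (S.isChebyshev_up i).isConjSymm k h
  · exact fun z => by rw [S.up_of_lt (not_le.1 h), S.up_of_lt (not_le.1 h), map_zero]

lemma isConjSymm_down (r i : ℕ) : IsConjSymm (S.down r i) := isConjSymm_iteratedCauchy _ _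

lemma differentiableOn_up (i k : ℕ) : DifferentiableOn ℂ (S.up i k) (S.cut i)ᶜ := by
  by_cases h : i ≤ k
  · exact (S.isChebyshev_up i).differentiableOn k h
  · exact (differentiableOn_const 0).congr fun z _ => S.up_of_lt (not_le.1 h) z

lemma continuousOn_up (r k : ℕ) :
    ContinuousOn (fun t : ℝ => S.up (r + 1) k t) (S.gen r).interval :=
  continuousOn_comp_ofReal (S.differentiableOn_up (r + 1) k).continuousOn
    (S.disjoint_cut r).subset_compl_right

lemma cut_subset_compl_pred (r : ℕ) : (S.gen r).cut ⊆ ((S.gen (r - 1)).cut)ᶜ := by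
  have h := S.disjoint (r - 1)
  rw [sub_add_cancel] at h
  exact (disjoint_cpx h).subset_compl_left

lemma continuousOn_down (r i : ℕ) :
    ContinuousOn (fun t : ℝ => S.down r i t) (S.gen r).interval := by
  have h := (S.isNikishin_backward r).differentiableOn_iteratedCauchy (r - i)
  rw [backward, Nat.cast_zero, sub_zero] at h
  exact continuousOn_comp_ofReal h.continuousOn (S.cut_subset_compl_pred r)

lemma continuousOn_down_mul_up (r i k : ℕ) :
    ContinuousOn (fun t : ℝ => S.down r i t * S.up (r + 1) k t) (S.gen r).interval :=
  (S.continuousOn_down r i).mul (S.continuousOn_up r k)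

/-- The coefficients of the forms generated by eliminating `σ_0, …, σ_{r-1}`: modulo the last
row, the row `i` at level `r + 1` is the row `i` at level `r`, see `entry_succ_eq_sub`. -/
def entry (r i k : ℕ) (z : ℂ) : ℂ :=
  if k ≤ r then if i = k then 1 else 0 else
    (-1) ^ (r - i) * cauchy (S.gen r).measure (fun t => S.down r i t * S.up (r + 1) k t) z

lemma entry_of_le {r i k : ℕ} (h : k ≤ r) (z : ℂ) : S.entry r i k z = if i = k then 1 else 0 :=
  if_pos h

lemma entry_of_lt {r i k : ℕ} (h : r < k) (z : ℂ) : S.entry r i k z = (-1) ^ (r - i) *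
    cauchy (S.gen r).measure (fun t => S.down r i t * S.up (r + 1) k t) z := if_neg h.not_ge

lemma entry_self (r k : ℕ) (z : ℂ) : S.entry r r k z = S.up r k z := by
  rcases lt_trichotomy k r with h | rfl | h
  · rw [S.entry_of_le h.le, if_neg h.ne', S.up_of_lt h]
  · rw [S.entry_of_le le_rfl, if_pos rfl, S.up_self]
  · simp only [S.entry_of_lt h, S.up_eq_cauchy h, S.down_self, Nat.sub_self, pow_zero, one_mul]

lemma entry_succ_eq_sub {r i : ℕ} (hi : i ≤ r) (k : ℕ) {z : ℂ} (hz : z ∉ S.cut r)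
    (hz' : z ∉ S.cut (r + 1)) :
    S.entry (r + 1) i k z = S.entry r i k z - S.entry r i (r + 1) z * S.up (r + 1) k z := by
  rcases lt_trichotomy k (r + 1) with h | rfl | h
  · rw [S.entry_of_le h.le, S.entry_of_le (Nat.le_of_lt_succ h), S.up_of_lt h, mul_zero, sub_zero]
  · rw [S.up_self, mul_one, sub_self, S.entry_of_le le_rfl, if_neg (by omega)]
  · simp only [S.entry_of_lt h, S.entry_of_lt (Nat.lt_of_succ_lt h),
      S.entry_of_lt (Nat.lt_succ_self r),
      S.down_succ hi, S.up_eq_cauchy h, S.up_self, mul_one]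
    rw [cauchy_cauchy_mul (S.gen r).carried (S.gen (r + 1 : ℕ)).carried (S.disjoint_interval r)
      (S.continuousOn_down r i) (S.continuousOn_up (r + 1) k) hz hz', Nat.succ_sub hi, pow_succ]
    ring

lemma isConjSymm_entry (r i k : ℕ) : IsConjSymm (S.entry r i k) := fun z => by
  rcases le_or_gt k r with h | h
  · simp only [S.entry_of_le h, apply_ite conj, map_one, map_zero]
  · simp only [S.entry_of_lt h, map_mul, map_pow, map_neg, map_one]
    rw [isConjSymm_cauchy fun t => by
      rw [Complex.mul_im, (S.isConjSymm_down r i).im_ofReal, (S.isConjSymm_up (r + 1) k).im_ofReal,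
        mul_zero, zero_mul, add_zero]]

lemma differentiableOn_entry (r i k : ℕ) : DifferentiableOn ℂ (S.entry r i k) (S.cut r)ᶜ := by
  unfold entry
  split_ifs
  · exact differentiableOn_const _
  · exact differentiableOn_const _
  · exact ((S.gen r).carried.differentiableOn_cauchy (S.continuousOn_down_mul_up r i k)).const_mul _

/-- The minor of the first `r + 1` rows of coefficients in the columns `P`. -/
def minor (r : ℕ) (P : Fin (r + 1) → ℕ) (z : ℂ) : ℂ :=
  (Matrix.of fun i j : Fin (r + 1) => S.entry r i (P j) z).det

lemma differentiableOn_minor (r : ℕ) (P : Fin (r + 1) → ℕ) :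
    DifferentiableOn ℂ (S.minor r P) (S.cut r)ᶜ := by
  unfold minor
  simp only [Matrix.det_apply]
  exact DifferentiableOn.fun_sum fun σ _ => DifferentiableOn.const_smul
    (DifferentiableOn.fun_finsetProd fun i _ => S.differentiableOn_entry _ _ _) _

lemma isConjSymm_minor (r : ℕ) (P : Fin (r + 1) → ℕ) : IsConjSymm (S.minor r P) := fun z => by
  rw [minor, minor, RingHom.map_det]
  congr 1
  ext i j
  exact S.isConjSymm_entry _ _ _ z

lemma minor_comp_perm (r : ℕ) (P : Fin (r + 1) → ℕ) (τ : Equiv.Perm (Fin (r + 1))) (z : ℂ) :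
    S.minor r (P ∘ τ) z = (Equiv.Perm.sign τ : ℤ) * S.minor r P z :=
  Matrix.det_permute' τ (Matrix.of fun i j : Fin (r + 1) => S.entry r i (P j) z)

/-- The rows of coefficients of level `r`, followed by the last row of level `r + 1`: off the two
cuts, the minors of both levels are minors of this matrix. -/
def row (r : ℕ) (z : ℂ) : Matrix (Fin (r + 2)) ℕ ℂ :=
  Matrix.of (Fin.snoc (fun (i : Fin (r + 1)) k => S.entry r i k z) fun k => S.up (r + 1) k z)

lemma row_castSucc (r : ℕ) (z : ℂ) (i : Fin (r + 1)) (k : ℕ) :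
    S.row r z i.castSucc k = S.entry r i k z := by simp [row]

lemma row_last (r : ℕ) (z : ℂ) (k : ℕ) : S.row r z (Fin.last _) k = S.up (r + 1) k z := by
  simp [row]

lemma minor_eq_det_row (r : ℕ) (P : Fin (r + 1) → ℕ) (z : ℂ) :
    S.minor r P z = ((S.row r z).submatrix Fin.castSucc P).det := by
  rw [minor]
  congr 1
  ext i j
  exact (S.row_castSucc r z i (P j)).symm

lemma minor_succ_eq_det_row (r : ℕ) (P : Fin (r + 2) → ℕ) {z : ℂ} (hz : z ∉ S.cut r)
    (hz' : z ∉ S.cut (r + 1)) : S.minor (r + 1) P z = ((S.row r z).submatrix id P).det := by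
  refine Matrix.det_eq_of_forall_row_eq_smul_add_const
    (Fin.snoc (fun i : Fin (r + 1) => -S.entry r i (r + 1) z) 0) (Fin.last _) (by simp) ?_
  refine Fin.lastCases (fun j => ?_) fun i j => ?_
  · simp [row_last, entry_self]
  · simp [row_castSucc, row_last, S.entry_succ_eq_sub (Nat.le_of_lt_succ i.2) _ hz hz',
      sub_eq_add_neg]

lemma minor_mul_minor (r : ℕ) (P : Fin r → ℕ) (x y w : ℕ) {z : ℂ} (hz : z ∉ S.cut r)
    (hz' : z ∉ S.cut (r + 1)) :
    S.minor r (vecCons x P) z * S.minor (r + 1) (vecCons y (vecCons w P)) z =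
      S.minor r (vecCons y P) z * S.minor (r + 1) (vecCons x (vecCons w P)) z +
      S.minor r (vecCons w P) z * S.minor (r + 1) (vecCons y (vecCons x P)) z := by
  simp only [S.minor_eq_det_row r, S.minor_succ_eq_det_row r _ hz hz']
  exact det_mul_det_vecCons (S.row r z) P x y w

end Chain

lemma ofReal_det {n : Type*} [DecidableEq n] [Fintype n] (M : Matrix n n ℝ) :
    (M.det : ℂ) = (M.map ((↑) : ℝ → ℂ)).det :=
  RingHom.map_det Complex.ofRealHom M

namespace Chain
variable (S : Chain)

/-- The moments which take the place of `entry` when the Cauchy kernel is replaced by the weight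
`ω`, see `entry_ofReal` and `tendsto_mul_entry`. -/
def moment (r : ℕ) (ω : ℝ → ℝ) (i k : ℕ) : ℝ :=
  if k ≤ r then if i = k then 1 else 0 else
    (-1) ^ (r - i) * ∫ t, (S.down r i t).re * ((S.up (r + 1) k t).re * ω t) ∂(S.gen r).measure

lemma moment_of_le {r : ℕ} (ω : ℝ → ℝ) (i : ℕ) {k : ℕ} (h : k ≤ r) :
    S.moment r ω i k = if i = k then 1 else 0 := if_pos h

lemma moment_of_lt {r : ℕ} (ω : ℝ → ℝ) (i : ℕ) {k : ℕ} (h : r < k) :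
    S.moment r ω i k = (-1) ^ (r - i) *
      ∫ t, (S.down r i t).re * ((S.up (r + 1) k t).re * ω t) ∂(S.gen r).measure := if_neg h.not_ge

lemma ofReal_moment_of_lt {r : ℕ} (ω : ℝ → ℝ) (i : ℕ) {k : ℕ} (h : r < k) :
    (S.moment r ω i k : ℂ) = (-1) ^ (r - i) *
      ∫ t, S.down r i t * S.up (r + 1) k t * (ω t : ℂ) ∂(S.gen r).measure := by
  rw [S.moment_of_lt ω i h, Complex.ofReal_mul, ← integral_complex_ofReal]
  push_cast
  simp only [(S.isConjSymm_down _ _).ofReal_re, (S.isConjSymm_up _ _).ofReal_re, mul_assoc]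

lemma sum_moment_mul_eq_integral {r i n : ℕ} {P : Fin n → ℕ} {ω : ℝ → ℝ}
    (hω : ContinuousOn ω (S.gen r).interval) (hi : ∀ j, i ≠ P j) (x : Fin n → ℝ) :
    ∑ j, S.moment r ω i (P j) * x j = (-1) ^ (r - i) * ∫ t, (S.down r i t).re *
      ((∑ j with r < P j, x j * (S.up (r + 1) (P j) t).re) * ω t) ∂(S.gen r).measure := by
  have hdown : ContinuousOn (fun t : ℝ => (S.down r i t).re) (S.gen r).interval :=
    Complex.continuous_re.comp_continuousOn (S.continuousOn_down r i)
  have hup : ∀ k, ContinuousOn (fun t : ℝ => (S.up (r + 1) k t).re) (S.gen r).interval := fun k =>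
    Complex.continuous_re.comp_continuousOn (S.continuousOn_up r k)
  simp only [Finset.sum_mul, Finset.mul_sum, mul_assoc, mul_left_comm _ (x _)]
  have hint : ∀ k, Integrable (fun t : ℝ => (S.down r i t).re * ((S.up (r + 1) k t).re * ω t))
      (S.gen r).measure := fun k => (S.gen r).carried.integrable (hdown.mul ((hup k).mul hω))
  rw [integral_finsetSum _ fun j _ => (hint (P j)).const_mul (x j), Finset.mul_sum,
    Finset.sum_filter]
  refine Finset.sum_congr rfl fun j _ => ?_
  split_ifs with hj
  · rw [S.moment_of_lt _ _ hj, integral_const_mul]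
    ring
  · rw [S.moment_of_le _ _ (not_lt.1 hj), if_neg (hi j), zero_mul]

lemma card_filter_lt_le_card_filter_forall_ne {r : ℕ} (P : Fin (r + 1) → ℕ) :
    (Finset.univ.filter fun j => r < P j).card ≤
      (Finset.univ.filter fun i : Fin (r + 1) => ∀ j, P j ≠ i).card := by
  set B : Finset (Fin (r + 1)) := {j | r < P j}
  set A : Finset (Fin (r + 1)) := {i | ∀ j, P j ≠ i}
  have hle : Aᶜ.card ≤ Bᶜ.card :=
    Finset.card_le_card_of_surjOn (fun j => Fin.ofNat (r + 1) (P j)) fun i hi => by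
      obtain ⟨j, hj⟩ : ∃ j, P j = i := by simpa [A] using hi
      exact ⟨j, by simp [B, hj, Nat.le_of_lt_succ i.2], Fin.ext (by simp [hj])⟩
  rw [Finset.card_compl, Finset.card_compl] at hle
  have := A.card_le_univ
  have := B.card_le_univ
  omega

/-- In the columns `k ≤ r` the moments are those of the identity matrix, so that the claim reduces
to the remaining columns and to the rows outside `P`; there it is a statement on Gram matrices. -/
lemma det_moment_ne_zero {r : ℕ} {P : Fin (r + 1) → ℕ} (hP : Function.Injective P) {ω : ℝ → ℝ}
    (hω : ContinuousOn ω (S.gen r).interval) (hω₀ : ∀ t ∈ (S.gen r).interval, ω t ≠ 0) :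
    (Matrix.of fun i j : Fin (r + 1) => S.moment r ω i (P j)).det ≠ 0 := by
  intro hdet
  obtain ⟨x, hx₀, hx⟩ := Matrix.exists_mulVec_eq_zero_iff.2 hdet
  replace hx : ∀ i : Fin (r + 1), ∑ j, S.moment r ω i (P j) * x j = 0 := congrFun hx
  set B : Finset (Fin (r + 1)) := {j | r < P j}
  set A : Finset (Fin (r + 1)) := {i | ∀ j, P j ≠ i}
  have hxB : ∀ j ∈ B, x j = 0 := by
    refine (S.gen r).eq_zero_of_integral_mul_eq_zero (A := A) (I := univ)
      (J := {j | r < P j}) (φ := fun i : Fin (r + 1) => S.down r i)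
      (ψ := fun j => S.up (r + 1) (P j))
      ((S.isChebyshev_down r).comp Fin.val_injective.injOn
        (fun i _ => Nat.le_of_lt_succ i.2) fun _ _ => rfl)
      ((S.isChebyshev_up (r + 1)).comp hP.injOn (fun j hj => hj) fun _ _ => rfl)
      (S.gen (r - 1)).isOpen_compl_cut
      (fun z hz => by rwa [mem_compl_iff, Generator.cut, conj_mem_cpx])
      (S.isOpen_compl_cut (r + 1)) (S.cut_subset_compl_pred r) (S.disjoint_cut r).subset_compl_right
      (subset_univ _) (by simp)
      (card_filter_lt_le_card_filter_forall_ne P) hω hω₀ fun i hi => ?_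
    have hPi : ∀ j, (i : ℕ) ≠ P j := fun j => ((Finset.mem_filter.1 hi).2 j).symm
    have hsum := S.sum_moment_mul_eq_integral (P := P) hω hPi x
    rwa [hx i, zero_eq_mul, or_iff_right (pow_ne_zero _ (by norm_num))] at hsum
  refine hx₀ (funext fun j => ?_)
  by_cases hj : r < P j
  · exact hxB j (by simpa [B] using hj)
  · have h := hx ⟨P j, by omega⟩
    rw [Finset.sum_eq_single j (fun l _ hlj => ?_) (by simp), S.moment_of_le _ _ (not_lt.1 hj),
      if_pos rfl, one_mul] at h
    · exact h
    · by_cases hl : r < P l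
      · rw [hxB l (by simpa [B] using hl), mul_zero]
      · rw [S.moment_of_le _ _ (not_lt.1 hl), if_neg (hP.ne hlj.symm), zero_mul]

lemma entry_ofReal {r : ℕ} (i k : ℕ) (x : ℝ) :
    S.entry r i k x = S.moment r (fun t => (x - t)⁻¹) i k := by
  rcases le_or_gt k r with h | h
  · rw [S.entry_of_le h, S.moment_of_le _ _ h]
    split_ifs <;> simp
  · rw [S.entry_of_lt h, S.ofReal_moment_of_lt _ _ h, cauchy]
    push_cast
    rfl

lemma minor_ofReal_ne_zero {r : ℕ} {P : Fin (r + 1) → ℕ} (hP : Function.Injective P) {x : ℝ}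
    (hx : x ∉ (S.gen r).interval) : S.minor r P x ≠ 0 := by
  have hne : ∀ t ∈ (S.gen r).interval, x - t ≠ 0 := fun t ht h =>
    hx (by rwa [sub_eq_zero.1 h])
  have h := S.det_moment_ne_zero hP (ω := fun t => (x - t)⁻¹)
    ((continuousOn_const.sub continuousOn_id).inv₀ hne) fun t ht => inv_ne_zero (hne t ht)
  rw [← Complex.ofReal_ne_zero] at h
  convert! h
  rw [minor, ofReal_det]
  congr 1
  ext i j
  exact S.entry_ofReal _ _ x

lemma tendsto_mul_entry (r i k : ℕ) :
    Tendsto (fun z => (if r < k then z else 1) * S.entry r i k z) (cocompact ℂ)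
      (𝓝 (S.moment r 1 i k)) := by
  rcases le_or_gt k r with h | h
  · simp only [S.entry_of_le h, S.moment_of_le _ _ h, if_neg h.not_gt, one_mul]
    split_ifs <;> simp
  · simp only [S.entry_of_lt h, S.ofReal_moment_of_lt _ _ h, if_pos h]
    have h := ((S.gen r).carried.tendsto_mul_cauchy
      (S.continuousOn_down_mul_up r i k)).const_mul ((-1) ^ (r - i))
    simpa only [mul_left_comm, Pi.one_apply, Complex.ofReal_one, mul_one] using h

/-- The number of columns in `P` beyond the `r`-th one, which is the order of decay of the minor. -/
def decay (r : ℕ) {n : ℕ} (P : Fin n → ℕ) : ℕ := (Finset.univ.filter fun j => r < P j).card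

lemma decay_vecCons (r k : ℕ) {n : ℕ} (P : Fin n → ℕ) :
    decay r (vecCons k P) = (if r < k then 1 else 0) + decay r P := by
  simp only [decay, Finset.card_filter, Fin.sum_univ_succ, Matrix.cons_val_zero,
    Matrix.cons_val_succ]
  rfl

lemma minor_isTheta {r : ℕ} {P : Fin (r + 1) → ℕ} (hP : Function.Injective P) :
    S.minor r P =Θ[cocompact ℂ] fun z => (z ^ decay r P)⁻¹ := by
  have hdet : ∀ z, S.minor r P z / (z ^ decay r P)⁻¹ =
      (Matrix.of fun i j : Fin (r + 1) =>
        (if r < P j then z else 1) * S.entry r i (P j) z).det := fun z => by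
    rw [minor, div_inv_eq_mul, mul_comm, decay, Finset.card_filter, ← Finset.prod_pow_eq_pow_sum]
    simp only [pow_ite, pow_one, pow_zero]
    exact (Matrix.det_mul_row (fun j => if r < P j then z else 1) _).symm
  refine (Asymptotics.isTheta_of_div_tendsto_nhds_ne_zero (c := ((Matrix.of
    fun i j : Fin (r + 1) => S.moment r 1 i (P j)).det : ℂ)) ?_ ?_).symm
  · refine Tendsto.congr (fun z => (hdet z).symm) ?_
    rw [ofReal_det]
    refine ((continuous_id.matrix_det).tendsto _).comp ?_
    exact tendsto_pi_nhds.2 fun i => tendsto_pi_nhds.2 fun j => S.tendsto_mul_entry r i (P j)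
  · exact Complex.ofReal_ne_zero.2
      (S.det_moment_ne_zero hP continuousOn_const fun _ _ => one_ne_zero)

end Chain

/-! ### Reciprocals of Cauchy transforms -/

section SpectralMeasure
open scoped InnerProductSpace
open ContinuousLinearMap (adjoint)
variable {H : Type*} [NormedAddCommGroup H] [InnerProductSpace ℂ H]

/-- The compression of `A` to the subspace `U`. -/
def compression (A : H →L[ℂ] H) (U : Submodule ℂ H) [U.HasOrthogonalProjection] : U →L[ℂ] U :=
  U.orthogonalProjectionOnto ∘L A ∘L U.subtypeL

section Compression
variable (U : Submodule ℂ H) [U.HasOrthogonalProjection]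

lemma compression_algebraMap (c : ℝ) :
    compression (algebraMap ℝ (H →L[ℂ] H) c) U = algebraMap ℝ (U →L[ℂ] U) c := by
  ext x
  simp [compression, Algebra.algebraMap_eq_smul_one, ← Complex.coe_smul]

lemma compression_mono {A B : H →L[ℂ] H} (hAB : A ≤ B) : compression A U ≤ compression B U := by
  rw [ContinuousLinearMap.le_def] at hAB ⊢
  simpa only [compression, ContinuousLinearMap.sub_comp, ContinuousLinearMap.comp_sub] using
    hAB.orthogonalProjectionOnto_comp U

end Compression

variable [CompleteSpace H] {A : H →L[ℂ] H}

lemma exists_integral_eq_inner_cfc (hA : IsSelfAdjoint A) (v : H) :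
    ∃ μ : Measure ℝ, IsCarriedBy μ (spectrum ℝ A) ∧ ∀ f : ℝ → ℝ, ContinuousOn f (spectrum ℝ A) →
      ((∫ t, f t ∂μ : ℝ) : ℂ) = ⟪v, cfc f A v⟫_ℂ := by
  have hspec : IsCompact (spectrum ℝ A) := ContinuousFunctionalCalculus.isCompact_spectrum A
  have : CompactSpace (spectrum ℝ A) := isCompact_iff_compactSpace.1 hspec
  let Λ : CompactlySupportedContinuousMap (spectrum ℝ A) ℝ →ₚ[ℝ] ℝ :=
    PositiveLinearMap.mk₀
      { toFun := fun f => (⟪v, cfcHom hA f.toContinuousMap v⟫_ℂ).re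
        map_add' := fun f g => by
          rw [← Complex.add_re, ← inner_add_right, ← add_apply, ← map_add]
          rfl
        map_smul' := fun c f => by
          rw [RingHom.id_apply, smul_eq_mul, ← Complex.re_ofReal_mul, ← inner_smul_right,
            Complex.coe_smul, ← smul_apply, ← map_smul]
          rfl } fun f hf => by
      have hpos : 0 ≤ cfcHom hA f.toContinuousMap := (cfcHom_nonneg_iff hA).2 hf
      exact ((ContinuousLinearMap.nonneg_iff_isPositive _).1 hpos).re_inner_nonneg_right v
  have : IsFiniteMeasure (RealRMK.rieszMeasure Λ) :=
    ⟨isCompact_univ.measure_lt_top⟩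
  refine ⟨(RealRMK.rieszMeasure Λ).map Subtype.val, ⟨inferInstance, hspec, ?_⟩, fun f hf => ?_⟩
  · rw [Measure.map_apply measurable_subtype_coe hspec.measurableSet.compl]
    simp
  · have hint := RealRMK.integral_rieszMeasure Λ
      (CompactlySupportedContinuousMap.continuousMapEquiv ⟨_, hf.domRestrict⟩)
    have hsymm := (cfc_predicate f A).isSymmetric.coe_re_inner_apply_self v
    rw [(MeasurableEmbedding.subtype_coe hspec.measurableSet).integral_map]
    rw [(cfc_predicate f A).isSymmetric] at hsymm
    refine Eq.trans (congrArg _ (hint.trans ?_)) hsymm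
    rw [cfc_apply f A]
    rfl

lemma cfc_mul_add_mul_sub_id_mul {p q : ℝ → ℝ} (hp : ContinuousOn p (spectrum ℝ A))
    (hq : ContinuousOn q (spectrum ℝ A)) (hA : IsSelfAdjoint A) (x y : ℝ) :
    cfc (fun t => x * p t + y * q t - t * p t) A = x • cfc p A + y • cfc q A - A * cfc p A := by
  rw [cfc_sub (fun t => x * p t + y * q t) (fun t => t * p t) A (by fun_prop) (by fun_prop),
    cfc_add (a := A) (fun t => x * p t) (fun t => y * q t) (by fun_prop) (by fun_prop),
    cfc_const_mul x p A, cfc_const_mul y q A, cfc_mul (fun t => t) p A (by fun_prop) hp,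
    cfc_id' ℝ A]

/-- The resolvent is obtained from the real and imaginary parts of the Cauchy kernel by the real
functional calculus. -/
lemma smul_one_sub_mul_cfc_add_cfc (hA : IsSelfAdjoint A) {z : ℂ} (hz : z ∉ cpx (spectrum ℝ A)) :
    (z • 1 - A) * (cfc (fun t : ℝ => ((z - t)⁻¹).re) A +
      Complex.I • cfc (fun t : ℝ => ((z - t)⁻¹).im) A) = 1 := by
  have hcont : ContinuousOn (fun t : ℝ => (z - t)⁻¹) (spectrum ℝ A) :=
    ContinuousOn.inv₀ (by fun_prop) fun t ht => sub_ofReal_ne_zero hz ht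
  set f : ℝ → ℝ := fun t => ((z - t)⁻¹).re
  set g : ℝ → ℝ := fun t => ((z - t)⁻¹).im
  have hf : ContinuousOn f (spectrum ℝ A) := Complex.continuous_re.comp_continuousOn hcont
  have hg : ContinuousOn g (spectrum ℝ A) := Complex.continuous_im.comp_continuousOn hcont
  have hmul : ∀ t ∈ spectrum ℝ A, (z.re - t) * f t - z.im * g t = 1 ∧
      (z.re - t) * g t + z.im * f t = 0 := fun t ht => by
    simpa [Complex.ext_iff, f, g] using mul_inv_cancel₀ (sub_ofReal_ne_zero hz ht)
  have hre : z.re • cfc f A + (-z.im) • cfc g A - A * cfc f A = 1 := by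
    rw [← cfc_mul_add_mul_sub_id_mul hf hg hA, ← cfc_one ℝ A]
    exact cfc_congr fun t ht => by
      rw [Pi.one_apply]
      linear_combination (hmul t ht).1
  have him : z.re • cfc g A + z.im • cfc f A - A * cfc g A = 0 := by
    rw [← cfc_mul_add_mul_sub_id_mul hg hf hA, ← cfc_zero ℝ A]
    exact cfc_congr fun t ht => by
      rw [Pi.zero_apply]
      linear_combination (hmul t ht).2
  calc (z • 1 - A) * (cfc f A + Complex.I • cfc g A)
      = (z.re • cfc f A + (-z.im) • cfc g A - A * cfc f A) +
        Complex.I • (z.re • cfc g A + z.im • cfc f A - A * cfc g A) := by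
        simp only [sub_mul, mul_add, smul_mul_assoc, one_mul, mul_smul_comm, ← Complex.coe_smul]
        match_scalars
        · linear_combination -Complex.re_add_im z
        · ring
        · linear_combination -Complex.I * Complex.re_add_im z + z.im * Complex.I_mul_I
        · ring
    _ = 1 := by rw [hre, him, smul_zero, add_zero]

lemma exists_resolvent (hA : IsSelfAdjoint A) (v : H) :
    ∃ μ : Measure ℝ, IsCarriedBy μ (spectrum ℝ A) ∧ ∀ z ∉ cpx (spectrum ℝ A),
      ∃ u, z • u - A u = v ∧ ⟪v, u⟫_ℂ = cauchy μ 1 z := by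
  obtain ⟨μ, hμ, hint⟩ := exists_integral_eq_inner_cfc hA v
  refine ⟨μ, hμ, fun z hz => ⟨cfc (fun t : ℝ => ((z - t)⁻¹).re) A v +
    Complex.I • cfc (fun t : ℝ => ((z - t)⁻¹).im) A v,
    DFunLike.congr_fun (smul_one_sub_mul_cfc_add_cfc hA hz) v, ?_⟩⟩
  have hcont : ContinuousOn (fun t : ℝ => (z - t)⁻¹) (spectrum ℝ A) :=
    ContinuousOn.inv₀ (by fun_prop) fun t ht => sub_ofReal_ne_zero hz ht
  rw [inner_add_right, inner_smul_right,
    ← hint (fun t => ((z - t)⁻¹).re) (Complex.continuous_re.comp_continuousOn hcont),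
    ← hint (fun t => ((z - t)⁻¹).im) (Complex.continuous_im.comp_continuousOn hcont), mul_comm]
  simp only [cauchy, Pi.one_apply, one_div]
  exact integral_re_add_im (hμ.integrable hcont)

lemma spectrum_subset_Icc (hA : IsSelfAdjoint A) {a b : ℝ} (ha : algebraMap ℝ _ a ≤ A)
    (hb : A ≤ algebraMap ℝ _ b) : spectrum ℝ A ⊆ Icc a b := fun t ht =>
  ⟨(algebraMap_le_iff_le_spectrum hA).1 ha t ht, (le_algebraMap_iff_spectrum_le hA).1 hb t ht⟩

lemma IsCarriedBy.mono {μ : Measure ℝ} {J J' : Set ℝ} (h : IsCarriedBy μ J) (hJ : J ⊆ J')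
    (hJ' : IsCompact J') : IsCarriedBy μ J' :=
  ⟨h.isFinite, hJ', measure_mono_null (compl_subset_compl.2 hJ) h.measure_compl⟩

lemma isSelfAdjoint_compression (U : Submodule ℂ H) [CompleteSpace U] (hA : IsSelfAdjoint A) :
    IsSelfAdjoint (compression A U) := by
  rw [compression, ← Submodule.adjoint_subtypeL]
  exact hA.adjoint_conj U.subtypeL

lemma spectrum_compression_subset_Icc (U : Submodule ℂ H) [CompleteSpace U]
    (hA : IsSelfAdjoint A) {a b : ℝ} (ha : algebraMap ℝ _ a ≤ A) (hb : A ≤ algebraMap ℝ _ b) :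
    spectrum ℝ (compression A U) ⊆ Icc a b :=
  spectrum_subset_Icc (isSelfAdjoint_compression U hA)
    (compression_algebraMap U a ▸ compression_mono U ha)
    (compression_algebraMap U b ▸ compression_mono U hb)

/-- The Schur complement formula for the entry `⟪e, (z - A)⁻¹ e⟫` of the resolvent. -/
lemma exists_schur_complement (hA : IsSelfAdjoint A) {a b : ℝ} (ha : algebraMap ℝ _ a ≤ A)
    (hb : A ≤ algebraMap ℝ _ b) {e : H} (he : ‖e‖ = 1) :
    ∃ μ : Measure ℝ, IsCarriedBy μ (Icc a b) ∧ ∀ z ∉ cpx (Icc a b),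
      ∃ w, ⟪e, w⟫_ℂ = 1 ∧ z • w - A w = (z - ⟪e, A e⟫_ℂ - cauchy μ 1 z) • e := by
  set U : Submodule ℂ H := (ℂ ∙ e)ᗮ
  have hspec : spectrum ℝ (compression A U) ⊆ Icc a b := spectrum_compression_subset_Icc U hA ha hb
  obtain ⟨μ, hμ, hres⟩ := exists_resolvent (isSelfAdjoint_compression U hA)
    (U.orthogonalProjectionOnto (A e))
  refine ⟨μ, hμ.mono hspec isCompact_Icc, fun z hz => ?_⟩
  obtain ⟨u, hu, huv⟩ := hres z fun h => hz (cpx_mono hspec h)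
  have heu : ⟪e, (u : H)⟫_ℂ = 0 := Submodule.mem_orthogonal_singleton_iff_inner_right.1 u.2
  have hee : ⟪e, e⟫_ℂ = 1 := by simp [inner_self_eq_norm_sq_to_K, he]
  have hproj : U.orthogonalProjectionOnto (z • (e + u) - A (e + u)) = 0 := by
    have hPe : U.orthogonalProjectionOnto e = 0 :=
      Submodule.orthogonalProjectionOnto_orthogonal_apply_eq_zero
        (Submodule.mem_span_singleton_self e)
    rw [map_sub, map_smul, map_add, map_add, map_add, hPe, zero_add,
      Submodule.orthogonalProjectionOnto_mem_subspace_eq_self, ← hu]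
    exact (by abel : z • u - ((z • u - compression A U u) + compression A U u) = 0)
  have hinner : ⟪e, z • (e + u) - A (e + u)⟫_ℂ = z - ⟪e, A e⟫_ℂ - cauchy μ 1 z := by
    have hsymm : ⟪e, A u⟫_ℂ = cauchy μ 1 z := by
      rw [← huv, Submodule.inner_orthogonalProjectionOnto_eq_of_mem_right]
      exact (hA.isSymmetric e u).symm
    rw [inner_sub_right, inner_smul_right, inner_add_right, map_add, inner_add_right, hee, heu,
      hsymm]
    ring
  refine ⟨e + u, by rw [inner_add_right, hee, heu, add_zero], ?_⟩
  obtain ⟨c, hc⟩ : ∃ c : ℂ, c • e = z • (e + u) - A (e + u) := by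
    rw [← Submodule.mem_span_singleton, ← Submodule.orthogonal_orthogonal (ℂ ∙ e)]
    exact Submodule.orthogonalProjectionOnto_eq_zero_iff.1 hproj
  rw [← hc, inner_smul_right, hee, mul_one] at hinner
  rw [← hc, hinner]

section MulOperator
variable {α : Type*} [MeasurableSpace α] {μ : Measure α} {r s : α → ℝ}
  {S T : Lp ℂ 2 μ →L[ℂ] Lp ℂ 2 μ}

lemma inner_apply_self_of_ae_eq_mul (hT : ∀ f, T f =ᵐ[μ] fun x => r x * f x) (f : Lp ℂ 2 μ) :
    ⟪T f, f⟫_ℂ = ((∫ x, r x * ‖f x‖ ^ 2 ∂μ : ℝ) : ℂ) := by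
  rw [L2.inner_def, ← integral_complex_ofReal]
  refine integral_congr_ae ((hT f).mono fun x hx => ?_)
  simp only [hx, RCLike.inner_apply, map_mul, Complex.conj_ofReal, Complex.ofReal_mul,
    Complex.ofReal_pow, ← Complex.mul_conj']
  ring

lemma isSelfAdjoint_of_ae_eq_mul (hT : ∀ f, T f =ᵐ[μ] fun x => r x * f x) : IsSelfAdjoint T := by
  rw [ContinuousLinearMap.isSelfAdjoint_iff_isSymmetric,
    LinearMap.isSymmetric_iff_inner_map_self_real]
  exact fun f => by
    rw [ContinuousLinearMap.coe_coe, inner_apply_self_of_ae_eq_mul hT, Complex.conj_ofReal]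

lemma le_of_ae_eq_mul (hS : ∀ f, S f =ᵐ[μ] fun x => r x * f x)
    (hT : ∀ f, T f =ᵐ[μ] fun x => s x * f x) (hrs : r ≤ᵐ[μ] s) : S ≤ T := by
  have hTS : ∀ f, (T - S) f =ᵐ[μ] fun x => ((s - r) x : ℝ) * f x := fun f => by
    filter_upwards [Lp.coeFn_sub (T f) (S f), hT f, hS f] with x hx hTx hSx
    rw [sub_apply, hx, Pi.sub_apply, hTx, hSx, Pi.sub_apply, Complex.ofReal_sub, sub_mul]
  refine (ContinuousLinearMap.le_def _ _).2 (ContinuousLinearMap.isPositive_iff_complex _ |>.2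
    fun f => ?_)
  rw [inner_apply_self_of_ae_eq_mul hTS]
  exact ⟨by simp, integral_nonneg_of_ae
    (hrs.mono fun x hx => mul_nonneg (sub_nonneg.2 hx) (sq_nonneg _))⟩

end MulOperator

lemma IsCarriedBy.exists_mul_operator {β : Measure ℝ} {a b : ℝ} (hβ : IsCarriedBy β (Icc a b)) :
    ∃ M : Lp ℂ 2 β →L[ℂ] Lp ℂ 2 β, (∀ f, M f =ᵐ[β] fun x => x * f x) ∧
      algebraMap ℝ _ a ≤ M ∧ M ≤ algebraMap ℝ _ b := by
  have hbdd : MemLp (fun x : ℝ => (x : ℂ)) ⊤ β := by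
    refine memLp_top_of_bound (by fun_prop) (max |a| |b|) (hβ.ae_mem.mono fun x hx => ?_)
    rw [Complex.norm_real]
    exact abs_le_max_abs_abs hx.1 hx.2
  set M := (ContinuousLinearMap.mul ℂ ℂ).holderL β ⊤ 2 2 hbdd.toLp
  have hM : ∀ f, M f =ᵐ[β] fun x => x * f x := fun f => by
    filter_upwards [(ContinuousLinearMap.mul ℂ ℂ).coeFn_holder (r := 2) hbdd.toLp f,
      hbdd.coeFn_toLp] with x hx hx'
    rw [← hx']
    exact hx
  have hsmul : ∀ (c : ℝ) (f : Lp ℂ 2 β), algebraMap ℝ (Lp ℂ 2 β →L[ℂ] Lp ℂ 2 β) c f =ᵐ[β]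
      fun x => c * f x := fun c f => Lp.coeFn_smul c f
  exact ⟨M, hM, le_of_ae_eq_mul (hsmul a) hM (hβ.ae_mem.mono fun x hx => hx.1),
    le_of_ae_eq_mul hM (hsmul b) (hβ.ae_mem.mono fun x hx => hx.2)⟩

/-- On `L²(β)`, the entry at the constant function `1` of the resolvent of the operator of
multiplication by the variable is `cauchy β 1`. -/
lemma IsCarriedBy.exists_cauchy_mul_eq_one {β : Measure ℝ} {a b : ℝ} (hβ : IsCarriedBy β (Icc a b))
    (hβ1 : IsProbabilityMeasure β) : ∃ (τ : Measure ℝ) (c : ℝ), IsCarriedBy τ (Icc a b) ∧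
      ∀ z ∉ cpx (Icc a b), cauchy β 1 z * (z - c - cauchy τ 1 z) = 1 := by
  obtain ⟨M, hM, ha, hb⟩ := hβ.exists_mul_operator
  have hMsa : IsSelfAdjoint M := isSelfAdjoint_of_ae_eq_mul hM
  set e : Lp ℂ 2 β := Lp.const 2 β 1
  have he : e =ᵐ[β] fun _ => 1 := Lp.coeFn_const ..
  obtain ⟨τ, hτ, hschur⟩ := exists_schur_complement hMsa ha hb (e := e)
    (by simp [e, Lp.norm_const])
  refine ⟨τ, (⟪e, M e⟫_ℂ).re, hτ, fun z hz => ?_⟩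
  have hreal : ((⟪e, M e⟫_ℂ).re : ℂ) = ⟪e, M e⟫_ℂ := hMsa.isSymmetric.coe_re_inner_self_apply e
  obtain ⟨w, hw, hzw⟩ := hschur z hz
  set κ := z - ⟪e, M e⟫_ℂ - cauchy τ 1 z
  have hae : ∀ᵐ x ∂β, ⟪e x, w x⟫_ℂ = κ * (1 / (z - x)) := by
    filter_upwards [he, hM w, hβ.ae_mem, Lp.coeFn_sub (z • w) (M w), Lp.coeFn_smul z w,
      Lp.coeFn_smul κ e] with x hex hMx hx hsub hsmul hκ
    rw [hzw, hκ, Pi.sub_apply, hsmul, hMx, Pi.smul_apply, Pi.smul_apply, hex] at hsub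
    simp only [RCLike.inner_apply, hex, map_one, mul_one, smul_eq_mul] at hsub ⊢
    rw [hsub, mul_one_div, ← sub_mul, mul_div_cancel_left₀ _ (sub_ofReal_ne_zero hz hx)]
  have hew : ⟪e, w⟫_ℂ = κ * cauchy β 1 z := (integral_congr_ae hae).trans (integral_const_mul ..)
  rw [hreal, mul_comm, ← hew, hw]

end SpectralMeasure

section Markov

lemma IsCarriedBy.exists_aeval_mul_cauchy_eq {τ : Measure ℝ} {J : Set ℝ} (hτ : IsCarriedBy τ J)
    {T : Finset ℝ} (hT : τ (T : Set ℝ)ᶜ = 0) : ∃ p R : ℝ[X], p ≠ 0 ∧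
      ∀ z ∉ cpx J, aeval z p * cauchy τ 1 z = aeval z R := by
  have := hτ.isFinite
  have hrestrict : τ.restrict T = τ := Measure.restrict_eq_self_of_ae_mem (ae_iff.2 hT)
  refine ⟨∏ t ∈ T, (X - C t), ∑ t ∈ T, C (τ.real {t}) * ∏ s ∈ T.erase t, (X - C s),
    (monic_prod_X_sub_C id T).ne_zero, fun z hz => ?_⟩
  have hint : IntegrableOn (fun t : ℝ => 1 / (z - t)) T τ := by
    rw [IntegrableOn, hrestrict]
    exact hτ.integrable (continuousOn_cauchy_kernel continuousOn_const hz)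
  have hcauchy : cauchy τ 1 z = ∑ t ∈ T, τ.real {t} • (1 / (z - t)) := by
    rw [← setIntegral_finset T hint, hrestrict]
    rfl
  rw [hcauchy, Finset.mul_sum, map_sum]
  refine Finset.sum_congr rfl fun t ht => ?_
  by_cases htJ : t ∈ J
  · have htz : z - t ≠ 0 := sub_ofReal_ne_zero hz htJ
    rw [← Finset.mul_prod_erase T _ ht]
    simp only [map_mul, map_sub, aeval_X, aeval_C, Complex.coe_algebraMap, Complex.real_smul]
    field_simp
  · simp [measureReal_def, measure_mono_null (singleton_subset_iff.2 htJ) hτ.measure_compl]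

lemma Generator.eq_zero_of_hasJump_zero (σ : Generator) {Q : ℝ[X]}
    (h : HasJump σ.measure σ.interval (fun _ => 0) fun t => aeval (t : ℂ) Q) : Q = 0 := by
  have haeval : ∀ x : ℝ, aeval (x : ℂ) Q = ((Q.eval x : ℝ) : ℂ) := fun x =>
    aeval_algebraMap_apply_eq_algebraMap_eval x Q
  by_contra hQ
  obtain ⟨S, -, hS, hS₀⟩ := σ.exists_zeros_of_hasJump (w := fun _ => 1) (G := fun _ => 0)
    (M := Q.natDegree + 1) (differentiable_const 1) (by simp) (by simp) (differentiableOn_const 0)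
    (Q.differentiable_aeval.continuous.comp Complex.continuous_ofReal).continuousOn
    (fun t _ => (congrArg Complex.im (haeval t)).trans (Complex.ofReal_im _))
    (h.congr fun _ _ => mul_zero _) (by simp)
  refine (hS ▸ card_le_degree_of_subset_roots (fun t ht => ?_) : Q.natDegree + 1 ≤ _).not_gt
    (Nat.lt_succ_self _)
  rw [mem_roots hQ, IsRoot.def, ← Complex.ofReal_eq_zero, ← haeval]
  exact hS₀ t ht

lemma Generator.eq_zero_of_mul_cauchy_eq (σ : Generator) {p Q : ℝ[X]}
    (h : ∀ z ∉ σ.cut, aeval z Q * cauchy σ.measure 1 z = aeval z p) : p = 0 := by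
  have hjump : HasJump σ.measure σ.interval (fun z => aeval z p) fun t => aeval (t : ℂ) Q * 1 :=
    HasJump.mul_add (f := cauchy σ.measure 1) (V := fun z => aeval z Q) (φ := fun _ => 1)
      ⟨fun _ => 0, differentiable_const 0, fun z _ => (zero_add _).symm⟩ σ.carried
      continuousOn_const isOpen_univ (subset_univ _) Q.differentiable_aeval.differentiableOn
      (differentiableOn_const 0) p.differentiable_aeval.differentiableOn fun z hz => by
        rw [h z hz.2, add_zero]
  obtain ⟨F, hF, hFeq⟩ := hjump
  simp only [mul_one] at hFeq
  have hQ : Q = 0 := σ.eq_zero_of_hasJump_zero ⟨fun z => F z - aeval z p,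
    hF.sub p.differentiable_aeval, fun z hz => by beta_reduce; rw [hFeq z hz]; ring⟩
  obtain ⟨B, hB⟩ := σ.isCompact.bddAbove
  refine p.eq_zero_of_infinite_isRoot ((Ioi_infinite B).mono fun x hx => ?_)
  have hxp := h x fun hxσ => (hB (ofReal_mem_cpx.1 hxσ)).not_gt hx
  rwa [hQ, map_zero, zero_mul, ← Complex.coe_algebraMap, aeval_algebraMap_apply_eq_algebraMap_eval,
    eq_comm, Complex.coe_algebraMap, Complex.ofReal_eq_zero] at hxp

lemma Generator.measure_compl_ne_zero_of_mul_cauchy_eq_one (β : Generator) {τ : Measure ℝ}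
    (hτ : IsCarriedBy τ β.interval) {L : ℝ[X]}
    (h : ∀ z ∉ β.cut, cauchy β.measure 1 z * (aeval z L - cauchy τ 1 z) = 1) (T : Finset ℝ) :
    τ (T : Set ℝ)ᶜ ≠ 0 := by
  intro hT
  obtain ⟨p, R, hp, hpR⟩ := hτ.exists_aeval_mul_cauchy_eq hT
  refine hp (β.eq_zero_of_mul_cauchy_eq (Q := p * L - R) fun z hz => ?_)
  simp only [map_sub, map_mul]
  linear_combination aeval z p * h z hz + cauchy β.measure 1 z * hpR z hz

/-- Up to a nonzero real factor, `f` is the Cauchy transform of a generating measure on `J`. -/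
def IsMarkov (J : Set ℝ) (f : ℂ → ℂ) : Prop :=
  ∃ κ : Generator, κ.interval = J ∧ ∃ s : ℝ, s ≠ 0 ∧ ∀ z ∉ cpx J, f z = s * cauchy κ.measure 1 z

namespace IsMarkov
variable {J : Set ℝ} {f : ℂ → ℂ}

lemma exists_isProbabilityMeasure (hf : IsMarkov J f) : ∃ κ : Generator,
    IsProbabilityMeasure κ.measure ∧ κ.interval = J ∧
      ∃ s : ℝ, s ≠ 0 ∧ ∀ z ∉ cpx J, f z = s * cauchy κ.measure 1 z := by
  obtain ⟨β, rfl, s, hs, hf⟩ := hf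
  have := β.carried.isFinite
  have : NeZero β.measure := ⟨fun h => β.measure_compl_ne_zero ∅ (by simp [h])⟩
  have hm : β.measure.real univ ≠ 0 := measureReal_univ_pos.ne'
  refine ⟨⟨(β.measure univ)⁻¹ • β.measure, β.interval, ⟨inferInstance, β.isCompact, ?_⟩,
    β.ordConnected, fun T => ?_⟩, inferInstance, rfl, s * β.measure.real univ,
    mul_ne_zero hs hm, fun z hz => ?_⟩
  · simp [β.carried.measure_compl]
  · simpa using β.measure_compl_ne_zero T
  · rw [hf z hz, cauchy, cauchy, integral_smul_measure, Complex.ofReal_mul, ENNReal.toReal_inv,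
      Complex.real_smul, Complex.ofReal_inv, mul_assoc, ← measureReal_def,
      mul_inv_cancel_left₀ (Complex.ofReal_ne_zero.2 hm)]

lemma exists_mul_add_eq_one (hf : IsMarkov J f) :
    ∃ E : ℂ → ℂ, Differentiable ℂ E ∧ ∃ g, IsMarkov J g ∧ ∀ z ∉ cpx J, f z * (E z + g z) = 1 := by
  obtain ⟨β, hβ, rfl, s, hs, hf⟩ := hf.exists_isProbabilityMeasure
  have hIcc : β.interval = Icc (sInf β.interval) (sSup β.interval) := eq_Icc_of_connected_compact
    ⟨β.interval_nonempty, β.ordConnected.isPreconnected⟩ β.isCompact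
  obtain ⟨τ, c, hτ, hβτ⟩ := (hIcc ▸ β.carried).exists_cauchy_mul_eq_one hβ
  rw [← hIcc] at hτ hβτ
  let κ : Generator := ⟨τ, β.interval, hτ, β.ordConnected,
    β.measure_compl_ne_zero_of_mul_cauchy_eq_one hτ (L := X - C c) (by simpa using! hβτ)⟩
  refine ⟨fun z => s⁻¹ * (z - c), by fun_prop, fun z => (-s⁻¹ : ℝ) * cauchy τ 1 z,
    ⟨κ, rfl, -s⁻¹, by simpa, fun z _ => rfl⟩, fun z hz => ?_⟩
  have hs' : (s : ℂ) * (s : ℂ)⁻¹ = 1 := mul_inv_cancel₀ (Complex.ofReal_ne_zero.2 hs)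
  rw [hf z hz]
  push_cast
  linear_combination hβτ z hz * s * (s : ℂ)⁻¹ + hs'

lemma ne_zero (hf : IsMarkov J f) {z : ℂ} (hz : z ∉ cpx J) : f z ≠ 0 := by
  obtain ⟨E, -, g, -, h⟩ := hf.exists_mul_add_eq_one
  exact left_ne_zero_of_mul_eq_one (h z hz)

end IsMarkov

lemma Generator.isMarkov_cauchy (σ : Generator) {ψ : ℝ → ℂ} (hψ : ContinuousOn ψ σ.interval)
    (hψ_im : ∀ t ∈ σ.interval, (ψ t).im = 0) (hψ₀ : ∀ t ∈ σ.interval, ψ t ≠ 0) :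
    IsMarkov σ.interval (cauchy σ.measure ψ) := by
  have hre : ContinuousOn (fun t => (ψ t).re) σ.interval :=
    Complex.continuous_re.comp_continuousOn hψ
  have hre₀ : ∀ t ∈ σ.interval, (ψ t).re ≠ 0 := fun t ht h => hψ₀ t ht (Complex.ext h (hψ_im t ht))
  obtain ⟨s, hs, hsψ⟩ : ∃ s : ℝ, s ≠ 0 ∧ ∀ t ∈ σ.interval, (ψ t).re = s * |(ψ t).re| := by
    rcases pos_or_neg_of_ne_zero σ.ordConnected hre hre₀ with h | h
    · exact ⟨1, one_ne_zero, fun t ht => by rw [abs_of_pos (h t ht), one_mul]⟩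
    · exact ⟨-1, by norm_num, fun t ht => by rw [abs_of_neg (h t ht), neg_one_mul, neg_neg]⟩
  have hmeas : AEMeasurable (fun t => ENNReal.ofReal |(ψ t).re|) σ.measure :=
    ((σ.carried.integrable hre).aestronglyMeasurable.aemeasurable.abs).ennreal_ofReal
  have hpos : ∀ᵐ t ∂σ.measure, ENNReal.ofReal |(ψ t).re| ≠ 0 :=
    σ.carried.ae_mem.mono fun t ht => by simp [hre₀ t ht]
  refine ⟨⟨σ.measure.withDensity fun t => ENNReal.ofReal |(ψ t).re|, σ.interval,
    ⟨isFiniteMeasure_withDensity (σ.carried.integrable hre.abs).lintegral_lt_top.ne, σ.isCompact,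
      withDensity_absolutelyContinuous _ _ σ.carried.measure_compl⟩,
    σ.ordConnected, fun T hT => ?_⟩, rfl, s, hs, fun z _ => ?_⟩
  · exact σ.measure_compl_ne_zero T (withDensity_absolutelyContinuous' hmeas hpos hT)
  · rw [← cauchy_const_mul, cauchy, cauchy, integral_withDensity_eq_integral_toReal_smul₀ hmeas
      (.of_forall fun _ => ENNReal.ofReal_lt_top)]
    refine σ.carried.integral_congr fun t ht => ?_
    have hψt : ψ t = s * |(ψ t).re| := by
      rw [← Complex.ofReal_mul, ← hsψ t ht]
      exact Complex.ext rfl (hψ_im t ht)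
    rw [ENNReal.toReal_ofReal (abs_nonneg _), Complex.real_smul, Pi.one_apply, mul_one,
      mul_div_assoc', mul_comm _ (s : ℂ), ← hψt]

end Markov

/-! ### Nonvanishing of the minors -/

namespace IsMarkov
variable {J : Set ℝ} {f g E : ℂ → ℂ}

lemma exists_hasJump_add (hg : IsMarkov J g) (hE : Differentiable ℂ E)
    (hf : ∀ z ∉ cpx J, f z = E z + g z) :
    ∃ κ : Generator, κ.interval = J ∧ ∃ s : ℝ, s ≠ 0 ∧ HasJump κ.measure J f fun _ => (s : ℂ) := by
  obtain ⟨κ, hκ, s, hs, hg⟩ := hg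
  refine ⟨κ, hκ, s, hs, E, hE, fun z hz => ?_⟩
  rw [hf z hz, hg z hz, ← cauchy_const_mul]
  simp only [Pi.one_apply, mul_one]

lemma of_hasJump {κ : Generator} {φ : ℝ → ℂ} (hf : HasJump κ.measure κ.interval f φ)
    (hφ : ContinuousOn φ κ.interval) (hφ_im : ∀ t ∈ κ.interval, (φ t).im = 0)
    (hφ₀ : ∀ t ∈ κ.interval, φ t ≠ 0) (hlim : Tendsto f (cocompact ℂ) (𝓝 0)) :
    IsMarkov κ.interval f := by
  obtain ⟨β, hβ, s, hs, h⟩ := κ.isMarkov_cauchy hφ hφ_im hφ₀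
  exact ⟨β, hβ, s, hs, fun z hz => by
    rw [hf.eq_cauchy_of_tendsto_zero κ.carried hφ hlim hz, h z hz]⟩

end IsMarkov

lemma IsChebyshev.ofReal_ne_zero {ι : Type*} {φ : ι → ℂ → ℂ} {I : Set ι} {O : Set ℂ}
    (h : IsChebyshev φ I O) (hO : IsOpen O) {i : ι} (hi : i ∈ I) {x : ℝ} (hx : (x : ℂ) ∈ O) :
    φ i x ≠ 0 := fun h₀ => by
  have hcard := h.card_real_zeros_lt (Q := {i}) (c := 1) (T := {x}) hO (by simpa) (by simp)
    (by simpa using ⟨hx, h₀⟩)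
  simp at hcard

lemma exists_le_notMem_range {r : ℕ} (P : Fin r → ℕ) : ∃ l ≤ r, l ∉ range P := by
  by_contra! h
  have hsub : Finset.range (r + 1) ⊆ Finset.univ.image P := fun l hl => by
    simpa using h l (Nat.lt_succ_iff.1 (Finset.mem_range.1 hl))
  simpa using (Finset.card_le_card hsub).trans Finset.card_image_le

lemma exists_gt_notMem_range {r : ℕ} (P : Fin r → ℕ) : ∃ l > r, l ∉ range P :=
  ((Ioi_infinite r).sdiff (finite_range P)).nonempty

lemma injective_vecCons_iff {α : Type*} {r : ℕ} {x : α} {P : Fin r → α} :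
    Function.Injective (vecCons x P) ↔ x ∉ range P ∧ Function.Injective P :=
  Fin.cons_injective_iff

lemma notMem_range_vecCons {α : Type*} {r : ℕ} {x y : α} {P : Fin r → α} :
    x ∉ range (vecCons y P) ↔ x ≠ y ∧ x ∉ range P := by
  simp only [Matrix.range_cons, singleton_union, mem_insert_iff, not_or, ne_eq]

lemma injective_vecCons_vecCons {α : Type*} {r : ℕ} {x y : α} {P : Fin r → α} (hxy : x ≠ y)
    (hx : x ∉ range P) (hy : y ∉ range P) (hP : Function.Injective P) :
    Function.Injective (vecCons x (vecCons y P)) :=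
  injective_vecCons_iff.2 ⟨notMem_range_vecCons.2 ⟨hxy, hx⟩, injective_vecCons_iff.2 ⟨hy, hP⟩⟩

lemma vecCons_comp_perm {α : Type*} {r : ℕ} (x : α) (P : Fin r → α) (τ : Equiv.Perm (Fin r)) :
    vecCons x (P ∘ τ) = vecCons x P ∘ Equiv.Perm.decomposeFin.symm (0, τ) := by
  funext i
  refine Fin.cases ?_ (fun i => ?_) i <;> simp

namespace Chain
variable (S : Chain)

lemma minor_vecCons_swap (r : ℕ) (P : Fin r → ℕ) (x y : ℕ) (z : ℂ) :
    S.minor (r + 1) (vecCons x (vecCons y P)) z = -S.minor (r + 1) (vecCons y (vecCons x P)) z :=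
  det_submatrix_id_vecCons_swap (Matrix.of fun (i : Fin (r + 2)) k => S.entry (r + 1) i k z) P x y

lemma minor_vecCons_comp_perm (r : ℕ) (x : ℕ) (P : Fin r → ℕ) (τ : Equiv.Perm (Fin r)) (z : ℂ) :
    S.minor r (vecCons x (P ∘ τ)) z = (Equiv.Perm.sign τ : ℤ) * S.minor r (vecCons x P) z := by
  rw [vecCons_comp_perm, minor_comp_perm, Equiv.Perm.decomposeFin.symm_sign, if_pos rfl, one_mul]

/-- The quotient of the minors with columns `k, P` and `q, P`. -/
def ratio (r : ℕ) (P : Fin r → ℕ) (k q : ℕ) (z : ℂ) : ℂ :=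
  S.minor r (vecCons k P) z / S.minor r (vecCons q P) z

/-- The points off the `r`-th cut at which the minor with columns `Q` does not vanish. -/
def regular (r : ℕ) (Q : Fin (r + 1) → ℕ) : Set ℂ := {z | z ∉ S.cut r ∧ S.minor r Q z ≠ 0}

lemma isOpen_regular (r : ℕ) (Q : Fin (r + 1) → ℕ) : IsOpen (S.regular r Q) :=
  (S.differentiableOn_minor r Q).continuousOn.isOpen_inter_preimage (S.isOpen_compl_cut r)
    isOpen_compl_singleton

lemma regular_vecCons_swap (r : ℕ) (P : Fin r → ℕ) (x y : ℕ) :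
    S.regular (r + 1) (vecCons x (vecCons y P)) = S.regular (r + 1) (vecCons y (vecCons x P)) := by
  simp only [regular, S.minor_vecCons_swap r P x y, neg_ne_zero]

lemma cut_subset_regular_succ {r : ℕ} {Q : Fin (r + 2) → ℕ} (hQ : Function.Injective Q) :
    S.cut r ⊆ S.regular (r + 1) Q := by
  rintro _ ⟨t, ht, rfl⟩
  have ht' := (S.disjoint_interval r).notMem_of_mem_left ht
  exact ⟨fun h => ht' (ofReal_mem_cpx.1 h), S.minor_ofReal_ne_zero hQ ht'⟩

lemma cut_succ_subset_regular {r : ℕ} {Q : Fin (r + 1) → ℕ} (hQ : Function.Injective Q) :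
    S.cut (r + 1) ⊆ S.regular r Q := by
  rintro _ ⟨t, ht, rfl⟩
  have ht' := (S.disjoint_interval r).notMem_of_mem_right ht
  exact ⟨fun h => ht' (ofReal_mem_cpx.1 h), S.minor_ofReal_ne_zero hQ ht'⟩

lemma differentiableOn_ratio (r : ℕ) (P : Fin r → ℕ) (k q : ℕ) :
    DifferentiableOn ℂ (S.ratio r P k q) (S.regular r (vecCons q P)) :=
  ((S.differentiableOn_minor r _).mono fun _ h => h.1).div
    ((S.differentiableOn_minor r _).mono fun _ h => h.1) fun _ h => h.2

lemma isConjSymm_ratio (r : ℕ) (P : Fin r → ℕ) (k q : ℕ) : IsConjSymm (S.ratio r P k q) :=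
  (S.isConjSymm_minor r _).div (S.isConjSymm_minor r _)

lemma ratio_isTheta {r k q : ℕ} {P : Fin r → ℕ} (hk : Function.Injective (vecCons k P))
    (hq : Function.Injective (vecCons q P)) :
    S.ratio r P k q =Θ[cocompact ℂ]
      fun z => (if r < q then z else 1) / (if r < k then z else 1) := by
  refine ((S.minor_isTheta hk).div (S.minor_isTheta hq)).trans_eventuallyEq ?_
  filter_upwards [(hasBasis_cocompact.mem_of_mem isCompact_singleton : ({0} : Set ℂ)ᶜ ∈ _)]
    with z (hz : z ≠ 0)
  rw [decay_vecCons, decay_vecCons]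
  split_ifs <;> field_simp <;> ring

lemma ratio_eq_mul_add {r : ℕ} (P : Fin r → ℕ) (x : ℕ) {y w : ℕ} {z : ℂ} (hz : z ∉ S.cut r)
    (hy : S.minor r (vecCons y P) z ≠ 0)
    (hyw : z ∈ S.regular (r + 1) (vecCons y (vecCons w P))) :
    S.ratio r P x y z = S.ratio (r + 1) (vecCons y P) x w z * S.ratio r P w y z +
      S.ratio (r + 1) (vecCons w P) x y z := by
  have hplucker := S.minor_mul_minor r P x y w hz hyw.1
  have hyw₀ := hyw.2
  rw [ratio, ratio, ratio, ratio, S.minor_vecCons_swap r P x y, S.minor_vecCons_swap r P w y,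
    neg_div_neg_eq]
  field_simp
  linear_combination hplucker

lemma hasJump_ratio_mul_ratio_succ {μ : Measure ℝ} {ψ : ℝ → ℂ} {r : ℕ} {P : Fin r → ℕ} {y w : ℕ}
    (hf : HasJump μ (S.gen r).interval (S.ratio r P w y) ψ)
    (hμ : IsCarriedBy μ (S.gen r).interval) (hψ : ContinuousOn ψ (S.gen r).interval)
    (hyw : Function.Injective (vecCons y (vecCons w P)))
    (hy : ∀ z ∉ S.cut r, S.minor r (vecCons y P) z ≠ 0) (x : ℕ) :
    HasJump μ (S.gen r).interval (S.ratio r P x y)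
      fun t => S.ratio (r + 1) (vecCons y P) x w t * ψ t :=
  hf.mul_add (V := S.ratio (r + 1) (vecCons y P) x w) (E := S.ratio (r + 1) (vecCons w P) x y)
    hμ hψ (S.isOpen_regular (r + 1) _) (S.cut_subset_regular_succ hyw)
    (S.regular_vecCons_swap r P y w ▸ S.differentiableOn_ratio _ _ _ _)
    (S.differentiableOn_ratio _ _ _ _)
    ((S.differentiableOn_ratio _ _ _ _).mono fun z hz => ⟨hz, hy z hz⟩)
    fun z hz => S.ratio_eq_mul_add P x hz.2 (hy z hz.2) hz.1

lemma hasJump_neg_ratio_mul {μ : Measure ℝ} {ψ : ℝ → ℂ} {r : ℕ} {P : Fin r → ℕ} {k p q : ℕ}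
    (hf : HasJump μ (S.gen (r + 1 : ℕ)).interval (S.ratio (r + 1) (vecCons k P) q p) ψ)
    (hμ : IsCarriedBy μ (S.gen (r + 1 : ℕ)).interval)
    (hψ : ContinuousOn ψ (S.gen (r + 1 : ℕ)).interval) (hk : Function.Injective (vecCons k P))
    (hkp : ∀ z ∉ S.cut (r + 1), S.minor (r + 1) (vecCons k (vecCons p P)) z ≠ 0) :
    HasJump μ (S.gen (r + 1 : ℕ)).interval (S.ratio (r + 1) (vecCons p P) q k)
      fun t => -S.ratio r P p k t * ψ t :=
  hf.mul_add (V := fun z => -S.ratio r P p k z) (E := S.ratio r P q k) hμ hψ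
    (S.isOpen_regular r _) (S.cut_succ_subset_regular hk) (S.differentiableOn_ratio _ _ _ _).neg
    (S.differentiableOn_ratio _ _ _ _)
    ((S.differentiableOn_ratio _ _ _ _).mono fun z hz => ⟨hz, hkp z hz⟩) fun z hz => by
      rw [S.ratio_eq_mul_add P q hz.1.1 hz.1.2 ⟨hz.2, hkp z hz.2⟩]
      ring

lemma ratio_ofReal_ne_zero {r k q : ℕ} {P : Fin r → ℕ} (hk : Function.Injective (vecCons k P))
    (hq : Function.Injective (vecCons q P)) {x : ℝ} (hx : x ∉ (S.gen r).interval) :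
    S.ratio r P k q x ≠ 0 :=
  div_ne_zero (S.minor_ofReal_ne_zero hk hx) (S.minor_ofReal_ne_zero hq hx)

/-- The column `k` is a pivot for the columns `P` when the minor with columns `k, P` does not
vanish off the cut, and dividing by it turns the minors with columns `q, P`, for the large `q`,
into Cauchy transforms of measures of constant sign. -/
structure IsPivot (r k : ℕ) (P : Fin r → ℕ) : Prop where
  ne_zero : ∀ z ∉ S.cut r, S.minor r (vecCons k P) z ≠ 0
  isMarkov_ratio : ∀ q, r < q → q ∉ range P → IsMarkov (S.gen r).interval (S.ratio r P q k)

variable {S} in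
lemma IsPivot.minor_ne_zero {r k q : ℕ} {P : Fin r → ℕ} (h : S.IsPivot r k P) (hq : r < q)
    (hqP : q ∉ range P) {z : ℂ} (hz : z ∉ S.cut r) : S.minor r (vecCons q P) z ≠ 0 :=
  (div_ne_zero_iff.1 ((h.isMarkov_ratio q hq hqP).ne_zero hz)).1

variable {S} in
lemma IsPivot.exists_hasJump_ratio {r k q : ℕ} {P : Fin r → ℕ} (h : S.IsPivot r k P) (hq : r < q)
    (hqP : q ∉ range P) : ∃ κ : Generator, κ.interval = (S.gen r).interval ∧ ∃ s : ℝ, s ≠ 0 ∧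
      HasJump κ.measure (S.gen r).interval (S.ratio r P k q) fun _ => (s : ℂ) := by
  obtain ⟨E, hE, g, hg, hinv⟩ := (h.isMarkov_ratio q hq hqP).exists_mul_add_eq_one
  refine hg.exists_hasJump_add hE fun z hz => ?_
  rw [eq_inv_of_mul_eq_one_right (hinv z hz), ratio, ratio, inv_div]

lemma isPivot_of_comp_perm {r k : ℕ} {P : Fin r → ℕ} (τ : Equiv.Perm (Fin r))
    (h : S.IsPivot r k (P ∘ τ)) : S.IsPivot r k P := by
  have hsign : ((Equiv.Perm.sign τ : ℤ) : ℂ) ≠ 0 := Int.cast_ne_zero.2 (Units.ne_zero _)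
  refine ⟨fun z hz h₀ => h.ne_zero z hz ?_, fun q hq hqP => ?_⟩
  · rw [minor_vecCons_comp_perm, h₀, mul_zero]
  · have hratio : S.ratio r (P ∘ τ) q k = S.ratio r P q k := funext fun z => by
      rw [ratio, ratio, minor_vecCons_comp_perm, minor_vecCons_comp_perm,
        mul_div_mul_left _ _ hsign]
    rw [← hratio]
    exact h.isMarkov_ratio q hq (by rwa [EquivLike.range_comp])

lemma up_ofReal_ne_zero {r q : ℕ} (h : r < q) {t : ℝ} (ht : t ∈ (S.gen r).interval) :
    S.up (r + 1) q t ≠ 0 :=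
  (S.isChebyshev_up (r + 1)).ofReal_ne_zero (S.isOpen_compl_cut (r + 1)) h fun ht' =>
    (S.disjoint_interval r).notMem_of_mem_left ht (ofReal_mem_cpx.1 ht')

lemma down_ofReal_ne_zero {r k : ℕ} (h : k ≤ r) {t : ℝ} (ht : t ∈ (S.gen r).interval) :
    S.down r k t ≠ 0 :=
  (S.isChebyshev_down r).ofReal_ne_zero (S.gen (r - 1)).isOpen_compl_cut h
    (S.cut_subset_compl_pred r (ofReal_mem_cpx.2 ht))

lemma isMarkov_entry {r k q : ℕ} (hk : k ≤ r) (hq : r < q) :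
    IsMarkov (S.gen r).interval (S.entry r k q) := by
  have hent : S.entry r k q = cauchy (S.gen r).measure fun t =>
      (-1) ^ (r - k) * (S.down r k t * S.up (r + 1) q t) :=
    funext fun z => by rw [S.entry_of_lt hq, ← cauchy_const_mul]
  rw [hent]
  refine (S.gen r).isMarkov_cauchy (continuousOn_const.mul (S.continuousOn_down_mul_up r k q))
    (fun t _ => ?_) fun t ht => mul_ne_zero (by simp)
      (mul_ne_zero (S.down_ofReal_ne_zero hk ht) (S.up_ofReal_ne_zero hq ht))
  rw [← (S.isConjSymm_down r k).ofReal_re, ← (S.isConjSymm_up (r + 1) q).ofReal_re]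
  norm_cast

lemma decay_eq_zero_iff {r n : ℕ} {P : Fin n → ℕ} : decay r P = 0 ↔ ∀ j, P j ≤ r := by
  simp [decay, Finset.filter_eq_empty_iff]

lemma exists_minor_eq_entry_mul {r k : ℕ} {P : Fin r → ℕ} (hP : ∀ j, P j ≤ r) (hk : k ≤ r)
    (hkP : k ∉ range P) : ∃ c : ℂ, ∀ x z, S.minor r (vecCons x P) z = S.entry r k x z * c := by
  let i₀ : Fin (r + 1) := ⟨k, Nat.lt_succ_of_le hk⟩
  refine ⟨(-1) ^ k * (Matrix.of fun i j : Fin r =>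
    if (i₀.succAbove i : ℕ) = P j then (1 : ℂ) else 0).det, fun x z => ?_⟩
  rw [minor, Matrix.det_succ_row _ i₀, Fin.sum_univ_succ, Finset.sum_eq_zero fun j _ => ?_,
    add_zero]
  · have hsub : (Matrix.of fun i j : Fin (r + 1) => S.entry r i (vecCons x P j) z).submatrix
        i₀.succAbove (Fin.succAbove 0) =
          Matrix.of fun i j : Fin r => if (i₀.succAbove i : ℕ) = P j then (1 : ℂ) else 0 := by
      ext i j
      exact S.entry_of_le (hP j) z
    rw [hsub, Matrix.of_apply, Matrix.cons_val_zero, Fin.val_zero, add_zero]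
    ring
  · rw [Matrix.of_apply, Matrix.cons_val_succ, S.entry_of_le (hP j),
      if_neg fun h : k = P j => hkP ⟨j, h.symm⟩, mul_zero, zero_mul]

lemma isPivot_of_decay_eq_zero {r k : ℕ} {P : Fin r → ℕ} (hP : Function.Injective P)
    (hdecay : decay r P = 0) (hk : k ≤ r) (hkP : k ∉ range P) : S.IsPivot r k P := by
  obtain ⟨c, hc⟩ := S.exists_minor_eq_entry_mul (decay_eq_zero_iff.1 hdecay) hk hkP
  have hpivot : ∀ z, S.minor r (vecCons k P) z = c := fun z => by
    rw [hc, S.entry_of_le hk, if_pos rfl, one_mul]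
  have hc₀ : c ≠ 0 := by
    obtain ⟨t, ht⟩ := (S.gen (r + 1 : ℕ)).interval_nonempty
    rw [← hpivot t]
    exact S.minor_ofReal_ne_zero (injective_vecCons_iff.2 ⟨hkP, hP⟩)
      ((S.disjoint_interval r).notMem_of_mem_right ht)
  refine ⟨fun z _ => hpivot z ▸ hc₀, fun q hq _ => ?_⟩
  have hratio : S.ratio r P q k = S.entry r k q := funext fun z => by
    rw [ratio, hpivot, hc, mul_div_cancel_right₀ _ hc₀]
  exact hratio ▸ S.isMarkov_entry hk hq

lemma continuousOn_ratio_succ {r : ℕ} {P : Fin (r + 1) → ℕ} {q : ℕ} (k : ℕ)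
    (hq : Function.Injective (vecCons q P)) :
    ContinuousOn (fun t : ℝ => S.ratio (r + 1) P k q t) (S.gen r).interval :=
  continuousOn_comp_ofReal (S.differentiableOn_ratio _ _ _ _).continuousOn
    (S.cut_subset_regular_succ hq)

lemma continuousOn_ratio {r : ℕ} {P : Fin r → ℕ} {q : ℕ} (k : ℕ)
    (hq : Function.Injective (vecCons q P)) :
    ContinuousOn (fun t : ℝ => S.ratio r P k q t) (S.gen (r + 1 : ℕ)).interval :=
  continuousOn_comp_ofReal (S.differentiableOn_ratio _ _ _ _).continuousOn
    (S.cut_succ_subset_regular hq)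

lemma tendsto_ratio_zero {r k q : ℕ} {P : Fin r → ℕ} (hk : k ≤ r) (hq : r < q)
    (hkP : Function.Injective (vecCons k P)) (hqP : Function.Injective (vecCons q P)) :
    Tendsto (S.ratio r P q k) (cocompact ℂ) (𝓝 0) := by
  refine (S.ratio_isTheta hqP hkP).isBigO.trans_tendsto ?_
  simp only [if_neg hk.not_gt, if_pos hq, one_div, ← Metric.cobounded_eq_cocompact]
  exact tendsto_inv₀_cobounded

variable {S} in
/-- The reciprocal of the Markov function `ratio P' p l`, where `P' = k, P`, has a jump of constant
sign. By the Plücker relation with the next level it passes to `ratio P' q p`, and by the relation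
with the previous level to `ratio (p, P) q k`. -/
lemma IsPivot.isMarkov_ratio_swap {r k p l q : ℕ} {P : Fin r → ℕ}
    (h : S.IsPivot (r + 1) l (vecCons k P)) (hk : k ≤ r + 1) (hp : r + 1 < p) (hq : r + 1 < q)
    (hlpk : Function.Injective (vecCons l (vecCons p (vecCons k P))))
    (hqpk : Function.Injective (vecCons q (vecCons p (vecCons k P)))) :
    IsMarkov (S.gen (r + 1 : ℕ)).interval (S.ratio (r + 1) (vecCons p P) q k) := by
  obtain ⟨hplk, hkP, hpP, hkpP, hqpP, hpk⟩ :
      Function.Injective (vecCons p (vecCons l (vecCons k P))) ∧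
      Function.Injective (vecCons k P) ∧ Function.Injective (vecCons p P) ∧
      Function.Injective (vecCons k (vecCons p P)) ∧
      Function.Injective (vecCons q (vecCons p P)) ∧ p ∉ range (vecCons k P) := by
    simp only [injective_vecCons_iff, notMem_range_vecCons] at hlpk hqpk ⊢
    grind
  obtain ⟨κ, hκ, s, hs, hjump⟩ := h.exists_hasJump_ratio hp hpk
  have hφ := (S.continuousOn_ratio_succ q hlpk).mul (continuousOn_const (c := (s : ℂ)))
  have hjump' := S.hasJump_neg_ratio_mul (S.hasJump_ratio_mul_ratio_succ hjump (hκ ▸ κ.carried)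
    continuousOn_const hplk (fun z hz => h.minor_ne_zero hp hpk hz) q) (hκ ▸ κ.carried) hφ hkP
    fun z hz => by
      rw [minor_vecCons_swap, neg_ne_zero]
      exact h.minor_ne_zero hp hpk hz
  rw [← hκ] at hjump' ⊢
  refine IsMarkov.of_hasJump hjump' ?_ (fun t _ => ?_) (fun t ht => ?_)
    (S.tendsto_ratio_zero hk hq hkpP hqpP)
  · rw [hκ]
    exact (S.continuousOn_ratio p hkP).neg.mul hφ
  · simp [(S.isConjSymm_ratio _ _ _ _).im_ofReal]
  · rw [hκ] at ht
    exact mul_ne_zero (neg_ne_zero.2 (S.ratio_ofReal_ne_zero hpP hkP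
        ((S.disjoint_interval r).notMem_of_mem_right ht)))
      (mul_ne_zero (S.ratio_ofReal_ne_zero hqpk hlpk
        ((S.disjoint_interval (r + 1)).notMem_of_mem_left ht)) (Complex.ofReal_ne_zero.2 hs))

variable {S} in
lemma IsPivot.swap {r k p l : ℕ} {P : Fin r → ℕ} (h : S.IsPivot (r + 1) l (vecCons k P))
    (hk : k ≤ r + 1) (hp : r + 1 < p)
    (hlpk : Function.Injective (vecCons l (vecCons p (vecCons k P)))) :
    S.IsPivot (r + 1) k (vecCons p P) := by
  have hpk := (injective_vecCons_iff.1 hlpk).2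
  refine ⟨fun z hz => ?_, fun q hq hqP => ?_⟩
  · rw [minor_vecCons_swap, neg_ne_zero]
    exact h.minor_ne_zero hp (injective_vecCons_iff.1 hpk).1 hz
  · refine h.isMarkov_ratio_swap hk hp hq hlpk (injective_vecCons_iff.2 ⟨?_, hpk⟩)
    simp only [notMem_range_vecCons] at hqP ⊢
    exact ⟨hqP.1, by omega, hqP.2⟩

lemma decay_comp_perm {r n : ℕ} (P : Fin n → ℕ) (τ : Equiv.Perm (Fin n)) :
    decay r (P ∘ τ) = decay r P := by
  simp only [decay, Finset.card_filter]
  exact Equiv.sum_comp τ fun j => if r < P j then 1 else 0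

theorem isPivot {r k : ℕ} {P : Fin r → ℕ} (hP : Function.Injective P) (hk : k ≤ r)
    (hkP : k ∉ range P) : S.IsPivot r k P := by
  induction hα : decay r P generalizing r k P with
  | zero => exact S.isPivot_of_decay_eq_zero hP hα hk hkP
  | succ α ih =>
    obtain ⟨j, hj⟩ : ∃ j, r < P j := by
      by_contra! h
      simp [decay_eq_zero_iff.2 h] at hα
    obtain _ | r := r
    · exact j.elim0
    refine S.isPivot_of_comp_perm (Equiv.swap 0 j) ?_
    obtain ⟨p, Q, hQ⟩ : ∃ p Q, P ∘ Equiv.swap 0 j = vecCons p Q :=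
      ⟨_, _, (Matrix.cons_head_tail _).symm⟩
    have hp : r + 1 < p := by
      rwa [← Matrix.cons_val_zero p Q, ← hQ, Function.comp_apply, Equiv.swap_apply_left]
    have hinj := hP.comp (Equiv.swap 0 j).injective
    rw [← EquivLike.range_comp P (Equiv.swap 0 j)] at hkP
    rw [← decay_comp_perm P (Equiv.swap 0 j)] at hα
    rw [hQ] at hinj hkP hα ⊢
    rw [decay_vecCons, if_pos hp] at hα
    simp only [injective_vecCons_iff, notMem_range_vecCons] at hinj hkP
    obtain ⟨l, hl, hlQ⟩ := exists_le_notMem_range (vecCons k Q)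
    have hkQ : Function.Injective (vecCons k Q) := injective_vecCons_iff.2 ⟨hkP.2, hinj.2⟩
    refine (ih hkQ hl hlQ ?_).swap hk hp ?_
    · rw [decay_vecCons, if_neg hk.not_gt, zero_add]
      exact add_left_cancel (hα.trans (add_comm α 1))
    · simp only [injective_vecCons_iff, notMem_range_vecCons] at hlQ ⊢
      exact ⟨⟨by omega, hlQ⟩, ⟨by omega, hinj.1⟩, hkP.2, hinj.2⟩

theorem minor_ne_zero {r k : ℕ} {P : Fin r → ℕ} (hP : Function.Injective P) (hkP : k ∉ range P)
    {z : ℂ} (hz : z ∉ S.cut r) : S.minor r (vecCons k P) z ≠ 0 := by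
  rcases le_or_gt k r with hk | hk
  · exact (S.isPivot hP hk hkP).ne_zero z hz
  · obtain ⟨l, hl, hlP⟩ := exists_le_notMem_range P
    exact (S.isPivot hP hl hlP).minor_ne_zero hk hkP hz

lemma exists_hasJump_ratio {r q : ℕ} {P : Fin r → ℕ} (hP : Function.Injective P)
    (hq : q ∉ range P) : ∃ k, k ∉ range P ∧ k ≠ q ∧
      ∃ κ : Generator, κ.interval = (S.gen r).interval ∧ ∃ s : ℝ, s ≠ 0 ∧
        HasJump κ.measure (S.gen r).interval (S.ratio r P k q) fun _ => (s : ℂ) := by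
  rcases le_or_gt q r with hqr | hqr
  · obtain ⟨k, hk, hkP⟩ := exists_gt_notMem_range P
    exact ⟨k, hkP, by omega, ((S.isPivot hP hqr hq).isMarkov_ratio k hk hkP).exists_hasJump_add
      (differentiable_const 0) fun z _ => (zero_add _).symm⟩
  · obtain ⟨k, hk, hkP⟩ := exists_le_notMem_range P
    exact ⟨k, hkP, by omega, (S.isPivot hP hk hkP).exists_hasJump_ratio hqr hq⟩

end Chain

/-! ### Zeros of linear forms -/

lemma isConjSymm_aeval (p : ℝ[X]) : IsConjSymm fun z => aeval z p := fun z => aeval_conj p z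

lemma pow_mul_aeval_mul_isLittleO_nodal {f : ℂ → ℂ} {b M N : ℕ} {s : Multiset ℂ} {p : ℝ[X]}
    (hp : p.degree < N) (hf : f =O[cocompact ℂ] fun z => z ^ b) (hs : M + N + b ≤ s.card) :
    (fun z => z ^ M * (aeval z p * f z)) =o[cocompact ℂ] (nodal s).eval := by
  simp only [← mul_assoc]
  refine ((Asymptotics.isBigO_refl (fun z : ℂ => z ^ M * aeval z p) _).mul hf).trans_isLittleO ?_
  have heq : (fun z : ℂ => z ^ M * aeval z p * z ^ b) =
      (X ^ (M + b) * p.map (algebraMap ℝ ℂ)).eval := by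
    ext z
    rw [eval_mul, eval_pow, eval_X, eval_map_algebraMap, pow_add]
    ring
  rw [heq]
  refine eval_isLittleO_nodal ?_
  rw [degree_mul, degree_X_pow, degree_map]
  refine (WithBot.add_lt_add_left (WithBot.natCast_ne_bot _) hp).trans_le ?_
  exact_mod_cast (by omega : M + b + N ≤ s.card)

lemma exists_forall_lt_or_eq_and_le (n : ℕ → ℕ) {I : Finset ℕ} (hI : I.Nonempty) :
    ∃ q ∈ I, ∀ k ∈ I, n k < n q ∨ n k = n q ∧ q ≤ k := by
  obtain ⟨q, hq, hmax⟩ := I.exists_max_image (fun k => toLex (n k, OrderDual.toDual k)) hI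
  exact ⟨q, hq, fun k hk => by simpa [Prod.Lex.toLex_le_toLex] using hmax k hk⟩

namespace Chain
variable (S : Chain)

/-- The linear form `∑ h_k D_k`, `k ∈ I`, in the minors `D_k` with columns `k, P`. For `r = 0` this
is the form in the transforms of the Nikishin system itself. -/
def form (h : ℕ → ℝ[X]) (I : Finset ℕ) (r : ℕ) (P : Fin r → ℕ) (z : ℂ) : ℂ :=
  ∑ k ∈ I, aeval z (h k) * S.minor r (vecCons k P) z

section
variable (h : ℕ → ℝ[X]) (I : Finset ℕ) (r : ℕ) (P : Fin r → ℕ)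

lemma differentiableOn_form : DifferentiableOn ℂ (S.form h I r P) (S.cut r)ᶜ :=
  DifferentiableOn.fun_sum fun k _ =>
    (h k).differentiable_aeval.differentiableOn.fun_mul (S.differentiableOn_minor r _)

lemma isConjSymm_form : IsConjSymm (S.form h I r P) :=
  IsConjSymm.sum fun k _ => (isConjSymm_aeval (h k)).mul (S.isConjSymm_minor r _)

lemma differentiableOn_form_div_minor (Q : Fin (r + 1) → ℕ) :
    DifferentiableOn ℂ (fun z => S.form h I r P z / S.minor r Q z) (S.regular r Q) :=
  ((S.differentiableOn_form h I r P).mono fun _ h => h.1).fun_div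
    ((S.differentiableOn_minor r Q).mono fun _ h => h.1) fun _ h => h.2

lemma form_div_minor (q : ℕ) (z : ℂ) : S.form h I r P z / S.minor r (vecCons q P) z =
    ∑ k ∈ I, aeval z (h k) * S.ratio r P k q z := by
  simp only [form, ratio, Finset.sum_div, mul_div_assoc]

variable {I} in
lemma form_erase {q : ℕ} (hq : q ∈ I) :
    S.form h (I.erase q) (r + 1) (vecCons q P) = S.form h I (r + 1) (vecCons q P) := by
  ext z
  have hqq := self_eq_neg.1 (S.minor_vecCons_swap r P q q z)
  rw [form, form, ← Finset.add_sum_erase I _ hq, hqq, mul_zero, zero_add]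

variable {r} in
lemma form_div_minor_eq_mul_add {q k : ℕ} {z : ℂ} (hz : z ∉ S.cut r)
    (hq : S.minor r (vecCons q P) z ≠ 0) (hqk : z ∈ S.regular (r + 1) (vecCons q (vecCons k P))) :
    S.form h I r P z / S.minor r (vecCons q P) z =
      S.form h I (r + 1) (vecCons q P) z / S.minor (r + 1) (vecCons k (vecCons q P)) z *
        S.ratio r P k q z +
      S.form h I (r + 1) (vecCons k P) z / S.minor (r + 1) (vecCons q (vecCons k P)) z := by
  simp only [form_div_minor, Finset.sum_mul, ← Finset.sum_add_distrib]
  refine Finset.sum_congr rfl fun j _ => ?_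
  rw [S.ratio_eq_mul_add P j hz hq hqk]
  ring

end

lemma hasJump_form_div_minor {μ : Measure ℝ} {ψ : ℝ → ℂ} {r k q : ℕ} {P : Fin r → ℕ}
    (hf : HasJump μ (S.gen r).interval (S.ratio r P k q) ψ)
    (hμ : IsCarriedBy μ (S.gen r).interval) (hψ : ContinuousOn ψ (S.gen r).interval)
    (hqk : Function.Injective (vecCons q (vecCons k P)))
    (hq : ∀ z ∉ S.cut r, S.minor r (vecCons q P) z ≠ 0) (h : ℕ → ℝ[X]) (I : Finset ℕ) :
    HasJump μ (S.gen r).interval (fun z => S.form h I r P z / S.minor r (vecCons q P) z) fun t =>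
      S.form h I (r + 1) (vecCons q P) t / S.minor (r + 1) (vecCons k (vecCons q P)) t * ψ t :=
  hf.mul_add
    (V := fun z =>
      S.form h I (r + 1) (vecCons q P) z / S.minor (r + 1) (vecCons k (vecCons q P)) z)
    hμ hψ (S.isOpen_regular (r + 1) _) (S.cut_subset_regular_succ hqk)
    (S.regular_vecCons_swap r P q k ▸ S.differentiableOn_form_div_minor h I (r + 1) _ _)
    (S.differentiableOn_form_div_minor h I (r + 1) _ _)
    ((S.differentiableOn_form h I r P).fun_div (S.differentiableOn_minor r _) hq)
    fun z hz => S.form_div_minor_eq_mul_add h I P hz.2 (hq z hz.2) hz.1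

lemma exists_ratio_isBigO_pow {r k q : ℕ} {P : Fin r → ℕ} (hk : Function.Injective (vecCons k P))
    (hq : Function.Injective (vecCons q P)) {N M : ℕ} (h : N < M ∨ N = M ∧ q ≤ k) :
    ∃ b, N + b ≤ M ∧ S.ratio r P k q =O[cocompact ℂ] fun z => z ^ b := by
  have hratio := (S.ratio_isTheta hk hq).isBigO
  have hone : ∀ {f : ℂ → ℂ} {c : ℂ}, Tendsto f (cocompact ℂ) (𝓝 c) →
      f =O[cocompact ℂ] fun z => z ^ 0 := fun hf => by simpa only [pow_zero] using hf.isBigO_one ℂ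
  split_ifs at hratio with hqr hkr hkr
  · refine ⟨0, by omega, hratio.trans (hone (c := 1) (tendsto_const_nhds.congr' ?_))⟩
    filter_upwards [isCompact_singleton.compl_mem_cocompact] with z (hz : z ≠ 0)
    rw [div_self hz]
  · exact ⟨1, by omega, by simpa using hratio⟩
  · refine ⟨0, by omega, hratio.trans (hone (c := 0) ?_)⟩
    simpa [← Metric.cobounded_eq_cocompact] using tendsto_inv₀_cobounded (α := ℂ)
  · exact ⟨0, by omega, by simpa using hratio⟩

lemma form_div_minor_isLittleO {r q : ℕ} {P : Fin r → ℕ} {h : ℕ → ℝ[X]} {I : Finset ℕ} {n : ℕ → ℕ}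
    (hI : ∀ k ∈ I, Function.Injective (vecCons k P)) (hdeg : ∀ k ∈ I, (h k).degree < n k)
    (hq : q ∈ I) (hqmax : ∀ k ∈ I, n k < n q ∨ n k = n q ∧ q ≤ k) {s : Multiset ℂ} {M : ℕ}
    (hs : M + n q ≤ s.card) :
    (fun z => z ^ M * (S.form h I r P z / S.minor r (vecCons q P) z))
      =o[cocompact ℂ] (nodal s).eval := by
  simp only [form_div_minor, Finset.mul_sum]
  refine Asymptotics.IsLittleO.fun_sum fun k hk => ?_
  obtain ⟨b, hb, hO⟩ := S.exists_ratio_isBigO_pow (hI k hk) (hI q hq) (hqmax k hk)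
  exact pow_mul_aeval_mul_isLittleO_nodal (hdeg k hk) hO (by omega)

lemma exists_hasZeros_form_erase {r q : ℕ} {P : Fin r → ℕ} {h : ℕ → ℝ[X]} {I : Finset ℕ}
    {n : ℕ → ℕ} (hI : ∀ k ∈ I, Function.Injective (vecCons k P))
    (hdeg : ∀ k ∈ I, (h k).degree < n k) (hq : q ∈ I)
    (hqmax : ∀ k ∈ I, n k < n q ∨ n k = n q ∧ q ≤ k) {s : Multiset ℂ} (hs : s.map conj = s)
    (hz : HasZeros (S.form h I r P) (S.cut r)ᶜ s) (hcard : ∑ k ∈ I, n k ≤ s.card) :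
    ∃ T : Finset ℝ, T.card = ∑ k ∈ I.erase q, n k ∧
      HasZeros (S.form h (I.erase q) (r + 1) (vecCons q P)) (S.cut (r + 1))ᶜ (realMultiset T) := by
  obtain ⟨hqP, hP⟩ := injective_vecCons_iff.1 (hI q hq)
  have hq₀ : ∀ z ∉ S.cut r, S.minor r (vecCons q P) z ≠ 0 := fun z => S.minor_ne_zero hP hqP
  obtain ⟨k, hkP, hkq, κ, hκ, c, hc, hjump⟩ := S.exists_hasJump_ratio hP hqP
  have hJ := S.hasJump_form_div_minor hjump (hκ ▸ κ.carried) continuousOn_const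
    (injective_vecCons_vecCons hkq.symm hqP hkP hP) hq₀ h I
  rw [← S.form_erase h r P hq, ← hκ] at hJ
  have hreg := S.cut_subset_regular_succ (injective_vecCons_vecCons hkq hkP hqP hP)
  have hF := hz.div (S.differentiableOn_minor r _) hq₀
  rw [cut, ← show κ.cut = (S.gen r).cut from congrArg cpx hκ] at hF hreg
  obtain ⟨T, hT, hTcard, hT₀⟩ := κ.exists_zeros_of_hasZeros hs hF
    ((continuousOn_comp_ofReal
      (S.differentiableOn_form_div_minor h _ (r + 1) _ _).continuousOn hreg).mul continuousOn_const)
    (fun t _ => (((S.isConjSymm_form h _ _ _).div (S.isConjSymm_minor _ _)).mul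
      (isConjSymm_ofReal c)).im_ofReal t) hJ
    (S.form_div_minor_isLittleO hI hdeg hq hqmax ((Finset.sum_erase_add _ _ hq).trans_le hcard))
  refine ⟨T, hTcard, hasZeros_realMultiset (S.isOpen_compl_cut _)
    (S.differentiableOn_form h _ _ _) fun t ht => ?_⟩
  have hreg' := hreg (ofReal_mem_cpx.2 (hT ht))
  exact ⟨hreg'.1, by simpa [hreg'.2, hc] using hT₀ t ht⟩

lemma form_eq_aeval_mul_minor {r q : ℕ} (P : Fin r → ℕ) {h : ℕ → ℝ[X]} {I : Finset ℕ} (hq : q ∈ I)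
    (hh : ∀ k ∈ I.erase q, h k = 0) (z : ℂ) :
    S.form h I r P z = aeval z (h q) * S.minor r (vecCons q P) z := by
  rw [form, ← Finset.add_sum_erase I _ hq, Finset.sum_eq_zero fun k hk => by simp [hh k hk],
    add_zero]

lemma card_le_natDegree_of_hasZeros_form {r q : ℕ} {P : Fin r → ℕ} {h : ℕ → ℝ[X]} {I : Finset ℕ}
    (hqP : Function.Injective (vecCons q P)) (hq : q ∈ I) (hh : ∀ k ∈ I.erase q, h k = 0)
    (hq₀ : h q ≠ 0) {s : Multiset ℂ} (hz : HasZeros (S.form h I r P) (S.cut r)ᶜ s) :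
    s.card ≤ (h q).natDegree := by
  obtain ⟨hq', hP⟩ := injective_vecCons_iff.1 hqP
  have hminor : ∀ z ∈ (S.cut r)ᶜ, S.minor r (vecCons q P) z ≠ 0 := fun z => S.minor_ne_zero hP hq'
  obtain ⟨hs, H, hH, hHeq⟩ := hz.div (S.differentiableOn_minor r _) hminor
  rw [← natDegree_map (algebraMap ℝ ℂ)]
  refine HasZeros.card_le_natDegree (S.isOpen_compl_cut r)
    ((Polynomial.map_ne_zero_iff (algebraMap ℝ ℂ).injective).2 hq₀) ⟨hs, H, hH, fun z hz => ?_⟩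
  beta_reduce at hHeq ⊢
  rw [← hHeq z hz, eval_map_algebraMap, S.form_eq_aeval_mul_minor P hq hh,
    mul_div_cancel_right₀ _ (hminor z hz)]

theorem card_lt_of_hasZeros_form {r : ℕ} {P : Fin r → ℕ} {h : ℕ → ℝ[X]} {I : Finset ℕ}
    {n : ℕ → ℕ} (hI : ∀ k ∈ I, Function.Injective (vecCons k P))
    (hdeg : ∀ k ∈ I, (h k).degree < n k) (hne : ∃ k ∈ I, h k ≠ 0) {s : Multiset ℂ}
    (hs : s.map conj = s) (hz : HasZeros (S.form h I r P) (S.cut r)ᶜ s) :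
    s.card < ∑ k ∈ I, n k := by
  induction hc : I.card generalizing r I P s with
  | zero => obtain ⟨k, hk, -⟩ := hne; simp [Finset.card_eq_zero.1 hc] at hk
  | succ c ih =>
    obtain ⟨q, hq, hqmax⟩ := exists_forall_lt_or_eq_and_le n
      (Finset.card_pos.1 (c.succ_pos.trans_eq hc.symm))
    by_contra! hcard
    by_cases hne' : ∃ k ∈ I.erase q, h k ≠ 0
    · obtain ⟨T, hT, hTz⟩ := S.exists_hasZeros_form_erase hI hdeg hq hqmax hs hz hcard
      refine (ih (fun k hk => ?_) (fun k hk => hdeg k (Finset.mem_of_mem_erase hk)) hne'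
        (map_conj_realMultiset T) hTz ?_).ne ((card_realMultiset T).trans hT)
      · obtain ⟨hkq, hk⟩ := Finset.mem_erase.1 hk
        obtain ⟨hkP, hP⟩ := injective_vecCons_iff.1 (hI k hk)
        exact injective_vecCons_vecCons hkq hkP (injective_vecCons_iff.1 (hI q hq)).1 hP
      · rw [Finset.card_erase_of_mem hq, hc, Nat.add_sub_cancel]
    · push Not at hne'
      obtain ⟨k, hk, hk₀⟩ := hne
      obtain rfl : k = q := by
        by_contra hkq
        exact hk₀ (hne' k (Finset.mem_erase.2 ⟨hkq, hk⟩))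
      refine (hcard.trans (S.card_le_natDegree_of_hasZeros_form (hI k hk) hk hne' hk₀ hz)).not_gt ?_
      exact ((natDegree_lt_iff_degree_lt hk₀).2 (hdeg k hk)).trans_le
        (Finset.single_le_sum (fun _ _ => Nat.zero_le _) hk)

end Chain

/-! ### Nikishin systems of measures -/

lemma IsConjSymm.deriv {f : ℂ → ℂ} (hf : IsConjSymm f) : IsConjSymm (deriv f) := fun z => by
  have hconj : conj ∘ f ∘ conj = f := funext fun w => by simp [hf w]
  simpa [hconj] using congrFun (deriv_conj_conj (f := f)) (conj z)

lemma IsConjSymm.iteratedDeriv {f : ℂ → ℂ} (hf : IsConjSymm f) (i : ℕ) :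
    IsConjSymm (iteratedDeriv i f) := by
  induction i with
  | zero => rwa [iteratedDeriv_zero]
  | succ i ih => exact iteratedDeriv_succ (f := f) ▸ ih.deriv

lemma IsConjSymm.exists_hasZeros {f : ℂ → ℂ} {O : Set ℂ} (hfc : IsConjSymm f) (hO : IsOpen O)
    (hOc : ∀ z ∈ O, conj z ∈ O) (hf : DifferentiableOn ℂ f O) {S : Finset ℂ} {ord : ℂ → ℕ}
    (hS : ↑S ⊆ O) (hord : ∀ x ∈ S, ∀ i < ord x, _root_.iteratedDeriv i f x = 0) :
    ∃ s : Multiset ℂ, s.map conj = s ∧ HasZeros f O s ∧ ∑ x ∈ S, ord x ≤ s.card := by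
  classical
  set s : Multiset ℂ := ∑ x ∈ S, Multiset.replicate (ord x) x with hs
  have hconj : Function.Injective (conj : ℂ → ℂ) := star_injective
  have hcount : ∀ x, s.count x = if x ∈ S then ord x else 0 := fun x => by
    simp [hs, Multiset.count_sum', Multiset.count_replicate]
  have hzero : ∀ x, ∀ i < s.count x, x ∈ O ∧ _root_.iteratedDeriv i f x = 0 := fun x i hi => by
    rw [hcount] at hi
    split_ifs at hi with hx
    exacts [⟨hS hx, hord x hx i hi⟩, absurd hi (Nat.not_lt_zero i)]
  have hzero' : ∀ x, ∀ i < (s ∪ s.map conj).count x, x ∈ O ∧ _root_.iteratedDeriv i f x = 0 := by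
    intro x i hi
    rw [Multiset.count_union, lt_max_iff, ← Complex.conj_conj x,
      Multiset.count_map_eq_count' _ _ hconj, Complex.conj_conj] at hi
    refine hi.elim (hzero x i) fun hi => ?_
    obtain ⟨hx, h₀⟩ := hzero _ i hi
    rw [hfc.iteratedDeriv i, map_eq_zero] at h₀
    exact ⟨Complex.conj_conj x ▸ hOc _ hx, h₀⟩
  refine ⟨s ∪ s.map conj, ?_, hasZeros_of_iteratedDeriv_eq_zero hO hf fun x hx =>
    ⟨(hzero' x 0 (Multiset.count_pos.2 hx)).1, fun i hi => (hzero' x i hi).2⟩, ?_⟩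
  · simp [Multiset.map_union hconj, Multiset.map_map, Multiset.union_comm]
  · calc ∑ x ∈ S, ord x = s.card := by simp [hs]
      _ ≤ _ := Multiset.card_le_card Multiset.le_union_left

/-- Lebesgue measure on `[x, x + 1]`. -/
def Generator.unit (x : ℝ) : Generator where
  measure := volume.restrict (Icc x (x + 1))
  interval := Icc x (x + 1)
  carried := ⟨⟨by simp⟩, isCompact_Icc, by simp [Measure.restrict_apply]⟩
  ordConnected := ordConnected_Icc
  measure_compl_ne_zero T := by
    rw [Measure.restrict_apply T.measurableSet.compl, inter_comm, ← sdiff_eq,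
      measure_sdiff_null (T.finite_toSet.measure_zero _)]
    simp

lemma measure_compl_msupport (μ : Measure ℝ) : μ (msupport μ)ᶜ = 0 := by
  have : msupport μ = μ.support := by
    ext x
    rw [Measure.mem_support_iff_forall]
    refine ⟨fun h U hU => ?_, fun h U hU hx => (h U (hU.mem_nhds hx)).ne'⟩
    obtain ⟨V, hVU, hV, hx⟩ := mem_nhds_iff.1 hU
    exact (pos_iff_ne_zero.2 (h V hV hx)).trans_le (measure_mono hVU)
  rw [this, Measure.measure_compl_support]

/-- A measure with infinite support in `[a, b]`, as a generator. -/
def Generator.ofMeasure (μ : Measure ℝ) [hμ : IsFiniteMeasure μ] {a b : ℝ}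
    (hsupp : msupport μ ⊆ Icc a b) (hinf : (msupport μ).Infinite) : Generator where
  measure := μ
  interval := Icc a b
  carried := ⟨hμ, isCompact_Icc,
    measure_mono_null (compl_subset_compl.2 hsupp) (measure_compl_msupport μ)⟩
  ordConnected := ordConnected_Icc
  measure_compl_ne_zero T := by
    obtain ⟨x, hx, hxT⟩ := hinf.exists_notMem_finset T
    exact hx _ T.finite_toSet.isClosed.isOpen_compl hxT

lemma disjoint_Icc_add_one {x y : ℝ} (h : 1 < |x - y|) :
    Disjoint (Icc x (x + 1)) (Icc y (y + 1)) := by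
  refine Set.disjoint_left.2 fun t ht ht' => h.not_ge (abs_le.2 ⟨?_, ?_⟩) <;>
    linarith [ht.1, ht.2, ht'.1, ht'.2]

namespace Chain

/-- The missing generators are Lebesgue measures on unit intervals to the right of everything. -/
lemma exists_extension (σ : ℕ → Generator) {m : ℕ}
    (hσ : ∀ j, j + 1 < m → Disjoint (σ j).interval (σ (j + 1)).interval) {J : Set ℝ}
    (hJ : BddAbove J) : ∃ S : Chain, (∀ j < m, S.gen j = σ j) ∧
      ∀ l : ℤ, l < 0 ∨ m ≤ l → Disjoint J (S.gen l).interval := by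
  obtain ⟨A, hA⟩ := hJ.union ((finite_lt_nat m).bddAbove_biUnion.2 fun j _ =>
    (σ j).isCompact.bddAbove)
  rw [mem_upperBounds] at hA
  let κ : ℤ → Generator := fun l => Generator.unit (A + 1 + 2 * (|l| : ℤ))
  have hfar : ∀ (s : Set ℝ) (l : ℤ), (∀ x ∈ s, x ≤ A) → Disjoint s (κ l).interval := by
    refine fun s l hs => Set.disjoint_left.2 fun t ht ht' => ?_
    have hl : (0 : ℝ) ≤ (|l| : ℤ) := Int.cast_nonneg (abs_nonneg l)
    linarith [hs t ht, ht'.1]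
  have hle : ∀ j < m, ∀ x ∈ (σ j).interval, x ≤ A := fun j hj x hx =>
    hA x (Or.inr (mem_biUnion (mem_ofPred_eq ▸ hj) hx))
  have hκ : ∀ l : ℤ, Disjoint (κ l).interval (κ (l + 1)).interval := fun l => by
    refine disjoint_Icc_add_one ?_
    have h : |(|l| - |l + 1|)| = 1 := by simp only [Int.abs_eq_natAbs]; omega
    have h' : |((|l| : ℤ) : ℝ) - (|l + 1| : ℤ)| = 1 := by exact_mod_cast h
    rw [add_sub_add_left_eq_sub, ← mul_sub, abs_mul, h']
    norm_num
  refine ⟨⟨fun l => if 0 ≤ l ∧ l < m then σ l.toNat else κ l, fun l => ?_⟩, fun j hj => ?_,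
    fun l hl => ?_⟩
  · by_cases h : 0 ≤ l ∧ l < m <;> by_cases h' : 0 ≤ l + 1 ∧ l + 1 < m <;>
      simp only [h, h', and_self, if_true, if_false]
    · rw [show (l + 1).toNat = l.toNat + 1 by omega]
      exact hσ _ (by omega)
    · exact hfar _ _ (hle _ (by omega))
    · exact (hfar _ _ (hle _ (by omega))).symm
    · exact hκ l
  · simp [hj]
  · simp only [if_neg (show ¬ (0 ≤ l ∧ l < m) by omega)]
    exact hfar J l fun x hx => hA x (Or.inl hx)

end Chain

section
variable {m : ℕ} {μ : ℕ → Measure ℝ}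

lemma exists_chain {a b : ℕ → ℝ} (hfin : ∀ j, 1 ≤ j → j ≤ m → IsFiniteMeasure (μ j))
    (hsupp : ∀ j, 1 ≤ j → j ≤ m → msupport (μ j) ⊆ Icc (a j) (b j))
    (hinf : ∀ j, 1 ≤ j → j ≤ m → (msupport (μ j)).Infinite)
    (hdisj : ∀ j, 1 ≤ j → j < m → Icc (a j) (b j) ∩ Icc (a (j + 1)) (b (j + 1)) = ∅)
    {J : Set ℝ} (hJ : BddAbove J) (hJa : Disjoint J (Icc (a 1) (b 1))) :
    ∃ S : Chain, (∀ j < m, (S.gen j).measure = μ (j + 1)) ∧ Disjoint J (S.gen 0).interval := by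
  have hgen : ∀ j, ∃ κ : Generator, j < m →
      κ.measure = μ (j + 1) ∧ κ.interval = Icc (a (j + 1)) (b (j + 1)) := fun j => by
    by_cases hj : j < m
    · have := hfin (j + 1) (by omega) hj
      exact ⟨.ofMeasure _ (hsupp (j + 1) (by omega) hj) (hinf (j + 1) (by omega) hj),
        fun _ => ⟨rfl, rfl⟩⟩
    · exact ⟨.unit 0, fun h => absurd h hj⟩
  choose σ hσ using hgen
  obtain ⟨S, hS, hfar⟩ := Chain.exists_extension σ (m := m) (fun j hj => by
    rw [(hσ j (by omega)).2, (hσ (j + 1) hj).2, disjoint_iff_inter_eq_empty]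
    exact hdisj (j + 1) (by omega) hj) hJ
  refine ⟨S, fun j hj => by rw [hS j hj, (hσ j hj).1], ?_⟩
  rcases m.eq_zero_or_pos with rfl | hm
  · exact hfar 0 (Or.inr le_rfl)
  · have h₀ := hS 0 hm
    rw [Nat.cast_zero] at h₀
    rwa [h₀, (hσ 0 hm).2]

namespace Chain
variable {S : Chain} {e : ℕ → ℝ}

lemma exists_nikhat_eq (hμ : ∀ j < m, (S.gen j).measure = μ (j + 1))
    (he : ∀ j, 1 ≤ j → j ≤ m → e j ≠ 0) {g i : ℕ} (hi : i + 1 + g ≤ m) :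
    ∃ c : ℝ, c ≠ 0 ∧ ∀ z, nikhat μ e (i + 1) g z = c * S.up i (i + 1 + g) z := by
  induction g generalizing i with
  | zero =>
    refine ⟨e (i + 1), he _ (by omega) hi, fun z => ?_⟩
    simp only [nikhat, add_zero, S.up_eq_cauchy i.lt_succ_self, S.up_self, cauchy,
      hμ i (by omega)]
  | succ g ih =>
    obtain ⟨c, hc, hup⟩ := ih (i := i + 1) (by omega)
    refine ⟨e (i + 1) * c, mul_ne_zero (he _ (by omega) (by omega)) hc, fun z => ?_⟩
    rw [nikhat, S.up_eq_cauchy (by omega), Complex.ofReal_mul, mul_assoc, ← cauchy_const_mul,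
      cauchy, hμ i (by omega)]
    simp only [hup, show i + 1 + 1 + g = i + 1 + (g + 1) by omega]

lemma exists_sum_nikhat_eq_form (hμ : ∀ j < m, (S.gen j).measure = μ (j + 1))
    (he : ∀ j, 1 ≤ j → j ≤ m → e j ≠ 0) (h : ℕ → ℝ[X]) : ∃ c : ℕ → ℝ, (∀ k, c k ≠ 0) ∧
      (fun z => aeval z (h 0) + ∑ k ∈ Finset.Icc 1 m, aeval z (h k) * nikhat μ e 1 (k - 1) z) =
        S.form (fun k => C (c k) * h k) (Finset.range (m + 1)) 0 ![] := by
  have hscale : ∀ k, ∃ c : ℝ, c ≠ 0 ∧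
      (1 ≤ k → k ≤ m → ∀ z, nikhat μ e 1 (k - 1) z = c * S.up 0 k z) := fun k => by
    by_cases hk : 1 ≤ k ∧ k ≤ m
    · obtain ⟨c, hc, hup⟩ := exists_nikhat_eq hμ he (g := k - 1) (i := 0) (by omega)
      rw [show 0 + 1 + (k - 1) = k by omega] at hup
      exact ⟨c, hc, fun _ _ => hup⟩
    · exact ⟨1, one_ne_zero, fun h h' => absurd ⟨h, h'⟩ hk⟩
  choose c hc hup using hscale
  have hminor : ∀ k z, S.minor 0 (vecCons k ![]) z = S.up 0 k z := fun k z => by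
    rw [← S.entry_self, minor, Matrix.det_fin_one]
    rfl
  refine ⟨Function.update c 0 1, fun k => ?_, funext fun z => ?_⟩
  · rcases eq_or_ne k 0 with rfl | hk <;> simp [*]
  · rw [form, Finset.range_eq_Ico, Finset.sum_eq_sum_Ico_succ_bot m.succ_pos, hminor, S.up_self]
    congr 1
    · simp
    · refine Finset.sum_congr (by ext; simp) fun k hk => ?_
      obtain ⟨hk₁, hkm⟩ := Finset.mem_Ico.1 hk
      rw [hminor, hup k hk₁ (Nat.le_of_lt_succ hkm), Function.update_of_ne (by omega), map_mul,
        aeval_C]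
      simp only [Complex.coe_algebraMap]
      ring

end Chain
end

end Nikishin

lemma CZerosLT.mono {f : ℂ → ℂ} {D E : Set ℂ} {N : ℕ} (hf : CZerosLT f D N) (hED : E ⊆ D) :
    CZerosLT f E N :=
  fun S ord hS hord => hf S ord (hS.trans hED) hord

open Nikishin in
theorem nikishin_AT_system_general (m : ℕ) (μ : ℕ → Measure ℝ) (e : ℕ → ℝ) (a b : ℕ → ℝ)
    (hfin : ∀ j, 1 ≤ j → j ≤ m → IsFiniteMeasure (μ j))
    (he : ∀ j, 1 ≤ j → j ≤ m → e j ≠ 0)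
    (hsupp : ∀ j, 1 ≤ j → j ≤ m → msupport (μ j) ⊆ Icc (a j) (b j))
    (hinf : ∀ j, 1 ≤ j → j ≤ m → (msupport (μ j)).Infinite)
    (hdisj : ∀ j, 1 ≤ j → j < m → Icc (a j) (b j) ∩ Icc (a (j + 1)) (b (j + 1)) = ∅)
    (n : ℕ → ℕ) (h : ℕ → ℝ[X]) (hdeg : ∀ i ≤ m, (h i).degree < n i) (hne : ∃ i ≤ m, h i ≠ 0) :
    CZerosLT
      (fun z => aeval z (h 0) + ∑ k ∈ Finset.Icc 1 m, aeval z (h k) * nikhat μ e 1 (k - 1) z)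
      (cpx (Icc (a 1) (b 1)))ᶜ (∑ i ∈ Finset.range (m + 1), n i) := by
  intro T ord hT hord
  have hfinite : ((↑) ⁻¹' (T : Set ℂ) : Set ℝ).Finite :=
    T.finite_toSet.preimage Complex.ofReal_injective.injOn
  obtain ⟨S, hS, hdisjoint⟩ := exists_chain hfin hsupp hinf hdisj hfinite.bddAbove
    (Set.disjoint_left.2 fun t ht ht' => hT ht (ofReal_mem_cpx.2 ht'))
  have hT' : ↑T ⊆ (S.cut 0)ᶜ := by
    rintro _ hx ⟨t, ht, rfl⟩
    exact Set.disjoint_left.1 hdisjoint hx ht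
  obtain ⟨c, hc, hform⟩ := Chain.exists_sum_nikhat_eq_form hS he h
  rw [hform] at hord
  obtain ⟨s, hs, hz, hle⟩ := (S.isConjSymm_form _ _ 0 _).exists_hasZeros (S.isOpen_compl_cut 0)
    S.conj_mem_compl_cut (S.differentiableOn_form _ _ 0 _) hT' hord
  obtain ⟨i, hi, hi₀⟩ := hne
  refine hle.trans_lt (S.card_lt_of_hasZeros_form
    (fun k _ => Function.injective_of_subsingleton (α := Fin 1) _) (fun k hk => ?_)
    ⟨i, Finset.mem_range.2 (Nat.lt_succ_of_le hi), mul_ne_zero (C_ne_zero.2 (hc i)) hi₀⟩ hs hz)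
  rw [degree_C_mul (hc k)]
  exact hdeg k (Nat.le_of_lt_succ (Finset.mem_range.1 hk))

/-- **AT-system property of Nikishin systems.**
If `(s_1,…,s_m) = N(σ_1,…,σ_m)` and `n ∈ ℤ₊^{m+1}(*)`, then `(1, ŝ_1, …, ŝ_m)` is an
AT-system for `n` on every closed interval `[c,d]` disjoint from `Co(supp σ_1)`:
every nontrivial form `h_0 + ∑_{k=1}^m h_k ŝ_k` with `deg h_i ≤ n_i - 1` has at most
`|n| - 1` zeros on `[c,d]`, counting multiplicities. -/
theorem nikishin_AT_system
    (m : ℕ) (μ : ℕ → Measure ℝ) (e : ℕ → ℝ) (a b : ℕ → ℝ)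
    (hfin : ∀ j, IsFiniteMeasure (μ j))
    (hsgn : ∀ j, e j = 1 ∨ e j = -1)
    (hhull : ∀ j, 1 ≤ j → j ≤ m → convexHull ℝ (msupport (μ j)) = Set.Icc (a j) (b j))
    (hinf : ∀ j, 1 ≤ j → j ≤ m → (msupport (μ j)).Infinite)
    (hdisj : ∀ j, 1 ≤ j → j < m →
      Set.Icc (a j) (b j) ∩ Set.Icc (a (j + 1)) (b (j + 1)) = ∅)
    (n : ℕ → ℕ) (hstar : StarIdx m n)
    (h : ℕ → Polynomial ℝ)
    (hdeg : ∀ i ≤ m, (h i).degree < (n i : WithBot ℕ))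
    (hne : ∃ i ≤ m, h i ≠ 0)
    (c d : ℝ) (hcd : Set.Icc c d ∩ Set.Icc (a 1) (b 1) = ∅) :
    CZerosLT
      (fun z => Polynomial.aeval z (h 0) +
        ∑ k ∈ Finset.Icc 1 m, Polynomial.aeval z (h k) * nikhat μ e 1 (k - 1) z)
      (cpx (Set.Icc c d))
      (∑ i ∈ Finset.range (m + 1), n i) :=
  (nikishin_AT_system_general m μ e a b (fun j _ _ => hfin j)
    (fun j _ _ => by rcases hsgn j with h | h <;> simp [h])
    (fun j hj hjm => hhull j hj hjm ▸ subset_convexHull ℝ _) hinf hdisj n h hdeg hne).mono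
    (Nikishin.disjoint_cpx (Set.disjoint_iff_inter_eq_empty.2 hcd)).subset_compl_right

end
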